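/- arXiv:0708.1547 — 2 statements merged into one kernel-verified Lean document; each statement's English description precedes it below -/
import Mathlib

section
/- Let n ≥ 3 and γ ∈ [(n+1)/2, n+1]. There is a constant C (depending on n, γ) such that for every Schwartz function ψ on ℝⁿ, every integer m ≥ 1, and all s₁, s₂ ∈ [m, m+1], one has m^{(n−2)/2} · | ‖ψ̂_{√s₁}‖² − ‖ψ̂_{√s₂}‖² | ≤ C ( |s₁ − s₂|^{n+1−γ} / m )^{1/γ} ‖ψ‖²_{L^{2γ/(γ+2)}(ℝⁿ)}, where ‖ψ̂_{√s}‖² = ∫_{S^{n−1}} |ψ̂(√s · ω)|² dσ(ω). -/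
open MeasureTheory Complex FourierTransform Metric
open scoped ENNReal Real

noncomputable section

section SphereRestriction

open scoped RealInnerProductSpace ComplexConjugate

section Polar

variable {E : Type*} [NormedAddCommGroup E] [NormedSpace ℝ E] [FiniteDimensional ℝ E]
  [MeasurableSpace E] [BorelSpace E] [Nontrivial E] (μ : Measure E) [μ.IsAddHaarMeasure]

/-- Integration in polar coordinates. -/
theorem lintegral_eq_lintegral_toSphere {f : E → ℝ≥0∞} (hf : Measurable f) :
    ∫⁻ x, f x ∂μ = ∫⁻ ω, (∫⁻ r in Set.Ioi (0 : ℝ),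
      ENNReal.ofReal (r ^ (Module.finrank ℝ E - 1)) * f (r • (ω : E))) ∂μ.toSphere := by
  calc
    ∫⁻ x, f x ∂μ = ∫⁻ x : ({(0)}ᶜ : Set E), f x ∂(μ.comap (↑)) := by
      rw [lintegral_subtype_comap (measurableSet_singleton _).compl, restrict_compl_singleton]
    _ = ∫⁻ z, f ((z.2 : ℝ) • (z.1 : E))
          ∂μ.toSphere.prod (.volumeIoiPow (Module.finrank ℝ E - 1)) := by
      rw [← μ.measurePreserving_homeomorphUnitSphereProd.lintegral_comp_emb
        (Homeomorph.measurableEmbedding _)]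
      refine lintegral_congr fun x => ?_
      have hx : ‖(x : E)‖ ≠ 0 := norm_ne_zero_iff.2 x.2
      simp [homeomorphUnitSphereProd_apply_snd_coe, smul_smul, hx]
    _ = ∫⁻ ω, ∫⁻ r, f ((r : ℝ) • (ω : E)) ∂(Measure.volumeIoiPow (Module.finrank ℝ E - 1))
          ∂μ.toSphere := by
      rw [lintegral_prod]
      fun_prop
    _ = _ := by
      refine lintegral_congr fun ω => ?_
      rw [Measure.volumeIoiPow, lintegral_withDensity_eq_lintegral_mul _ (by fun_prop)
        (by fun_prop)]
      exact lintegral_subtype_comap measurableSet_Ioi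
        (fun r : ℝ => ENNReal.ofReal (r ^ (Module.finrank ℝ E - 1)) * f (r • (ω : E)))

/-- The integral of a function which factors in polar coordinates. -/
theorem integral_eq_mul_integral_toSphere {f : E → ℝ} {a : ℝ → ℝ} {b : sphere (0 : E) 1 → ℝ}
    (h : ∀ r : ℝ, 0 < r → ∀ ω : sphere (0 : E) 1, f (r • (ω : E)) = a r * b ω) :
    ∫ x, f x ∂μ = (∫ r in Set.Ioi (0 : ℝ), r ^ (Module.finrank ℝ E - 1) * a r) *
      ∫ ω, b ω ∂μ.toSphere := by
  calc
    ∫ x, f x ∂μ = ∫ x : ({(0)}ᶜ : Set E), f x ∂(μ.comap (↑)) := by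
      rw [integral_subtype_comap (measurableSet_singleton _).compl, restrict_compl_singleton]
    _ = ∫ z, b z.1 * a z.2 ∂μ.toSphere.prod (.volumeIoiPow (Module.finrank ℝ E - 1)) := by
      rw [← μ.measurePreserving_homeomorphUnitSphereProd.integral_comp
        (Homeomorph.measurableEmbedding _)]
      refine integral_congr_ae (.of_forall fun x => ?_)
      have hx : ‖(x : E)‖ ≠ 0 := norm_ne_zero_iff.2 x.2
      have := h ‖(x : E)‖ (norm_pos_iff.2 x.2) (homeomorphUnitSphereProd E x).1
      simp only [homeomorphUnitSphereProd_apply_snd_coe]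
      rw [mul_comm, ← this]
      simp [smul_smul, hx]
    _ = (∫ ω, b ω ∂μ.toSphere) *
        ∫ r : Set.Ioi (0 : ℝ), a r ∂(Measure.volumeIoiPow (Module.finrank ℝ E - 1)) :=
      integral_prod_mul (f := b) (g := fun r : Set.Ioi (0 : ℝ) => a r)
    _ = _ := by
      rw [mul_comm]
      congr 1
      simp only [Measure.volumeIoiPow, ENNReal.ofReal]
      rw [integral_withDensity_eq_integral_smul,
        integral_subtype_comap measurableSet_Ioi
          fun r ↦ Real.toNNReal (r ^ (Module.finrank ℝ E - 1)) • a r,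
        setIntegral_congr_fun measurableSet_Ioi fun x hx ↦ ?_]
      · rw [NNReal.smul_def, Real.coe_toNNReal _ (pow_nonneg hx.out.le _), smul_eq_mul]
      · exact (measurable_subtype_coe.pow_const _).real_toNNReal

end Polar

section Radial

theorem integrableOn_pow_mul_exp_neg_sq (k : ℕ) :
    IntegrableOn (fun r : ℝ => r ^ k * Real.exp (-r ^ 2)) (Set.Ioi 0) := by
  have := integrableOn_rpow_mul_exp_neg_mul_sq (b := 1) one_pos (s := k)
    (by linarith [k.cast_nonneg (α := ℝ)])
  simpa using this

theorem integral_pow_mul_exp_neg_sq (k : ℕ) :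
    ∫ r in Set.Ioi (0 : ℝ), r ^ k * Real.exp (-r ^ 2) = 1 / 2 * Real.Gamma ((k + 1) / 2) := by
  have := integral_rpow_mul_exp_neg_rpow (p := 2) two_pos (q := k)
    (by linarith [k.cast_nonneg (α := ℝ)])
  simpa using this

theorem integral_pow_add_two_mul_exp_neg_sq (k : ℕ) :
    ∫ r in Set.Ioi (0 : ℝ), r ^ (k + 2) * Real.exp (-r ^ 2) =
      (k + 1) / 2 * ∫ r in Set.Ioi (0 : ℝ), r ^ k * Real.exp (-r ^ 2) := by
  have hk : ((k : ℝ) + 1) / 2 ≠ 0 := by positivity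
  rw [integral_pow_mul_exp_neg_sq, integral_pow_mul_exp_neg_sq,
    show (((k + 2 : ℕ) : ℝ) + 1) / 2 = ((k : ℝ) + 1) / 2 + 1 by push_cast; ring,
    Real.Gamma_add_one hk]
  ring

variable {E : Type*} [NormedAddCommGroup E] [InnerProductSpace ℝ E]

theorem hasLineDerivAt_norm_pow_four_mul_exp_mul {e : E} (he : ‖e‖ = 1) {φ φ' : ℝ → ℝ} {M : ℝ}
    (hφ : ∀ u, HasDerivAt φ (φ' u) u) (hM : ∀ u, |φ u| ≤ M) (x : E) :
    HasLineDerivAt ℝ (fun x : E => ‖x‖ ^ 4 * Real.exp (-‖x‖ ^ 2) * φ (⟪x, e⟫ / ‖x‖))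
      ((4 * ‖x‖ ^ 2 - 2 * ‖x‖ ^ 4) * Real.exp (-‖x‖ ^ 2) * (⟪x, e⟫ * φ (⟪x, e⟫ / ‖x‖)) +
        ‖x‖ ^ 3 * Real.exp (-‖x‖ ^ 2) * ((1 - (⟪x, e⟫ / ‖x‖) ^ 2) * φ' (⟪x, e⟫ / ‖x‖))) x e := by
  unfold HasLineDerivAt
  rcases eq_or_ne x 0 with rfl | hx
  · simp only [zero_add, norm_zero, inner_zero_left]
    norm_num
    rw [hasDerivAt_iff_isLittleO]
    simp only [norm_smul, he]
    have hM0 : 0 ≤ M := (abs_nonneg _).trans (hM 0)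
    have hb : (fun t : ℝ => ‖t‖ ^ 4 * Real.exp (-‖t‖ ^ 2) * φ (⟪t • e, e⟫ / ‖t‖)) =O[nhds 0]
        fun t : ℝ => t ^ 4 := by
      refine Asymptotics.IsBigO.of_bound M (.of_forall fun t => ?_)
      rw [norm_mul, norm_mul, norm_pow, norm_norm, Real.norm_eq_abs (Real.exp _), Real.abs_exp,
        norm_pow, mul_comm M]
      have : Real.exp (-‖t‖ ^ 2) ≤ 1 := Real.exp_le_one_iff.2 (by nlinarith [sq_nonneg ‖t‖])
      have h2 := hM (⟪t • e, e⟫ / ‖t‖)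
      rw [mul_assoc]
      gcongr
      calc Real.exp (-‖t‖ ^ 2) * ‖φ (⟪t • e, e⟫ / ‖t‖)‖ ≤ 1 * M := by
            gcongr
            exact h2
        _ = M := one_mul M
    have := hb.trans_isLittleO (Asymptotics.isLittleO_pow_id (𝕜 := ℝ) (n := 4) (by norm_num))
    simpa [smul_eq_mul] using this
  · have hn : 0 < ‖x‖ := norm_pos_iff.2 hx
    have hnt : ∀ t : ℝ, ‖x + t • e‖ ^ 2 = ‖x‖ ^ 2 + 2 * t * ⟪x, e⟫ + t ^ 2 := by
      intro t
      rw [norm_add_sq_real, inner_smul_right, norm_smul, he, Real.norm_eq_abs, mul_one, sq_abs]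
      ring
    have h1 : HasDerivAt (fun t : ℝ => ‖x + t • e‖ ^ 2) (2 * ⟪x, e⟫) 0 := by
      simp only [hnt]
      have := (((hasDerivAt_id (0 : ℝ)).const_mul (2 * ⟪x, e⟫)).const_add (‖x‖ ^ 2)).add
        ((hasDerivAt_id (0 : ℝ)).pow 2)
      convert! this using 1
      · ext t; simp; ring
      · simp
    have h2 : HasDerivAt (fun t : ℝ => ‖x + t • e‖) (⟪x, e⟫ / ‖x‖) 0 := by
      have h := h1.sqrt (by simpa using hx)
      simp only [zero_smul, add_zero, Real.sqrt_sq (norm_nonneg _)] at h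
      convert! h using 1
      field_simp
    have h3 : HasDerivAt (fun t : ℝ => ⟪x + t • e, e⟫) 1 0 := by
      have : (fun t : ℝ => ⟪x + t • e, e⟫) = fun t => ⟪x, e⟫ + t := by
        ext t
        rw [inner_add_left, real_inner_smul_left, real_inner_self_eq_norm_sq, he]
        ring
      rw [this]
      exact (hasDerivAt_id (0 : ℝ)).const_add _
    have h4 := h3.div h2 (by simpa using hx)
    have h5 : HasDerivAt (fun t : ℝ => φ (⟪x + t • e, e⟫ / ‖x + t • e‖)) _ 0 :=
      (hφ _).comp 0 h4
    have h6 := ((h2.pow 4).mul (h1.neg.exp)).mul h5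
    convert! h6 using 1
    simp only [zero_smul, add_zero, Pi.pow_apply, Pi.mul_apply, Pi.neg_apply]
    field_simp
    ring

theorem abs_inner_div_norm_le_one {e : E} (he : ‖e‖ = 1) (x : E) : |⟪x, e⟫ / ‖x‖| ≤ 1 := by
  have := abs_real_inner_div_norm_mul_norm_le_one x e
  rwa [he, mul_one] at this

end Radial

section SphereIBP

variable {E : Type*} [NormedAddCommGroup E] [InnerProductSpace ℝ E] [FiniteDimensional ℝ E]
  [MeasurableSpace E] [BorelSpace E] (μ : Measure E) [μ.IsAddHaarMeasure]

/-- A function on `E` dominated by a power of the norm times a Gaussian is integrable. -/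
theorem integrable_of_norm_pow_mul_exp [Nontrivial E] {f : E → ℝ} (hf : Measurable f) (k : ℕ) (C : ℝ)
    (hC : ∀ x, |f x| ≤ C * (‖x‖ ^ k * Real.exp (-‖x‖ ^ 2))) : Integrable f μ := by
  refine Integrable.mono' (g := fun x => C * (‖x‖ ^ k * Real.exp (-‖x‖ ^ 2))) ?_
    hf.aestronglyMeasurable (.of_forall hC)
  refine Integrable.const_mul ?_ C
  rw [integrable_fun_norm_addHaar μ (f := fun r => r ^ k * Real.exp (-r ^ 2))]
  convert! integrableOn_pow_mul_exp_neg_sq (Module.finrank ℝ E - 1 + k) using 2 with r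
  rw [smul_eq_mul, pow_add, mul_assoc]

/-- Integration by parts on the sphere for zonal functions. -/
theorem integral_toSphere_one_sub_sq_mul_deriv [Nontrivial E] {e : E} (he : ‖e‖ = 1)
    {φ φ' : ℝ → ℝ} {M : ℝ} (hφ : ∀ u, HasDerivAt φ (φ' u) u) (hφ' : Measurable φ')
    (hM : ∀ u, |φ u| ≤ M) (hM' : ∀ u, |φ' u| ≤ M) :
    ∫ ω : sphere (0 : E) 1, (1 - ⟪(ω : E), e⟫ ^ 2) * φ' ⟪(ω : E), e⟫ ∂μ.toSphere =
      ((Module.finrank ℝ E : ℝ) - 1) *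
        ∫ ω : sphere (0 : E) 1, ⟪(ω : E), e⟫ * φ ⟪(ω : E), e⟫ ∂μ.toSphere := by
  have hM0 : 0 ≤ M := (abs_nonneg _).trans (hM 0)
  have hφm : Measurable φ :=
    (continuous_iff_continuousAt.2 fun u => (hφ u).continuousAt).measurable
  have hu := abs_inner_div_norm_le_one (E := E) he
  have hin : ∀ x : E, |⟪x, e⟫| ≤ ‖x‖ := fun x => by
    simpa [he] using abs_real_inner_le_norm x e
  have hi0 : Integrable (fun x : E => ‖x‖ ^ 4 * Real.exp (-‖x‖ ^ 2) * φ (⟪x, e⟫ / ‖x‖)) μ := by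
    refine integrable_of_norm_pow_mul_exp μ (by fun_prop) 4 M fun x => ?_
    rw [abs_mul, abs_mul, abs_pow, abs_norm, Real.abs_exp, mul_comm M]
    gcongr
    exact hM _
  have hi1 : Integrable (fun x : E => 4 * ‖x‖ ^ 2 * Real.exp (-‖x‖ ^ 2) *
      (⟪x, e⟫ * φ (⟪x, e⟫ / ‖x‖))) μ := by
    refine integrable_of_norm_pow_mul_exp μ (by fun_prop) 3 (4 * M) fun x => ?_
    rw [abs_mul, abs_mul, abs_mul, abs_mul, abs_pow, abs_norm, Real.abs_exp, abs_of_pos four_pos]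
    calc _ ≤ 4 * ‖x‖ ^ 2 * Real.exp (-‖x‖ ^ 2) * (‖x‖ * M) := by
          gcongr
          · exact hin x
          · exact hM _
      _ = _ := by ring
  have hi2 : Integrable (fun x : E => 2 * ‖x‖ ^ 4 * Real.exp (-‖x‖ ^ 2) *
      (⟪x, e⟫ * φ (⟪x, e⟫ / ‖x‖))) μ := by
    refine integrable_of_norm_pow_mul_exp μ (by fun_prop) 5 (2 * M) fun x => ?_
    rw [abs_mul, abs_mul, abs_mul, abs_mul, abs_pow, abs_norm, Real.abs_exp, abs_of_pos two_pos]
    calc _ ≤ 2 * ‖x‖ ^ 4 * Real.exp (-‖x‖ ^ 2) * (‖x‖ * M) := by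
          gcongr
          · exact hin x
          · exact hM _
      _ = _ := by ring
  have hi3 : Integrable (fun x : E => ‖x‖ ^ 3 * Real.exp (-‖x‖ ^ 2) *
      ((1 - (⟪x, e⟫ / ‖x‖) ^ 2) * φ' (⟪x, e⟫ / ‖x‖))) μ := by
    refine integrable_of_norm_pow_mul_exp μ (by fun_prop) 3 M fun x => ?_
    have h1 : |1 - (⟪x, e⟫ / ‖x‖) ^ 2| ≤ 1 := by
      have := (sq_le_one_iff_abs_le_one _).2 (hu x)
      rw [abs_le]
      constructor <;> nlinarith [sq_nonneg (⟪x, e⟫ / ‖x‖)]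
    rw [abs_mul, abs_mul, abs_mul, abs_pow, abs_norm, Real.abs_exp]
    calc _ ≤ ‖x‖ ^ 3 * Real.exp (-‖x‖ ^ 2) * (1 * M) := by
          gcongr
          exact hM' _
      _ = _ := by ring
  have hsplit : (fun x : E =>
      (4 * ‖x‖ ^ 2 - 2 * ‖x‖ ^ 4) * Real.exp (-‖x‖ ^ 2) * (⟪x, e⟫ * φ (⟪x, e⟫ / ‖x‖)) +
        ‖x‖ ^ 3 * Real.exp (-‖x‖ ^ 2) *
          ((1 - (⟪x, e⟫ / ‖x‖) ^ 2) * φ' (⟪x, e⟫ / ‖x‖))) = fun x =>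
      (4 * ‖x‖ ^ 2 * Real.exp (-‖x‖ ^ 2) * (⟪x, e⟫ * φ (⟪x, e⟫ / ‖x‖)) -
        2 * ‖x‖ ^ 4 * Real.exp (-‖x‖ ^ 2) * (⟪x, e⟫ * φ (⟪x, e⟫ / ‖x‖))) +
        ‖x‖ ^ 3 * Real.exp (-‖x‖ ^ 2) * ((1 - (⟪x, e⟫ / ‖x‖) ^ 2) * φ' (⟪x, e⟫ / ‖x‖)) := by
    ext x; ring
  have hzero := integral_bilinear_hasLineDerivAt_right_eq_neg_left_of_integrable (μ := μ)
    (f := fun _ : E => (1 : ℝ)) (f' := fun _ => 0) (v := e) (B := ContinuousLinearMap.mul ℝ ℝ)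
    (g := fun x : E => ‖x‖ ^ 4 * Real.exp (-‖x‖ ^ 2) * φ (⟪x, e⟫ / ‖x‖))
    (g' := fun x : E =>
      (4 * ‖x‖ ^ 2 - 2 * ‖x‖ ^ 4) * Real.exp (-‖x‖ ^ 2) * (⟪x, e⟫ * φ (⟪x, e⟫ / ‖x‖)) +
        ‖x‖ ^ 3 * Real.exp (-‖x‖ ^ 2) * ((1 - (⟪x, e⟫ / ‖x‖) ^ 2) * φ' (⟪x, e⟫ / ‖x‖)))
    (by simp) (by simpa [hsplit] using! (hi1.sub hi2).add hi3) (by simpa using hi0)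
    (fun x _ => by simpa [HasLineDerivAt] using hasDerivAt_const (0 : ℝ) (1 : ℝ))
    (fun x _ => hasLineDerivAt_norm_pow_four_mul_exp_mul he hφ hM x)
  simp only [ContinuousLinearMap.mul_apply', one_mul, zero_mul, integral_zero, neg_zero] at hzero
  have hsub : ∀ r : ℝ, 0 < r → ∀ ω : sphere (0 : E) 1,
      ‖r • (ω : E)‖ = r ∧ ⟪r • (ω : E), e⟫ / ‖r • (ω : E)‖ = ⟪(ω : E), e⟫ ∧
        ⟪r • (ω : E), e⟫ = r * ⟪(ω : E), e⟫ := by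
    intro r hr ω
    have h1 : ‖r • (ω : E)‖ = r := by simp [norm_smul, abs_of_pos hr]
    refine ⟨h1, ?_, by rw [real_inner_smul_left]⟩
    rw [h1, real_inner_smul_left]
    field_simp
  have hi12 := hi1.sub hi2
  simp only [Pi.sub_def] at hi12
  rw [hsplit, integral_add hi12 hi3, integral_sub hi1 hi2,
    integral_eq_mul_integral_toSphere μ (a := fun r => 4 * r ^ 3 * Real.exp (-r ^ 2))
      (b := fun ω => ⟪(ω : E), e⟫ * φ ⟪(ω : E), e⟫) (fun r hr ω => by
        obtain ⟨h1, h2, h3⟩ := hsub r hr ω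
        rw [h2, h1, h3]; ring),
    integral_eq_mul_integral_toSphere μ (a := fun r => 2 * r ^ 5 * Real.exp (-r ^ 2))
      (b := fun ω => ⟪(ω : E), e⟫ * φ ⟪(ω : E), e⟫) (fun r hr ω => by
        obtain ⟨h1, h2, h3⟩ := hsub r hr ω
        rw [h2, h1, h3]; ring),
    integral_eq_mul_integral_toSphere μ (a := fun r => r ^ 3 * Real.exp (-r ^ 2))
      (b := fun ω => (1 - ⟪(ω : E), e⟫ ^ 2) * φ' ⟪(ω : E), e⟫) (fun r hr ω => by
        obtain ⟨h1, h2, h3⟩ := hsub r hr ω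
        rw [h2, h1])] at hzero
  have hd : 1 ≤ Module.finrank ℝ E := Module.finrank_pos
  obtain ⟨d, hd'⟩ : ∃ d, Module.finrank ℝ E = d + 1 := ⟨_, (Nat.sub_add_cancel hd).symm⟩
  rw [hd'] at hzero ⊢
  simp only [Nat.add_sub_cancel] at hzero
  have e1 : ∀ r : ℝ, r ^ d * (4 * r ^ 3 * Real.exp (-r ^ 2)) =
      4 * (r ^ (d + 3) * Real.exp (-r ^ 2)) := fun r => by ring
  have e2 : ∀ r : ℝ, r ^ d * (2 * r ^ 5 * Real.exp (-r ^ 2)) =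
      2 * (r ^ (d + 3 + 2) * Real.exp (-r ^ 2)) := fun r => by ring
  have e3 : ∀ r : ℝ, r ^ d * (r ^ 3 * Real.exp (-r ^ 2)) =
      r ^ (d + 3) * Real.exp (-r ^ 2) := fun r => by ring
  simp only [e1, e2, e3, integral_const_mul] at hzero
  rw [integral_pow_add_two_mul_exp_neg_sq (d + 3)] at hzero
  have hpos : 0 < ∫ r in Set.Ioi (0 : ℝ), r ^ (d + 3) * Real.exp (-r ^ 2) := by
    rw [integral_pow_mul_exp_neg_sq]
    have := Real.Gamma_pos_of_pos (s := (((d + 3 : ℕ) : ℝ) + 1) / 2) (by positivity)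
    positivity
  refine mul_left_cancel₀ hpos.ne' ?_
  push_cast at hzero ⊢
  linear_combination hzero

end SphereIBP

section Decay

/-- Energy estimate for the equation `ρ (F'' + F) + 2 κ F' = 0`. -/
theorem abs_le_rpow_neg_of_bessel_ode {κ M : ℝ} (hκ : 1 ≤ κ) {F F' F'' : ℝ → ℝ}
    (hF : ∀ ρ, HasDerivAt F (F' ρ) ρ) (hF' : ∀ ρ, HasDerivAt F' (F'' ρ) ρ)
    (hode : ∀ ρ, 0 < ρ → ρ * (F'' ρ + F ρ) = -(2 * κ) * F' ρ)
    (hM : ∀ ρ, |F ρ| ≤ M) (hM' : ∀ ρ, |F' ρ| ≤ M) {ρ : ℝ} (hρ : 0 < ρ) :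
    |F ρ| ≤ 3 * (2 * κ) ^ κ * M * ρ ^ (-κ) ∧ |F' ρ| ≤ 3 * (2 * κ) ^ κ * M * ρ ^ (-κ) := by
  have hM0 : 0 ≤ M := (abs_nonneg _).trans (hM 0)
  have hκ0 : 0 < κ := by linarith
  set ρ₀ := 2 * κ with hρ₀
  have hρ₀pos : 0 < ρ₀ := by positivity
  rcases le_total ρ ρ₀ with hle | hle
  · have h1 : 1 ≤ ρ₀ ^ κ * ρ ^ (-κ) := by
      rw [Real.rpow_neg hρ.le, ← div_eq_mul_inv, one_le_div (by positivity)]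
      exact Real.rpow_le_rpow hρ.le hle hκ0.le
    have h2 : M ≤ 3 * ρ₀ ^ κ * M * ρ ^ (-κ) := by nlinarith
    exact ⟨(hM ρ).trans h2, (hM' ρ).trans h2⟩
  · set w : ℝ → ℝ := fun t => t ^ κ * F t with hw
    set w' : ℝ → ℝ := fun t => t ^ κ * (F' t + κ * F t / t) with hw'
    set V : ℝ → ℝ := fun t => 1 - κ * (κ - 1) / t ^ 2 with hV
    have hVge : ∀ t, ρ₀ ≤ t → 3 / 4 ≤ V t := by
      intro t ht
      have ht0 : 0 < t := hρ₀pos.trans_le ht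
      have : κ * (κ - 1) / t ^ 2 ≤ 1 / 4 := by
        rw [div_le_iff₀ (by positivity)]
        nlinarith
      simp only [hV]
      linarith
    have hVle : ∀ t, 0 < t → V t ≤ 1 := by
      intro t ht
      have : 0 ≤ κ * (κ - 1) / t ^ 2 := div_nonneg (by nlinarith) (by positivity)
      simp only [hV]
      linarith
    have hdw : ∀ t, 0 < t → HasDerivAt w (w' t) t := by
      intro t ht
      have h := (Real.hasDerivAt_rpow_const (p := κ) (Or.inl ht.ne')).mul (hF t)
      convert! h using 1
      simp only [hw', Real.rpow_sub_one ht.ne']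
      field_simp
      ring
    have hdw' : ∀ t, 0 < t → HasDerivAt w' (-(V t * w t)) t := by
      intro t ht
      have h := (Real.hasDerivAt_rpow_const (p := κ) (Or.inl ht.ne')).mul
        ((hF' t).add (((hF t).const_mul κ).div (hasDerivAt_id t) ht.ne'))
      convert! h using 1
      have h2 : F'' t = -(2 * κ) * F' t / t - F t := by
        have := hode t ht
        field_simp
        linarith
      simp only [hw, hV, id, Pi.add_apply, Pi.div_apply, Real.rpow_sub_one ht.ne', h2]
      field_simp
      ring
    have hdV : ∀ t, 0 < t → HasDerivAt V (2 * (κ * (κ - 1)) / t ^ 3) t := by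
      intro t ht
      have h := (((hasDerivAt_id t).pow 2).inv (by simpa using ht.ne')).const_mul (κ * (κ - 1))
      have h := h.const_sub 1
      convert! h using 1
      simp
      field_simp
    set H : ℝ → ℝ := fun t => w t ^ 2 + w' t ^ 2 / V t with hH
    have hdH : ∀ t, ρ₀ ≤ t →
        HasDerivAt H (-(w' t ^ 2 * (2 * (κ * (κ - 1)) / t ^ 3)) / V t ^ 2) t := by
      intro t ht
      have ht0 : 0 < t := hρ₀pos.trans_le ht
      have hVt : V t ≠ 0 := by linarith [hVge t ht]
      have h := ((hdw t ht0).pow 2).add (((hdw' t ht0).pow 2).div (hdV t ht0) hVt)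
      convert! h using 1
      simp only [Pi.pow_apply]
      field_simp
      ring
    have hanti : AntitoneOn H (Set.Ici ρ₀) := by
      refine antitoneOn_of_deriv_nonpos (convex_Ici ρ₀)
        (fun t ht => (hdH t ht).continuousAt.continuousWithinAt)
        (fun t ht => (hdH t (interior_subset ht)).differentiableAt.differentiableWithinAt)
        fun t ht => ?_
      have ht' := interior_subset ht
      have ht0 : 0 < t := hρ₀pos.trans_le ht'
      rw [(hdH t ht').deriv]
      have : 0 ≤ w' t ^ 2 * (2 * (κ * (κ - 1)) / t ^ 3) :=
        mul_nonneg (sq_nonneg _) (div_nonneg (by nlinarith) (by positivity))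
      exact div_nonpos_of_nonpos_of_nonneg (by linarith) (sq_nonneg _)
    have hHρ : H ρ ≤ H ρ₀ := hanti Set.self_mem_Ici hle hle
    have hP : 0 < ρ₀ ^ κ := by positivity
    have hH0 : H ρ₀ ≤ (2 * ρ₀ ^ κ * M) ^ 2 := by
      have e1 : κ * F ρ₀ / ρ₀ = F ρ₀ / 2 := by rw [hρ₀]; field_simp
      have h1 : |F' ρ₀ + F ρ₀ / 2| ≤ 3 / 2 * M := by
        calc _ ≤ |F' ρ₀| + |F ρ₀ / 2| := abs_add_le _ _
          _ ≤ M + M / 2 := by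
            rw [abs_div, abs_two]
            linarith [hM ρ₀, hM' ρ₀]
          _ = _ := by ring
      have h2 : w' ρ₀ ^ 2 ≤ (ρ₀ ^ κ * (3 / 2 * M)) ^ 2 := by
        simp only [hw', e1]
        refine sq_le_sq' ?_ ?_ <;> nlinarith [abs_le.1 h1]
      have h3 : w ρ₀ ^ 2 ≤ (ρ₀ ^ κ * M) ^ 2 := by
        simp only [hw]
        refine sq_le_sq' ?_ ?_ <;> nlinarith [abs_le.1 (hM ρ₀)]
      have h4 : w' ρ₀ ^ 2 / V ρ₀ ≤ w' ρ₀ ^ 2 / (3 / 4) :=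
        div_le_div_of_nonneg_left (sq_nonneg _) (by norm_num) (hVge _ le_rfl)
      simp only [hH]
      nlinarith
    have hsum : w ρ ^ 2 + w' ρ ^ 2 ≤ (2 * ρ₀ ^ κ * M) ^ 2 := by
      have h4 : w' ρ ^ 2 ≤ w' ρ ^ 2 / V ρ := by
        rw [le_div_iff₀ (by linarith [hVge ρ hle])]
        nlinarith [hVle ρ hρ, sq_nonneg (w' ρ)]
      calc _ ≤ H ρ := by simp only [hH]; linarith
        _ ≤ _ := hHρ.trans hH0
    have hB : 0 ≤ 2 * ρ₀ ^ κ * M := by positivity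
    have hwb : |w ρ| ≤ 2 * ρ₀ ^ κ * M := abs_le_of_sq_le_sq (by nlinarith [sq_nonneg (w' ρ)]) hB
    have hwb' : |w' ρ| ≤ 2 * ρ₀ ^ κ * M := abs_le_of_sq_le_sq (by nlinarith [sq_nonneg (w ρ)]) hB
    have hR : 0 < ρ ^ (-κ) := by positivity
    have hRR : ρ ^ (-κ) * ρ ^ κ = 1 := by rw [← Real.rpow_add hρ]; simp
    have eF : F ρ = ρ ^ (-κ) * w ρ := by
      simp only [hw]; rw [← mul_assoc, hRR, one_mul]
    have hFb : |F ρ| ≤ 2 * ρ₀ ^ κ * M * ρ ^ (-κ) := by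
      rw [eF, abs_mul, abs_of_pos hR, mul_comm]
      gcongr
    have eF' : F' ρ = ρ ^ (-κ) * w' ρ - κ / ρ * F ρ := by
      simp only [hw']; rw [← mul_assoc, hRR, one_mul]; ring
    have hκρ : κ / ρ ≤ 1 / 2 := by
      rw [div_le_iff₀ hρ]; linarith
    refine ⟨hFb.trans ?_, ?_⟩
    · gcongr; norm_num
    · rw [eF']
      calc |ρ ^ (-κ) * w' ρ - κ / ρ * F ρ| ≤ |ρ ^ (-κ) * w' ρ| + |κ / ρ * F ρ| := abs_sub _ _
        _ ≤ ρ ^ (-κ) * (2 * ρ₀ ^ κ * M) + 1 / 2 * (2 * ρ₀ ^ κ * M * ρ ^ (-κ)) := by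
          rw [abs_mul (ρ ^ (-κ)) (w' ρ), abs_mul (κ / ρ) (F ρ), abs_of_pos hR,
            abs_of_nonneg (by positivity : 0 ≤ κ / ρ)]
          gcongr
        _ = _ := by ring

end Decay

theorem abs_inner_sphere_le_one {E : Type*} [NormedAddCommGroup E] [InnerProductSpace ℝ E]
    {e : E} (he : ‖e‖ = 1) (ω : sphere (0 : E) 1) :
    |⟪(ω : E), e⟫| ≤ 1 := by
  simpa [he] using abs_real_inner_le_norm (ω : E) e

section Kernel

variable {E : Type*} [NormedAddCommGroup E] [InnerProductSpace ℝ E] [FiniteDimensional ℝ E]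
  [MeasurableSpace E] [BorelSpace E]

/-- The average `∫ cos (ρ ⟪ω, e⟫ + δ) dσ(ω)` over the unit sphere. -/
def sphereCos (e : E) (δ ρ : ℝ) : ℝ :=
  ∫ ω : sphere (0 : E) 1, Real.cos (ρ * ⟪(ω : E), e⟫ + δ) ∂(volume : Measure E).toSphere

theorem hasDerivAt_integral_sphere {e : E} (he : ‖e‖ = 1) (k : ℕ) {f f' : ℝ → ℝ}
    (hf : ∀ u, HasDerivAt f (f' u) u) (hf1 : ∀ u, |f u| ≤ 1) (hf' : Measurable f')
    (hf'1 : ∀ u, |f' u| ≤ 1) (δ ρ : ℝ) :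
    HasDerivAt (fun ρ => ∫ ω : sphere (0 : E) 1, ⟪(ω : E), e⟫ ^ k * f (ρ * ⟪(ω : E), e⟫ + δ)
      ∂(volume : Measure E).toSphere)
      (∫ ω : sphere (0 : E) 1, ⟪(ω : E), e⟫ ^ (k + 1) * f' (ρ * ⟪(ω : E), e⟫ + δ)
        ∂(volume : Measure E).toSphere) ρ := by
  have hfm : Measurable f :=
    (continuous_iff_continuousAt.2 fun u => (hf u).continuousAt).measurable
  have hu : Measurable fun ω : sphere (0 : E) 1 => ⟪(ω : E), e⟫ :=
    (by fun_prop : Continuous fun ω : sphere (0 : E) 1 => ⟪(ω : E), e⟫).measurable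
  have hpow : ∀ (j : ℕ) (ω : sphere (0 : E) 1), |⟪(ω : E), e⟫ ^ j| ≤ 1 := fun j ω => by
    rw [abs_pow]; exact pow_le_one₀ (abs_nonneg _) (abs_inner_sphere_le_one he ω)
  have hb : ∀ (j : ℕ) (g : ℝ → ℝ), (∀ u, |g u| ≤ 1) → ∀ (ρ : ℝ) (ω : sphere (0 : E) 1),
      ‖⟪(ω : E), e⟫ ^ j * g (ρ * ⟪(ω : E), e⟫ + δ)‖ ≤ 1 := fun j g hg ρ ω => by
    rw [norm_mul, Real.norm_eq_abs, Real.norm_eq_abs]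
    exact mul_le_one₀ (hpow j ω) (abs_nonneg _) (hg _)
  have hm : ∀ (j : ℕ) (g : ℝ → ℝ), Measurable g → ∀ ρ : ℝ,
      Measurable fun ω : sphere (0 : E) 1 => ⟪(ω : E), e⟫ ^ j * g (ρ * ⟪(ω : E), e⟫ + δ) :=
    fun j g hg ρ => (hu.pow_const j).mul (hg.comp ((hu.const_mul ρ).add_const δ))
  refine (hasDerivAt_integral_of_dominated_loc_of_deriv_le (bound := fun _ => 1)
    (Filter.univ_mem) (Filter.Eventually.of_forall fun ρ => (hm k f hfm ρ).aestronglyMeasurable)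
    ?_ (hm (k + 1) f' hf' ρ).aestronglyMeasurable
    (Filter.Eventually.of_forall fun ω ρ _ => hb (k + 1) f' hf'1 ρ ω)
    (integrable_const _) ?_).2
  · exact Integrable.of_bound (hm k f hfm ρ).aestronglyMeasurable 1
      (Filter.Eventually.of_forall (hb k f hf1 ρ))
  · refine Filter.Eventually.of_forall fun ω x _ => ?_
    have h1 : HasDerivAt (fun x : ℝ => x * ⟪(ω : E), e⟫ + δ) ⟪(ω : E), e⟫ x := by
      simpa using ((hasDerivAt_id x).mul_const ⟪(ω : E), e⟫).add_const δ
    convert! ((hf (x * ⟪(ω : E), e⟫ + δ)).comp x h1).const_mul (⟪(ω : E), e⟫ ^ k) using 1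
    ring

theorem exists_sphereCos_decay (h3 : 3 ≤ Module.finrank ℝ E) :
    ∃ K : ℝ, 0 ≤ K ∧ ∀ e : E, ‖e‖ = 1 → ∀ δ : ℝ, ∃ F' : ℝ → ℝ,
      (∀ ρ, HasDerivAt (sphereCos e δ) (F' ρ) ρ) ∧ ∀ ρ, 0 < ρ →
        |sphereCos e δ ρ| ≤ K * ρ ^ (-(((Module.finrank ℝ E : ℝ) - 1) / 2)) ∧
          |F' ρ| ≤ K * ρ ^ (-(((Module.finrank ℝ E : ℝ) - 1) / 2)) := by
  have hd : (3 : ℝ) ≤ Module.finrank ℝ E := by exact_mod_cast h3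
  have : Nontrivial E := Module.nontrivial_of_finrank_pos (R := ℝ) (by omega)
  set κ := ((Module.finrank ℝ E : ℝ) - 1) / 2 with hκ
  have hκ1 : 1 ≤ κ := by linarith
  set σ := (volume : Measure E).toSphere with hσ
  refine ⟨3 * (2 * κ) ^ κ * σ.real Set.univ, by positivity, fun e he δ => ?_⟩
  have hd1 : ∀ ρ, HasDerivAt (sphereCos e δ) (∫ ω : sphere (0 : E) 1,
      ⟪(ω : E), e⟫ ^ 1 * -Real.sin (ρ * ⟪(ω : E), e⟫ + δ) ∂σ) ρ := fun ρ => by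
    have := hasDerivAt_integral_sphere he 0 Real.hasDerivAt_cos
      Real.abs_cos_le_one Real.measurable_sin.neg (fun u => by simpa using Real.abs_sin_le_one u) δ ρ
    simp only [pow_zero, one_mul, zero_add] at this
    exact this
  have hd2 := hasDerivAt_integral_sphere he 1 (f := fun u => -Real.sin u)
    (f' := fun u => -Real.cos u) (fun u => (Real.hasDerivAt_sin u).neg)
    (fun u => by simpa using Real.abs_sin_le_one u) Real.measurable_cos.neg
    (fun u => by simpa using Real.abs_cos_le_one u) δ
  refine ⟨_, hd1, fun ρ hρ => ?_⟩
  refine abs_le_rpow_neg_of_bessel_ode hκ1 hd1 hd2 (fun ρ hρ => ?_) (fun ρ => ?_) (fun ρ => ?_) hρ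
  · have hu : Continuous fun ω : sphere (0 : E) 1 => ⟪(ω : E), e⟫ := by fun_prop
    have hint : ∀ (f : sphere (0 : E) 1 → ℝ), Continuous f → Integrable f σ := fun f hf =>
      hf.integrable_of_hasCompactSupport (HasCompactSupport.of_compactSpace f)
    have hibp := integral_toSphere_one_sub_sq_mul_deriv (volume : Measure E) he
      (φ := fun u => Real.sin (ρ * u + δ)) (φ' := fun u => ρ * Real.cos (ρ * u + δ))
      (M := max 1 ρ)
      (fun u => by
        have h1 : HasDerivAt (fun x : ℝ => ρ * x + δ) ρ u := by
          simpa using ((hasDerivAt_id u).const_mul ρ).add_const δ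
        simpa [mul_comm] using! h1.sin) (by fun_prop)
      (fun u => (Real.abs_sin_le_one _).trans (le_max_left _ _))
      (fun u => by
        rw [abs_mul, abs_of_pos hρ]
        exact (mul_le_of_le_one_right hρ.le (Real.abs_cos_le_one _)).trans (le_max_right _ _))
    rw [show 2 * κ = (Module.finrank ℝ E : ℝ) - 1 by rw [hκ]; ring]
    have e1 : (∫ ω : sphere (0 : E) 1, ⟪(ω : E), e⟫ ^ (1 + 1) *
          -Real.cos (ρ * ⟪(ω : E), e⟫ + δ) ∂σ) + sphereCos e δ ρ =
        ∫ ω : sphere (0 : E) 1, (1 - ⟪(ω : E), e⟫ ^ 2) * Real.cos (ρ * ⟪(ω : E), e⟫ + δ) ∂σ := by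
      rw [sphereCos, ← integral_add (hint _ (by fun_prop)) (hint _ (by fun_prop))]
      congr 1; ext ω; ring
    rw [e1, ← integral_const_mul]
    simp only [pow_one, mul_neg, integral_neg, neg_mul, neg_neg]
    rw [← hibp]
    congr 1; ext ω; ring
  all_goals
    rw [← Real.norm_eq_abs]
    refine (norm_integral_le_of_norm_le_const (C := 1) (Filter.Eventually.of_forall fun ω => ?_)).trans
      (by rw [one_mul])
    rw [Real.norm_eq_abs]
  · exact Real.abs_cos_le_one _
  · rw [abs_mul, abs_neg, pow_one]
    exact mul_le_one₀ (abs_inner_sphere_le_one he ω) (abs_nonneg _) (Real.abs_sin_le_one _)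

/-- The Fourier transform of the surface measure of the unit sphere. -/
def sphereKernel (y : E) : ℂ :=
  ∫ ω : sphere (0 : E) 1, cexp (↑(-2 * π * ⟪y, (ω : E)⟫) * I) ∂(volume : Measure E).toSphere

theorem integrable_sphere_of_continuous {F : Type*} [NormedAddCommGroup F]
    {f : sphere (0 : E) 1 → F} (hf : Continuous f) :
    Integrable f (volume : Measure E).toSphere :=
  hf.integrable_of_hasCompactSupport (HasCompactSupport.of_compactSpace f)

theorem sphereKernel_smul {e : E} (t : ℝ) :
    sphereKernel (t • e) =
      sphereCos e 0 (2 * π * t) + sphereCos e (π / 2) (2 * π * t) * I := by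
  have h : ∀ ω : sphere (0 : E) 1, cexp (↑(-2 * π * ⟪t • e, (ω : E)⟫) * I) =
      (Real.cos (2 * π * t * ⟪(ω : E), e⟫ + 0) : ℂ) +
        (Real.cos (2 * π * t * ⟪(ω : E), e⟫ + π / 2) : ℂ) * I := fun ω => by
    rw [Complex.exp_mul_I, ← Complex.ofReal_cos, ← Complex.ofReal_sin, Real.cos_add_pi_div_two,
      ← Real.sin_neg, add_zero, ← Real.cos_neg, real_inner_smul_left, real_inner_comm]
    congr 3 <;> ring_nf
  simp only [sphereKernel, sphereCos, h]
  rw [integral_add, integral_mul_const, integral_complex_ofReal, integral_complex_ofReal]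
  · exact integrable_sphere_of_continuous (by fun_prop)
  · exact integrable_sphere_of_continuous (by fun_prop)

theorem exists_sphereKernel_decay (h3 : 3 ≤ Module.finrank ℝ E) :
    ∃ K : ℝ, 0 < K ∧ ∀ y : E, y ≠ 0 →
      ‖sphereKernel y‖ ≤ K * ‖y‖ ^ (-(((Module.finrank ℝ E : ℝ) - 1) / 2)) := by
  obtain ⟨K, hK, h⟩ := exists_sphereCos_decay h3
  have hd : (3 : ℝ) ≤ Module.finrank ℝ E := by exact_mod_cast h3
  set κ := ((Module.finrank ℝ E : ℝ) - 1) / 2 with hκ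
  have hκ0 : 0 ≤ κ := by linarith
  refine ⟨2 * K + 1, by positivity, fun y hy => ?_⟩
  have hy0 : 0 < ‖y‖ := norm_pos_iff.2 hy
  have he : ‖(‖y‖⁻¹ • y)‖ = 1 := by rw [norm_smul]; simp [hy0.ne']
  have hye : y = ‖y‖ • (‖y‖⁻¹ • y) := by rw [smul_smul, mul_inv_cancel₀ hy0.ne', one_smul]
  have hb : ∀ δ, |sphereCos (‖y‖⁻¹ • y) δ (2 * π * ‖y‖)| ≤ K * ‖y‖ ^ (-κ) := fun δ => by
    obtain ⟨F', -, h2⟩ := h _ he δ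
    refine (h2 _ (by positivity)).1.trans (mul_le_mul_of_nonneg_left ?_ hK)
    rw [Real.rpow_neg (by positivity), Real.rpow_neg hy0.le]
    gcongr
    nlinarith [Real.pi_gt_three]
  conv_lhs => rw [hye]
  rw [sphereKernel_smul]
  refine (norm_add_le _ _).trans ?_
  rw [norm_mul, norm_I, mul_one, Complex.norm_real, Complex.norm_real, Real.norm_eq_abs,
    Real.norm_eq_abs]
  have := hb 0
  have := hb (π / 2)
  have := Real.rpow_nonneg hy0.le (-κ)
  nlinarith

theorem exists_sphereKernel_sub_le (h3 : 3 ≤ Module.finrank ℝ E) :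
    ∃ K : ℝ, 0 < K ∧ ∀ α ∈ Set.Icc (0 : ℝ) 1, ∀ y : E, y ≠ 0 →
      ∀ r₁ ∈ Set.Icc (1 : ℝ) 2, ∀ r₂ ∈ Set.Icc (1 : ℝ) 2,
      ‖sphereKernel (r₁ • y) - sphereKernel (r₂ • y)‖ ≤
        K * |r₁ - r₂| ^ α * ‖y‖ ^ (α - ((Module.finrank ℝ E : ℝ) - 1) / 2) := by
  obtain ⟨K, hK, h⟩ := exists_sphereCos_decay h3
  have hd : (3 : ℝ) ≤ Module.finrank ℝ E := by exact_mod_cast h3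
  set κ := ((Module.finrank ℝ E : ℝ) - 1) / 2 with hκ
  have hκ1 : 1 ≤ κ := by linarith
  refine ⟨2 * (2 * K * (2 * π)) + 1, by positivity, fun α hα y hy r₁ hr₁ r₂ hr₂ => ?_⟩
  have hy0 : 0 < ‖y‖ := norm_pos_iff.2 hy
  have he : ‖(‖y‖⁻¹ • y)‖ = 1 := by rw [norm_smul]; simp [hy0.ne']
  have hye : ∀ r : ℝ, r • y = (r * ‖y‖) • (‖y‖⁻¹ • y) := fun r => by
    rw [smul_smul, mul_assoc, mul_inv_cancel₀ hy0.ne', mul_one]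
  set e := ‖y‖⁻¹ • y
  have hb : ∀ δ, |sphereCos e δ (2 * π * (r₁ * ‖y‖)) - sphereCos e δ (2 * π * (r₂ * ‖y‖))| ≤
      2 * K * (2 * π) * (|r₁ - r₂| ^ α * ‖y‖ ^ (α - κ)) := fun δ => by
    obtain ⟨F', h1, h2⟩ := h _ he δ
    have hpw : ∀ r : ℝ, 1 ≤ r → (2 * π * (r * ‖y‖)) ^ (-κ) ≤ ‖y‖ ^ (-κ) := fun r hr => by
      rw [Real.rpow_neg (by positivity), Real.rpow_neg hy0.le]
      gcongr
      have : 1 ≤ 2 * π * r := by nlinarith [Real.pi_gt_three]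
      nlinarith
    set G := fun r : ℝ => sphereCos e δ (2 * π * (r * ‖y‖)) with hG
    have hGd : ∀ r : ℝ, HasDerivAt G (F' (2 * π * (r * ‖y‖)) * (2 * π * ‖y‖)) r := fun r => by
      refine (h1 _).comp r ?_
      simpa using ((hasDerivAt_id r).mul_const ‖y‖).const_mul (2 * π)
    have hlip : |G r₁ - G r₂| ≤ K * ‖y‖ ^ (-κ) * (2 * π * ‖y‖) * |r₁ - r₂| := by
      have := (convex_Icc (1 : ℝ) 2).norm_image_sub_le_of_norm_hasDerivWithin_le (f := G)
        (C := K * ‖y‖ ^ (-κ) * (2 * π * ‖y‖))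
        (fun r _ => (hGd r).hasDerivWithinAt) (fun r hr => ?_) hr₂ hr₁
      · simpa [Real.norm_eq_abs] using this
      · rw [norm_mul, Real.norm_eq_abs, Real.norm_of_nonneg (by positivity : 0 ≤ 2 * π * ‖y‖)]
        gcongr
        refine ((h2 _ ?_).2).trans (mul_le_mul_of_nonneg_left (hpw r hr.1) hK)
        have := hr.1
        positivity
    have htriv : |G r₁ - G r₂| ≤ 2 * (K * ‖y‖ ^ (-κ)) := by
      have hle : ∀ r ∈ Set.Icc (1 : ℝ) 2, |G r| ≤ K * ‖y‖ ^ (-κ) := fun r hr => by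
        refine ((h2 _ ?_).1).trans (mul_le_mul_of_nonneg_left (hpw r hr.1) hK)
        have := hr.1
        positivity
      have := abs_sub (G r₁) (G r₂)
      linarith [hle r₁ hr₁, hle r₂ hr₂]
    have e1 : |r₁ - r₂| ^ α * ‖y‖ ^ (α - κ) = ‖y‖ ^ (-κ) * (|r₁ - r₂| * ‖y‖) ^ α := by
      rw [Real.mul_rpow (abs_nonneg _) hy0.le, sub_eq_add_neg α κ, Real.rpow_add hy0]; ring
    rw [e1]
    set t := |r₁ - r₂| * ‖y‖ with ht
    have ht0 : 0 ≤ t := by positivity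
    have hP : 0 ≤ K * ‖y‖ ^ (-κ) := by positivity
    rcases le_total t 1 with h' | h'
    · have : t ≤ t ^ α := by
        rcases ht0.eq_or_lt with h0 | h0
        · rw [← h0]; positivity
        · simpa using Real.rpow_le_rpow_of_exponent_ge h0 h' hα.2
      calc _ ≤ K * ‖y‖ ^ (-κ) * (2 * π * ‖y‖) * |r₁ - r₂| := hlip
        _ = K * ‖y‖ ^ (-κ) * (2 * π) * t := by rw [ht]; ring
        _ ≤ K * ‖y‖ ^ (-κ) * (2 * π) * (2 * t ^ α) := by
          gcongr; have := Real.rpow_nonneg ht0 α; linarith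
        _ = _ := by ring
    · have : 1 ≤ t ^ α := Real.one_le_rpow h' hα.1
      calc _ ≤ 2 * (K * ‖y‖ ^ (-κ)) := htriv
        _ ≤ 2 * (K * ‖y‖ ^ (-κ)) * (2 * π * t ^ α) := by
          refine le_mul_of_one_le_right (by positivity) ?_
          nlinarith [Real.pi_gt_three]
        _ = _ := by ring
  rw [hye r₁, hye r₂, sphereKernel_smul, sphereKernel_smul, add_sub_add_comm, ← sub_mul,
    ← ofReal_sub, ← ofReal_sub]
  refine (norm_add_le _ _).trans ?_
  rw [norm_mul, norm_I, mul_one, Complex.norm_real, Complex.norm_real, Real.norm_eq_abs,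
    Real.norm_eq_abs]
  have := hb 0
  have := hb (π / 2)
  have : 0 ≤ |r₁ - r₂| ^ α * ‖y‖ ^ (α - κ) := by positivity
  linarith

theorem norm_sphereKernel_le (y : E) :
    ‖sphereKernel y‖ ≤ (volume : Measure E).toSphere.real Set.univ := by
  refine (norm_integral_le_of_norm_le_const (C := 1)
    (Filter.Eventually.of_forall fun ω => ?_)).trans (by rw [one_mul])
  rw [Complex.norm_exp_ofReal_mul_I]

end Kernel

section Gaussian

variable {E : Type*} [NormedAddCommGroup E] [InnerProductSpace ℝ E]

/-- The Gaussian probability density whose Fourier transform is `exp (-t ‖z‖ ^ 2)`. -/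
def gaussDensity (t : ℝ) (ζ : E) : ℝ :=
  (π / t) ^ ((Module.finrank ℝ E : ℝ) / 2) * Real.exp (-(π ^ 2 / t) * ‖ζ‖ ^ 2)

theorem gaussDensity_nonneg {t : ℝ} (ht : 0 < t) (ζ : E) : 0 ≤ gaussDensity t ζ := by
  unfold gaussDensity
  positivity

theorem continuous_gaussDensity (t : ℝ) : Continuous (gaussDensity t : E → ℝ) := by
  unfold gaussDensity
  fun_prop

theorem abs_exp_neg_sq_half_sub_le (p q : ℝ) :
    |Real.exp (-(p ^ 2 / 2)) - Real.exp (-(q ^ 2 / 2))| ≤ |p - q| := by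
  have := convex_univ.norm_image_sub_le_of_norm_hasDerivWithin_le
    (f := fun p : ℝ => Real.exp (-(p ^ 2 / 2))) (f' := fun p => Real.exp (-(p ^ 2 / 2)) * (-p))
    (C := 1) (s := Set.univ) (x := q) (y := p) (fun x _ => ?_) (fun x _ => ?_) trivial trivial
  · simpa [Real.norm_eq_abs] using this
  · refine HasDerivAt.hasDerivWithinAt (HasDerivAt.exp ?_)
    convert! ((hasDerivAt_pow 2 x).div_const 2).neg using 1
    simp
  · rw [Real.norm_eq_abs, abs_mul, abs_neg, Real.abs_exp, Real.exp_neg, inv_mul_le_iff₀ (by positivity),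
      mul_one]
    have := Real.add_one_le_exp (x ^ 2 / 2)
    nlinarith [sq_nonneg (|x| - 1), sq_abs x]

theorem abs_exp_neg_sq_sub_le {α : ℝ} (hα : α ∈ Set.Icc (0 : ℝ) 1) (p q : ℝ) :
    |Real.exp (-p ^ 2) - Real.exp (-q ^ 2)| ≤
      |p - q| ^ α * (Real.exp (-(p ^ 2 / 2)) + Real.exp (-(q ^ 2 / 2))) := by
  have h : ∀ p : ℝ, Real.exp (-p ^ 2) = Real.exp (-(p ^ 2 / 2)) * Real.exp (-(p ^ 2 / 2)) :=
    fun p => by rw [← Real.exp_add]; ring_nf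
  rw [h p, h q, mul_self_sub_mul_self, abs_mul, mul_comm,
    abs_of_pos (by positivity : 0 < Real.exp (-(p ^ 2 / 2)) + Real.exp (-(q ^ 2 / 2)))]
  gcongr
  rcases le_total |p - q| 1 with h1 | h1
  · refine (abs_exp_neg_sq_half_sub_le p q).trans ?_
    rcases (abs_nonneg (p - q)).eq_or_lt with h0 | h0
    · rw [← h0]; positivity
    · simpa using Real.rpow_le_rpow_of_exponent_ge h0 h1 hα.2
  · refine le_trans ?_ (Real.one_le_rpow h1 hα.1)
    have a1 : ∀ p : ℝ, Real.exp (-(p ^ 2 / 2)) ≤ 1 := fun p => by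
      rw [Real.exp_le_one_iff]; nlinarith [sq_nonneg p]
    rw [abs_le]
    constructor <;> linarith [a1 p, a1 q, Real.exp_pos (-(p ^ 2 / 2)), Real.exp_pos (-(q ^ 2 / 2))]

theorem abs_gaussDensity_sub_le {α : ℝ} (hα : α ∈ Set.Icc (0 : ℝ) 1) {t : ℝ} (ht : 0 < t)
    (u v : E) :
    |gaussDensity t u - gaussDensity t v| ≤ 2 ^ ((Module.finrank ℝ E : ℝ) / 2) * π *
      t ^ (-(α / 2)) * ‖u - v‖ ^ α * (gaussDensity (2 * t) u + gaussDensity (2 * t) v) := by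
  set D := (Module.finrank ℝ E : ℝ) / 2
  set b := π / √t with hb
  have hb0 : 0 < b := by positivity
  have hb2 : b ^ 2 = π ^ 2 / t := by rw [hb, div_pow, Real.sq_sqrt ht.le]
  have e1 : ∀ u : E, gaussDensity t u = (π / t) ^ D * Real.exp (-(b * ‖u‖) ^ 2) := fun u => by
    rw [gaussDensity, mul_pow, hb2, neg_mul]
  have e2 : ∀ u : E, (π / t) ^ D * Real.exp (-((b * ‖u‖) ^ 2 / 2)) =
      2 ^ D * gaussDensity (2 * t) u := fun u => by
    have : (π / t) ^ D = 2 ^ D * (π / (2 * t)) ^ D := by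
      rw [← Real.mul_rpow (by positivity) (by positivity)]; congr 1; field_simp
    rw [gaussDensity, this, mul_pow, hb2, mul_assoc]
    congr 3
    field_simp
  have h1 : |b * ‖u‖ - b * ‖v‖| ^ α ≤ π * t ^ (-(α / 2)) * ‖u - v‖ ^ α := by
    calc |b * ‖u‖ - b * ‖v‖| ^ α ≤ (b * ‖u - v‖) ^ α := by
          refine Real.rpow_le_rpow (abs_nonneg _) ?_ hα.1
          rw [← mul_sub, abs_mul, abs_of_pos hb0]
          gcongr
          exact abs_norm_sub_norm_le u v
      _ = π ^ α * t ^ (-(α / 2)) * ‖u - v‖ ^ α := by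
          rw [Real.mul_rpow hb0.le (norm_nonneg _), hb, Real.div_rpow Real.pi_pos.le (by positivity),
            Real.sqrt_eq_rpow, ← Real.rpow_mul ht.le, Real.rpow_neg ht.le, ← div_eq_mul_inv]
          congr 3; ring
      _ ≤ _ := by
          gcongr
          conv_rhs => rw [← Real.rpow_one π]
          exact Real.rpow_le_rpow_of_exponent_le (by linarith [Real.pi_gt_three]) hα.2
  rw [e1, e1, ← mul_sub, abs_mul, abs_of_nonneg (by positivity)]
  calc _ ≤ (π / t) ^ D * (|b * ‖u‖ - b * ‖v‖| ^ α *
        (Real.exp (-((b * ‖u‖) ^ 2 / 2)) + Real.exp (-((b * ‖v‖) ^ 2 / 2)))) := by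
        gcongr; exact abs_exp_neg_sq_sub_le hα _ _
    _ = |b * ‖u‖ - b * ‖v‖| ^ α *
        (2 ^ D * gaussDensity (2 * t) u + 2 ^ D * gaussDensity (2 * t) v) := by
        rw [← e2, ← e2]; ring
    _ ≤ (π * t ^ (-(α / 2)) * ‖u - v‖ ^ α) *
        (2 ^ D * gaussDensity (2 * t) u + 2 ^ D * gaussDensity (2 * t) v) := by
        have := gaussDensity_nonneg (t := 2 * t) (by positivity) u
        have := gaussDensity_nonneg (t := 2 * t) (by positivity) v
        gcongr
    _ = _ := by ring

variable [FiniteDimensional ℝ E] [MeasurableSpace E] [BorelSpace E]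

theorem integrable_exp_neg_mul_norm_sq {b : ℝ} (hb : 0 < b) :
    Integrable fun x : E => Real.exp (-b * ‖x‖ ^ 2) := by
  refine (GaussianFourier.integrable_cexp_neg_mul_sq_norm_add (b := (b : ℂ)) (V := E) (by simpa)
    0 0).norm.congr (.of_forall fun x => ?_)
  simp only [norm_exp]
  congr 1
  simp [← ofReal_pow]

theorem integrable_gaussDensity {t : ℝ} (ht : 0 < t) : Integrable (gaussDensity t : E → ℝ) :=
  (integrable_exp_neg_mul_norm_sq (by positivity)).const_mul _

theorem integral_gaussDensity {t : ℝ} (ht : 0 < t) : ∫ ζ : E, gaussDensity t ζ = 1 := by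
  simp only [gaussDensity]
  rw [integral_const_mul, GaussianFourier.integral_rexp_neg_mul_sq_norm (by positivity),
    ← Real.mul_rpow (by positivity) (by positivity),
    show π / t * (π / (π ^ 2 / t)) = 1 by field_simp, Real.one_rpow]

theorem lintegral_gaussDensity {t : ℝ} (ht : 0 < t) :
    ∫⁻ ζ : E, ENNReal.ofReal (gaussDensity t ζ) = 1 := by
  rw [← ofReal_integral_eq_lintegral_ofReal (integrable_gaussDensity ht)
    (.of_forall fun ζ => gaussDensity_nonneg ht ζ), integral_gaussDensity ht, ENNReal.ofReal_one]

theorem integral_cexp_mul_exp_neg_mul_norm_sq {b : ℝ} (hb : 0 < b) (z : E) :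
    ∫ ζ : E, cexp (↑(-2 * π * ⟪z, ζ⟫) * I) * (Real.exp (-b * ‖ζ‖ ^ 2) : ℂ) =
      (gaussDensity b z : ℂ) := by
  have := GaussianFourier.integral_cexp_neg_mul_sq_norm_add (b := (b : ℂ)) (V := E) (by simpa)
    (-2 * π * I) z
  rw [gaussDensity, ofReal_mul, ofReal_cpow (by positivity), ofReal_exp]
  convert! this using 2
  · ext ζ
    rw [ofReal_exp, ← Complex.exp_add]
    push_cast
    ring_nf
  · push_cast
    rfl
  · congr 1
    push_cast
    have : (b : ℂ) ≠ 0 := by exact_mod_cast hb.ne'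
    field_simp
    rw [I_sq]
    ring

theorem integral_cexp_mul_gaussDensity {t : ℝ} (ht : 0 < t) (z : E) :
    ∫ ζ : E, cexp (↑(-2 * π * ⟪z, ζ⟫) * I) * (gaussDensity t ζ : ℂ) =
      (Real.exp (-t * ‖z‖ ^ 2) : ℂ) := by
  have hb : 0 < π ^ 2 / t := by positivity
  have := integral_cexp_mul_exp_neg_mul_norm_sq hb z
  calc _ = ∫ ζ : E, (((π / t) ^ ((Module.finrank ℝ E : ℝ) / 2) : ℝ) : ℂ) *
        (cexp (↑(-2 * π * ⟪z, ζ⟫) * I) * (Real.exp (-(π ^ 2 / t) * ‖ζ‖ ^ 2) : ℂ)) := by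
        congr 1; ext ζ; rw [gaussDensity]; push_cast; ring
    _ = _ := by
        rw [integral_const_mul, this, gaussDensity, ← ofReal_mul, ← mul_assoc,
          ← Real.mul_rpow (by positivity) (by positivity),
          show π / t * (π / (π ^ 2 / t)) = 1 by field_simp, Real.one_rpow, one_mul]
        congr 3
        field_simp

theorem lintegral_exp_neg_mul_norm_sub_smul_sq_le {b : ℝ} (hb : 0 < b) {r : ℝ} (hr : 1 ≤ r)
    (ξ : E) :
    ∫⁻ x : E, ENNReal.ofReal (Real.exp (-b * ‖ξ - r • x‖ ^ 2)) ≤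
      ENNReal.ofReal ((π / b) ^ ((Module.finrank ℝ E : ℝ) / 2)) := by
  have hi : Integrable fun z : E => Real.exp (-b * ‖ξ - z‖ ^ 2) :=
    (integrable_exp_neg_mul_norm_sq hb).comp_sub_left ξ
  have hir := hi.comp_smul (R := r) (by positivity)
  rw [← ofReal_integral_eq_lintegral_ofReal hir (.of_forall fun x => by positivity)]
  refine ENNReal.ofReal_le_ofReal ?_
  rw [Measure.integral_comp_smul volume (fun z : E => Real.exp (-b * ‖ξ - z‖ ^ 2)) r,
    integral_sub_left_eq_self (fun z : E => Real.exp (-b * ‖z‖ ^ 2)) volume ξ,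
    GaussianFourier.integral_rexp_neg_mul_sq_norm hb, smul_eq_mul]
  refine mul_le_of_le_one_left (by positivity) ?_
  rw [abs_of_nonneg (by positivity)]
  exact inv_le_one_of_one_le₀ (one_le_pow₀ hr)

theorem lintegral_sphere_exp_neg_le [Nontrivial E] {a : ℝ} (ha : 0 < a) {r : ℝ}
    (hr : r ∈ Set.Icc (1 : ℝ) 2) (ξ : E) :
    ENNReal.ofReal (a ^ (-(1 / 2) : ℝ)) * ∫⁻ ω : sphere (0 : E) 1,
      ENNReal.ofReal (Real.exp (-a * ‖ξ - r • (ω : E)‖ ^ 2)) ∂(volume : Measure E).toSphere ≤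
      ENNReal.ofReal (Real.exp 4 * (π / (a / 2)) ^ ((Module.finrank ℝ E : ℝ) / 2)) := by
  set l := a ^ (-(1 / 2) : ℝ) with hl
  have hl0 : 0 < l := by positivity
  have hl2 : a * l ^ 2 = 1 := by
    rw [hl, ← Real.rpow_natCast, ← Real.rpow_mul ha.le]
    norm_num
    rw [Real.rpow_neg_one, mul_inv_cancel₀ ha.ne']
  have hpt : ∀ ω : sphere (0 : E) 1, ∀ s ∈ Set.Icc (1 : ℝ) (1 + l),
      ENNReal.ofReal (Real.exp (-a * ‖ξ - r • (ω : E)‖ ^ 2)) ≤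
        ENNReal.ofReal (s ^ (Module.finrank ℝ E - 1)) * (ENNReal.ofReal (Real.exp 4) *
          ENNReal.ofReal (Real.exp (-(a / 2) * ‖ξ - r • (s • (ω : E))‖ ^ 2))) := by
    intro ω s hs
    rw [← ENNReal.ofReal_mul (by positivity),
      ← ENNReal.ofReal_mul (pow_nonneg (zero_le_one.trans hs.1) _), ← Real.exp_add]
    refine ENNReal.ofReal_le_ofReal ?_
    refine le_trans ?_ (le_mul_of_one_le_left (by positivity) (one_le_pow₀ hs.1))
    refine Real.exp_le_exp.2 ?_
    have h1 : ‖ξ - r • (s • (ω : E))‖ ≤ ‖ξ - r • (ω : E)‖ + r * (s - 1) := by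
      have : ξ - r • (s • (ω : E)) = (ξ - r • (ω : E)) - (r * (s - 1)) • (ω : E) := by module
      rw [this]
      refine (norm_sub_le _ _).trans ?_
      have h0 : 0 ≤ r * (s - 1) := mul_nonneg (by linarith [hr.1]) (by linarith [hs.1])
      rw [norm_smul, Real.norm_of_nonneg h0]
      simp
    have h2 : r * (s - 1) ≤ 2 * l :=
      mul_le_mul hr.2 (by linarith [hs.2]) (by linarith [hs.1]) (by norm_num)
    have h3 : ‖ξ - r • (s • (ω : E))‖ ^ 2 ≤ 2 * ‖ξ - r • (ω : E)‖ ^ 2 + 8 * l ^ 2 := by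
      have h4 := pow_le_pow_left₀ (norm_nonneg _) (h1.trans (add_le_add_right h2 _)) 2
      nlinarith [sq_nonneg (‖ξ - r • (ω : E)‖ - 2 * l)]
    nlinarith
  have hmeas : Measurable fun x : E => ENNReal.ofReal (Real.exp 4) *
      ENNReal.ofReal (Real.exp (-(a / 2) * ‖ξ - r • x‖ ^ 2)) := by fun_prop
  calc _ = ∫⁻ ω : sphere (0 : E) 1, ENNReal.ofReal l *
        ENNReal.ofReal (Real.exp (-a * ‖ξ - r • (ω : E)‖ ^ 2)) ∂(volume : Measure E).toSphere := by
        rw [lintegral_const_mul _ (by fun_prop)]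
    _ ≤ ∫⁻ ω : sphere (0 : E) 1, (∫⁻ s in Set.Ioi (0 : ℝ),
        ENNReal.ofReal (s ^ (Module.finrank ℝ E - 1)) * (ENNReal.ofReal (Real.exp 4) *
          ENNReal.ofReal (Real.exp (-(a / 2) * ‖ξ - r • (s • (ω : E))‖ ^ 2))))
          ∂(volume : Measure E).toSphere := by
        refine lintegral_mono fun ω => ?_
        calc _ = ∫⁻ s in Set.Icc (1 : ℝ) (1 + l),
              ENNReal.ofReal (Real.exp (-a * ‖ξ - r • (ω : E)‖ ^ 2)) := by
              rw [setLIntegral_const, Real.volume_Icc, mul_comm]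
              congr 2; ring
          _ ≤ ∫⁻ s in Set.Icc (1 : ℝ) (1 + l),
              ENNReal.ofReal (s ^ (Module.finrank ℝ E - 1)) * (ENNReal.ofReal (Real.exp 4) *
              ENNReal.ofReal (Real.exp (-(a / 2) * ‖ξ - r • (s • (ω : E))‖ ^ 2))) :=
              setLIntegral_mono' measurableSet_Icc (hpt ω)
          _ ≤ _ := lintegral_mono_set fun s hs => Set.mem_Ioi.2 (by linarith [hs.1])
    _ = ∫⁻ x : E, ENNReal.ofReal (Real.exp 4) *
        ENNReal.ofReal (Real.exp (-(a / 2) * ‖ξ - r • x‖ ^ 2)) :=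
        (lintegral_eq_lintegral_toSphere volume hmeas).symm
    _ ≤ _ := by
        rw [lintegral_const_mul _ (by fun_prop), ENNReal.ofReal_mul (by positivity)]
        gcongr
        exact lintegral_exp_neg_mul_norm_sub_smul_sq_le (by positivity) hr.1 ξ

theorem exists_lintegral_sphere_gaussDensity_le [Nontrivial E] :
    ∃ C : ℝ, 0 < C ∧ ∀ t : ℝ, 0 < t → ∀ r ∈ Set.Icc (1 : ℝ) 2, ∀ ξ : E,
      ∫⁻ ω : sphere (0 : E) 1, ENNReal.ofReal (gaussDensity t (ξ - r • (ω : E)))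
        ∂(volume : Measure E).toSphere ≤ ENNReal.ofReal (C * t ^ (-(1 / 2) : ℝ)) := by
  set D := (Module.finrank ℝ E : ℝ) / 2 with hD
  refine ⟨Real.exp 4 * 2 ^ D * π, by positivity, fun t ht r hr ξ => ?_⟩
  have ha : 0 < π ^ 2 / t := by positivity
  have h := lintegral_sphere_exp_neg_le ha hr ξ
  rw [← hD] at h
  set a := π ^ 2 / t with haa
  simp only [gaussDensity, ← hD, ← haa]
  simp only [ENNReal.ofReal_mul (Real.rpow_nonneg (by positivity : 0 ≤ π / t) D)]
  rw [lintegral_const_mul _ (by fun_prop)]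
  have hl0 : 0 < a ^ (-(1 / 2) : ℝ) := by positivity
  have hl1 : ENNReal.ofReal (a ^ (1 / 2 : ℝ)) * ENNReal.ofReal (a ^ (-(1 / 2) : ℝ)) = 1 := by
    rw [← ENNReal.ofReal_mul (by positivity), ← Real.rpow_add ha]
    simp
  calc _ = ENNReal.ofReal ((π / t) ^ D) * (ENNReal.ofReal (a ^ (1 / 2 : ℝ)) *
        (ENNReal.ofReal (a ^ (-(1 / 2) : ℝ)) * ∫⁻ ω : sphere (0 : E) 1,
      ENNReal.ofReal (Real.exp (-a * ‖ξ - r • (ω : E)‖ ^ 2)) ∂(volume : Measure E).toSphere)) := by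
        rw [← mul_assoc (ENNReal.ofReal (a ^ (1 / 2 : ℝ))), hl1, one_mul]
    _ ≤ ENNReal.ofReal ((π / t) ^ D) * (ENNReal.ofReal (a ^ (1 / 2 : ℝ)) *
        ENNReal.ofReal (Real.exp 4 * (π / (a / 2)) ^ D)) := by gcongr
    _ = _ := by
        rw [← ENNReal.ofReal_mul (by positivity), ← ENNReal.ofReal_mul (by positivity)]
        congr 1
        have e1 : (π / t) ^ D * (π / (a / 2)) ^ D = 2 ^ D := by
          rw [← Real.mul_rpow (by positivity) (by positivity)]
          congr 1
          rw [haa]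
          field_simp
        have e2 : a ^ (1 / 2 : ℝ) = π * t ^ (-(1 / 2) : ℝ) := by
          rw [haa, Real.div_rpow (by positivity) ht.le, ← Real.sqrt_eq_rpow,
            Real.sqrt_sq Real.pi_pos.le, Real.rpow_neg ht.le, div_eq_mul_inv]
        rw [e2]
        linear_combination (π * t ^ (-(1 / 2) : ℝ) * Real.exp 4) * e1

end Gaussian

section Fourier

variable {E : Type*} [NormedAddCommGroup E] [InnerProductSpace ℝ E] [FiniteDimensional ℝ E]
  [MeasurableSpace E] [BorelSpace E]

theorem continuous_fourier_of_integrable {f : E → ℂ} (hf : Integrable f) : Continuous (𝓕 f) :=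
  VectorFourier.fourierIntegral_continuous Real.continuous_fourierChar
    (by exact continuous_inner) hf

theorem norm_fourier_le_integral_norm (f : E → ℂ) (ξ : E) : ‖𝓕 f ξ‖ ≤ ∫ x, ‖f x‖ :=
  VectorFourier.norm_fourierIntegral_le_integral_norm _ _ _ _ _

theorem norm_cexp_inner_eq_one (c : ℝ) : ‖cexp (↑c * I)‖ = 1 :=
  Complex.norm_exp_ofReal_mul_I c

/-- The integral of `𝓕 f * conj (𝓕 g)` along a random point `X` is a bilinear form
with kernel the Fourier transform of the law of `X`. -/
theorem integral_fourier_mul_conj_fourier {Ω : Type*} [MeasurableSpace Ω] (ν : Measure Ω)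
    [IsFiniteMeasure ν] {X : Ω → E} (hX : Measurable X) {f g : E → ℂ} (hf : Integrable f)
    (hg : Integrable g) :
    ∫ a, 𝓕 f (X a) * conj (𝓕 g (X a)) ∂ν =
      ∫ z : E × E, f z.1 * conj (g z.2) * (∫ a, cexp (↑(-2 * π * ⟪z.1 - z.2, X a⟫) * I) ∂ν)
        ∂(volume.prod volume) := by
  have h1 : ∀ ξ : E, 𝓕 f ξ * conj (𝓕 g ξ) =
      ∫ z : E × E, f z.1 * conj (g z.2) * cexp (↑(-2 * π * ⟪z.1 - z.2, ξ⟫) * I)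
        ∂(volume.prod volume) := fun ξ => by
    rw [Real.fourier_eq', Real.fourier_eq', ← integral_conj, ← integral_prod_mul]
    congr 1; ext z
    rw [inner_sub_left, smul_eq_mul, smul_eq_mul, map_mul, ← Complex.exp_conj, map_mul,
      Complex.conj_ofReal, Complex.conj_I, show ((-2 * π * (⟪z.1, ξ⟫ - ⟪z.2, ξ⟫) : ℝ) : ℂ) * I =
        ((-2 * π * ⟪z.1, ξ⟫ : ℝ) : ℂ) * I + ((-2 * π * ⟪z.2, ξ⟫ : ℝ) : ℂ) * -I by push_cast; ring,
      Complex.exp_add]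
    ring
  simp only [h1]
  rw [integral_integral_swap]
  · congr 1; ext z
    rw [integral_const_mul]
  · have hb : Integrable (fun p : Ω × (E × E) => (1 : ℂ) * (f p.2.1 * conj (g p.2.2)))
        (ν.prod (volume.prod volume)) :=
      (integrable_const (1 : ℂ)).mul_prod
        (hf.mul_prod (f := f) (g := fun y => conj (g y)) (hg.congr' (by fun_prop) (by simp)))
    have hm : Measurable fun p : Ω × (E × E) =>
        cexp (↑(-2 * π * ⟪p.2.1 - p.2.2, X p.1⟫) * I) := by fun_prop
    refine (hb.bdd_mul (c := 1) hm.aestronglyMeasurable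
      (.of_forall fun p => (norm_cexp_inner_eq_one _).le)).congr (.of_forall fun p => ?_)
    simp only [Function.uncurry]
    ring

theorem integrable_fourier_mul_conj_fourier_comp {Ω : Type*} [MeasurableSpace Ω] (ν : Measure Ω)
    [IsFiniteMeasure ν] {X : Ω → E} (hX : Measurable X) {f g : E → ℂ} (hf : Integrable f)
    (hg : Integrable g) : Integrable (fun a => 𝓕 f (X a) * conj (𝓕 g (X a))) ν := by
  have hfc := (continuous_fourier_of_integrable hf).measurable
  have hgc := (continuous_fourier_of_integrable hg).measurable
  refine Integrable.of_bound (C := (∫ x, ‖f x‖) * ∫ x, ‖g x‖)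
    (((hfc.comp hX).mul (Complex.continuous_conj.measurable.comp (hgc.comp hX))).aestronglyMeasurable)
    (.of_forall fun a => ?_)
  rw [norm_mul, RCLike.norm_conj]
  exact mul_le_mul (norm_fourier_le_integral_norm _ _) (norm_fourier_le_integral_norm _ _)
    (norm_nonneg _) (integral_nonneg fun _ => norm_nonneg _)

theorem integral_sphere_fourier_mul_conj (r : ℝ) {f g : E → ℂ} (hf : Integrable f)
    (hg : Integrable g) :
    ∫ ω : sphere (0 : E) 1, 𝓕 f (r • (ω : E)) * conj (𝓕 g (r • (ω : E)))
        ∂(volume : Measure E).toSphere =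
      ∫ z : E × E, f z.1 * conj (g z.2) * sphereKernel (r • (z.1 - z.2))
        ∂(volume.prod volume) := by
  rw [integral_fourier_mul_conj_fourier _ (by fun_prop) hf hg]
  congr 1; ext z
  simp only [sphereKernel, real_inner_smul_left, real_inner_smul_right]

theorem integral_sphere_fourier_mul_conj_gaussDensity (r : ℝ) {t : ℝ} (ht : 0 < t) {f g : E → ℂ}
    (hf : Integrable f) (hg : Integrable g) :
    ∫ ω : sphere (0 : E) 1, (∫ ξ : E, 𝓕 f ξ * conj (𝓕 g ξ) *
        (gaussDensity t (ξ - r • (ω : E)) : ℂ)) ∂(volume : Measure E).toSphere =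
      ∫ z : E × E, f z.1 * conj (g z.2) *
        (sphereKernel (r • (z.1 - z.2)) * (Real.exp (-t * ‖z.1 - z.2‖ ^ 2) : ℂ))
        ∂(volume.prod volume) := by
  set γ : Measure E := volume.withDensity fun ζ => ENNReal.ofReal (gaussDensity t ζ)
  have hγ : IsFiniteMeasure γ :=
    isFiniteMeasure_withDensity_ofReal (integrable_gaussDensity ht).hasFiniteIntegral
  have hint : ∀ F : E → ℂ, ∫ ζ, F ζ ∂γ = ∫ ζ, F ζ * (gaussDensity t ζ : ℂ) := fun F => by
    rw [integral_withDensity_eq_integral_toReal_smul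
      (continuous_gaussDensity t).measurable.ennreal_ofReal
      (.of_forall fun _ => ENNReal.ofReal_lt_top)]
    congr 1; ext ζ
    rw [ENNReal.toReal_ofReal (gaussDensity_nonneg ht ζ), mul_comm, real_smul]
  set σ := (volume : Measure E).toSphere
  have hX : Measurable fun p : sphere (0 : E) 1 × E => r • (p.1 : E) + p.2 := by fun_prop
  have h := integral_fourier_mul_conj_fourier (σ.prod γ) hX hf hg
  rw [integral_prod _ (integrable_fourier_mul_conj_fourier_comp (σ.prod γ) hX hf hg)] at h
  simp only [hint] at h
  have hL : ∀ ω : sphere (0 : E) 1, ∫ ξ : E, 𝓕 f ξ * conj (𝓕 g ξ) *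
      (gaussDensity t (ξ - r • (ω : E)) : ℂ) = ∫ ζ : E, 𝓕 f (r • (ω : E) + ζ) *
        conj (𝓕 g (r • (ω : E) + ζ)) * (gaussDensity t ζ : ℂ) := fun ω => by
    rw [← integral_add_left_eq_self _ (r • (ω : E))]
    simp only [add_sub_cancel_left]
  simp only [hL]
  rw [h]
  congr 1; ext z
  congr 1
  have hs : ∀ p : sphere (0 : E) 1 × E, cexp (↑(-2 * π * ⟪z.1 - z.2, r • (p.1 : E) + p.2⟫) * I) =
      cexp (↑(-2 * π * ⟪r • (z.1 - z.2), (p.1 : E)⟫) * I) *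
        cexp (↑(-2 * π * ⟪z.1 - z.2, p.2⟫) * I) := fun p => by
    rw [← Complex.exp_add, inner_add_right, real_inner_smul_left, real_inner_smul_right]
    push_cast
    ring_nf
  simp only [hs]
  rw [integral_prod_mul (fun ω : sphere (0 : E) 1 => cexp (↑(-2 * π * ⟪r • (z.1 - z.2), (ω : E)⟫) * I))
    (fun ζ : E => cexp (↑(-2 * π * ⟪z.1 - z.2, ζ⟫) * I)), hint, integral_cexp_mul_gaussDensity ht]
  rfl

theorem mul_le_sq_add_sq_ennreal (a b : ℝ≥0∞) : a * b ≤ a ^ 2 + b ^ 2 := by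
  rcases le_total a b with h | h
  · calc a * b ≤ b * b := by gcongr
      _ ≤ a ^ 2 + b ^ 2 := by rw [← sq]; exact le_add_self
  · calc a * b ≤ a * a := by gcongr
      _ ≤ a ^ 2 + b ^ 2 := by rw [← sq]; exact le_self_add

theorem lintegral_fourier_sq_mul_exp_le {f : E → ℂ} (hf : Integrable f) {ε : ℝ} (hε : 0 < ε) :
    ∫⁻ ξ, ‖𝓕 f ξ‖ₑ ^ 2 * ENNReal.ofReal (Real.exp (-ε * ‖ξ‖ ^ 2)) ≤ 2 * ∫⁻ x, ‖f x‖ₑ ^ 2 := by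
  set w : E → ℝ≥0∞ := fun ξ => ENNReal.ofReal (Real.exp (-ε * ‖ξ‖ ^ 2)) with hw
  have hwm : Measurable w := by fun_prop
  set ν : Measure E := volume.withDensity w
  have hν : IsFiniteMeasure ν :=
    isFiniteMeasure_withDensity_ofReal (integrable_exp_neg_mul_norm_sq hε).hasFiniteIntegral
  have hfc := continuous_fourier_of_integrable hf
  have hfe : AEMeasurable (fun x => ‖f x‖ₑ) := hf.1.enorm
  have h := integral_fourier_mul_conj_fourier ν measurable_id hf hf
  have hker : ∀ z : E, ∫ ξ, cexp (↑(-2 * π * ⟪z, ξ⟫) * I) ∂ν = (gaussDensity ε z : ℂ) :=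
    fun z => by
      rw [← integral_cexp_mul_exp_neg_mul_norm_sq hε,
        integral_withDensity_eq_integral_toReal_smul hwm (.of_forall fun _ => ENNReal.ofReal_lt_top)]
      congr 1; ext ζ
      rw [ENNReal.toReal_ofReal (by positivity), real_smul]
      exact mul_comm _ _
  simp only [id, hker] at h
  have hG : AEMeasurable (fun z : E × E => ENNReal.ofReal (gaussDensity ε (z.1 - z.2)))
      (volume.prod volume) := by
    have := (continuous_gaussDensity (E := E) ε).measurable
    fun_prop
  have hf1 : AEMeasurable (fun z : E × E => ‖f z.1‖ₑ ^ 2) (volume.prod volume) :=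
    (hfe.comp_fst).pow_const 2
  have hf2 : AEMeasurable (fun z : E × E => ‖f z.2‖ₑ ^ 2) (volume.prod volume) :=
    (hfe.comp_snd).pow_const 2
  have hf1G := hf1.mul hG
  have hf2G := hf2.mul hG
  simp only [Pi.mul_def] at hf1G hf2G
  calc ∫⁻ ξ, ‖𝓕 f ξ‖ₑ ^ 2 * w ξ = ∫⁻ ξ, ‖𝓕 f ξ‖ₑ ^ 2 ∂ν := by
        rw [lintegral_withDensity_eq_lintegral_mul _ hwm (by fun_prop)]
        simp only [Pi.mul_apply, mul_comm]
    _ = ‖∫ ξ, 𝓕 f ξ * conj (𝓕 f ξ) ∂ν‖ₑ := by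
        have e1 : ∀ ξ, 𝓕 f ξ * conj (𝓕 f ξ) = ((‖𝓕 f ξ‖ ^ 2 : ℝ) : ℂ) := fun ξ => by
          rw [Complex.mul_conj, Complex.normSq_eq_norm_sq]
        have hi : Integrable (fun ξ => ‖𝓕 f ξ‖ ^ 2) ν :=
          ((integrable_fourier_mul_conj_fourier_comp ν measurable_id hf hf).norm).congr
            (.of_forall fun ξ => by simp [sq])
        simp only [e1, integral_complex_ofReal]
        rw [← ofReal_norm, Complex.norm_real,
          Real.norm_of_nonneg (integral_nonneg fun _ => by positivity),
          ofReal_integral_eq_lintegral_ofReal hi (.of_forall fun _ => by positivity)]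
        refine lintegral_congr fun ξ => ?_
        rw [ENNReal.ofReal_pow (norm_nonneg _), ofReal_norm]
    _ ≤ ∫⁻ z : E × E, ‖f z.1‖ₑ ^ 2 * ENNReal.ofReal (gaussDensity ε (z.1 - z.2)) +
          ‖f z.2‖ₑ ^ 2 * ENNReal.ofReal (gaussDensity ε (z.1 - z.2)) ∂(volume.prod volume) := by
        rw [h]
        refine (enorm_integral_le_lintegral_enorm _).trans (lintegral_mono fun z => ?_)
        rw [enorm_mul, enorm_mul, ← add_mul, ← ofReal_norm (gaussDensity _ _ : ℂ),
          Complex.norm_real, Real.norm_of_nonneg (gaussDensity_nonneg hε _),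
          ← ofReal_norm (conj (f z.2)), RCLike.norm_conj, ofReal_norm]
        gcongr
        exact mul_le_sq_add_sq_ennreal _ _
    _ = 2 * ∫⁻ x, ‖f x‖ₑ ^ 2 := by
        rw [lintegral_add_left' hf1G, lintegral_prod _ hf1G,
          lintegral_prod_symm _ hf2G, two_mul]
        have hGm := (continuous_gaussDensity (E := E) ε).measurable
        congr 1
        · refine lintegral_congr fun x => ?_
          simp only
          rw [lintegral_const_mul _ (by fun_prop),
            lintegral_sub_left_eq_self (fun y => ENNReal.ofReal (gaussDensity ε y)),
            lintegral_gaussDensity hε, mul_one]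
        · refine lintegral_congr fun x => ?_
          simp only
          rw [lintegral_const_mul _ (by fun_prop),
            lintegral_sub_right_eq_self (fun y => ENNReal.ofReal (gaussDensity ε y)),
            lintegral_gaussDensity hε, mul_one]

theorem lintegral_fourier_sq_le {f : E → ℂ} (hf : Integrable f) :
    ∫⁻ ξ, ‖𝓕 f ξ‖ₑ ^ 2 ≤ 2 * ∫⁻ x, ‖f x‖ₑ ^ 2 := by
  have hfc := continuous_fourier_of_integrable hf
  have hlim : ∀ ξ : E, Filter.Tendsto (fun k : ℕ => ‖𝓕 f ξ‖ₑ ^ 2 *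
      ENNReal.ofReal (Real.exp (-(1 / ((k : ℝ) + 1)) * ‖ξ‖ ^ 2))) Filter.atTop
      (nhds (‖𝓕 f ξ‖ₑ ^ 2)) := fun ξ => by
    have h1 : Filter.Tendsto (fun k : ℕ => Real.exp (-(1 / ((k : ℝ) + 1)) * ‖ξ‖ ^ 2))
        Filter.atTop (nhds 1) := by
      have := ((tendsto_one_div_add_atTop_nhds_zero_nat (𝕜 := ℝ)).neg.mul_const (‖ξ‖ ^ 2)).rexp
      simpa using this
    have h2 := ENNReal.Tendsto.const_mul (a := ‖𝓕 f ξ‖ₑ ^ 2) (ENNReal.tendsto_ofReal h1)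
      (Or.inr (by simp))
    simpa using h2
  calc ∫⁻ ξ, ‖𝓕 f ξ‖ₑ ^ 2 = ∫⁻ ξ, Filter.liminf (fun k : ℕ => ‖𝓕 f ξ‖ₑ ^ 2 *
      ENNReal.ofReal (Real.exp (-(1 / ((k : ℝ) + 1)) * ‖ξ‖ ^ 2))) Filter.atTop :=
        lintegral_congr fun ξ => (hlim ξ).liminf_eq.symm
    _ ≤ Filter.liminf (fun k : ℕ => ∫⁻ ξ, ‖𝓕 f ξ‖ₑ ^ 2 *
      ENNReal.ofReal (Real.exp (-(1 / ((k : ℝ) + 1)) * ‖ξ‖ ^ 2))) Filter.atTop :=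
        lintegral_liminf_le fun k => by fun_prop
    _ ≤ 2 * ∫⁻ x, ‖f x‖ₑ ^ 2 := by
        refine Filter.liminf_le_of_frequently_le' (Filter.Frequently.of_forall fun k => ?_)
        exact lintegral_fourier_sq_mul_exp_le hf (by positivity)

theorem exists_lintegral_sphere_fourier_sq_gaussDensity_le [Nontrivial E] :
    ∃ C : ℝ, 0 < C ∧ ∀ t : ℝ, 0 < t → ∀ r ∈ Set.Icc (1 : ℝ) 2, ∀ f : E → ℂ, Integrable f →
      ∫⁻ ω : sphere (0 : E) 1, (∫⁻ ξ : E, ‖𝓕 f ξ‖ₑ ^ 2 *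
        ENNReal.ofReal (gaussDensity t (ξ - r • (ω : E)))) ∂(volume : Measure E).toSphere ≤
        ENNReal.ofReal (C * t ^ (-(1 / 2) : ℝ)) * ∫⁻ x, ‖f x‖ₑ ^ 2 := by
  obtain ⟨C, hC, h⟩ := exists_lintegral_sphere_gaussDensity_le (E := E)
  refine ⟨C * 2, by positivity, fun t ht r hr f hf => ?_⟩
  have hfc := continuous_fourier_of_integrable hf
  have hg := (continuous_gaussDensity (E := E) t).measurable
  rw [lintegral_lintegral_swap (by fun_prop)]
  calc _ = ∫⁻ ξ : E, ‖𝓕 f ξ‖ₑ ^ 2 * ∫⁻ ω : sphere (0 : E) 1,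
        ENNReal.ofReal (gaussDensity t (ξ - r • (ω : E))) ∂(volume : Measure E).toSphere :=
        lintegral_congr fun ξ => lintegral_const_mul _ (by fun_prop)
    _ ≤ ∫⁻ ξ : E, ‖𝓕 f ξ‖ₑ ^ 2 * ENNReal.ofReal (C * t ^ (-(1 / 2) : ℝ)) := by
        gcongr with ξ; exact h t ht r hr ξ
    _ ≤ (2 * ∫⁻ x, ‖f x‖ₑ ^ 2) * ENNReal.ofReal (C * t ^ (-(1 / 2) : ℝ)) := by
        rw [lintegral_mul_const _ (by fun_prop)]
        gcongr; exact lintegral_fourier_sq_le hf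
    _ = _ := by
        rw [mul_right_comm C 2, ENNReal.ofReal_mul (by positivity : 0 ≤ C * t ^ (-(1 / 2) : ℝ)),
          ENNReal.ofReal_ofNat]
        ring

theorem fourier_modulation (f : E → ℂ) (ζ ξ : E) :
    𝓕 (fun x => cexp (↑(-2 * π * ⟪x, ζ⟫) * I) * f x) ξ = 𝓕 f (ξ + ζ) := by
  rw [Real.fourier_eq', Real.fourier_eq']
  congr 1; ext x
  rw [smul_eq_mul, smul_eq_mul, ← mul_assoc, ← Complex.exp_add, inner_add_right]
  congr 2
  push_cast
  ring

end Fourier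

section Truncation

variable {E : Type*} [NormedAddCommGroup E]

theorem one_sub_exp_neg_pow_mul_rpow_le {τ β : ℝ} (hτ : 0 < τ) (hβ : 0 ≤ β) {N : ℕ}
    (hN : β ≤ 2 * N) {z : E} (hz : z ≠ 0) :
    ‖z‖ ^ (-β) * (1 - Real.exp (-τ * ‖z‖ ^ 2)) ^ N ≤ τ ^ (β / 2) := by
  have hz0 : 0 < ‖z‖ := norm_pos_iff.2 hz
  set v := τ * ‖z‖ ^ 2 with hv
  have hv0 : 0 < v := by positivity
  have e1 : τ ^ (β / 2) = ‖z‖ ^ (-β) * v ^ (β / 2) := by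
    rw [hv, Real.mul_rpow hτ.le (by positivity), ← Real.rpow_natCast ‖z‖ 2, ← Real.rpow_mul hz0.le,
      mul_left_comm, ← Real.rpow_add hz0]
    rw [show -β + ((2 : ℕ) : ℝ) * (β / 2) = 0 by push_cast; ring, Real.rpow_zero, mul_one]
  rw [e1, neg_mul, ← hv]
  gcongr
  have h1 : Real.exp (-v) ≤ 1 := Real.exp_le_one_iff.2 (by linarith)
  have h0 := Real.exp_pos (-v)
  rcases le_total v 1 with h | h
  · have h2 : 1 - Real.exp (-v) ≤ v := by linarith [Real.add_one_le_exp (-v)]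
    calc (1 - Real.exp (-v)) ^ N ≤ v ^ N := by gcongr
      _ = v ^ (N : ℝ) := (Real.rpow_natCast v N).symm
      _ ≤ _ := Real.rpow_le_rpow_of_exponent_ge hv0 h (by linarith)
  · exact (pow_le_one₀ (by linarith) (by linarith)).trans (Real.one_le_rpow h (by linarith))

theorem eq_one_sub_pow_sub_sum (q : ℂ) (N : ℕ) :
    (1 : ℂ) = (1 - q) ^ N - ∑ i ∈ Finset.range N, (N.choose (i + 1) : ℂ) * (-1) ^ (i + 1) *
      q ^ (i + 1) := by
  have h : (1 - q) ^ N = ∑ i ∈ Finset.range (N + 1), (N.choose i : ℂ) * (-1) ^ i * q ^ i := by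
    rw [sub_eq_neg_add, add_pow]
    refine Finset.sum_congr rfl fun i _ => ?_
    rw [neg_pow q i]; ring
  rw [h, Finset.sum_range_succ']
  simp

theorem sum_choose_succ_le (N : ℕ) :
    ∑ i ∈ Finset.range N, (N.choose (i + 1) : ℝ) ≤ 2 ^ N := by
  have h := Nat.sum_range_choose N
  rw [Finset.sum_range_succ'] at h
  have : ∑ i ∈ Finset.range N, N.choose (i + 1) ≤ 2 ^ N := by omega
  exact_mod_cast this

variable [InnerProductSpace ℝ E] [FiniteDimensional ℝ E] [MeasurableSpace E] [BorelSpace E]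

theorem continuous_sphereKernel : Continuous (sphereKernel : E → ℂ) := by
  refine continuous_of_dominated (bound := fun _ => 1) (fun y => ?_) (fun y => ?_)
    (integrable_const _) (.of_forall fun ω => by fun_prop)
  · exact (by fun_prop : Continuous fun ω : sphere (0 : E) 1 =>
      cexp (↑(-2 * π * ⟪y, (ω : E)⟫) * I)).aestronglyMeasurable
  · exact .of_forall fun ω => (norm_cexp_inner_eq_one _).le

theorem integrable_mul_conj_mul_kernel {f g : E → ℂ} (hf : Integrable f) (hg : Integrable g)
    {L : E → ℂ} (hL : Continuous L) {M : ℝ} (hM : ∀ z, ‖L z‖ ≤ M) :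
    Integrable (fun z : E × E => f z.1 * conj (g z.2) * L (z.1 - z.2)) (volume.prod volume) := by
  have hb : Integrable (fun z : E × E => f z.1 * conj (g z.2)) (volume.prod volume) :=
    hf.mul_prod (f := f) (g := fun y => conj (g y)) (hg.congr' (by fun_prop) (by simp))
  exact hb.mul_bdd (c := M) (by fun_prop) (.of_forall fun z => hM _)

theorem norm_integral_mul_conj_mul_kernel_le {f g : E → ℂ} (hf : Integrable f) (hg : Integrable g)
    {L : E → ℂ} {M : ℝ} (hM : ∀ z, ‖L z‖ ≤ M) :
    ‖∫ z : E × E, f z.1 * conj (g z.2) * L (z.1 - z.2) ∂(volume.prod volume)‖ ≤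
      M * ((∫ x, ‖f x‖) * ∫ x, ‖g x‖) := by
  rw [← integral_prod_mul, ← integral_const_mul]
  refine norm_integral_le_of_norm_le ((hf.norm.mul_prod hg.norm).const_mul M)
    (.of_forall fun z => ?_)
  rw [norm_mul, norm_mul, RCLike.norm_conj, mul_comm M]
  gcongr
  exact hM _

/-- Splitting of a bilinear form into its part far from the diagonal and Gaussian pieces. -/
theorem norm_integral_kernel_le_add {f g : E → ℂ} (hf : Integrable f) (hg : Integrable g)
    {L : E → ℂ} (hL : Continuous L) {M : ℝ} (hM : ∀ z, ‖L z‖ ≤ M) {τ H T : ℝ} (hτ : 0 < τ) (N : ℕ)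
    (hH : ∀ z, ‖L z‖ * (1 - Real.exp (-τ * ‖z‖ ^ 2)) ^ N ≤ H)
    (hT : ∀ i : ℕ, ‖∫ z : E × E, f z.1 * conj (g z.2) * (L (z.1 - z.2) *
      (Real.exp (-((i + 1) * τ) * ‖z.1 - z.2‖ ^ 2) : ℂ)) ∂(volume.prod volume)‖ ≤ T) :
    ‖∫ z : E × E, f z.1 * conj (g z.2) * L (z.1 - z.2) ∂(volume.prod volume)‖ ≤
      H * ((∫ x, ‖f x‖) * ∫ x, ‖g x‖) + 2 ^ N * T := by
  have hT0 : 0 ≤ T := (norm_nonneg _).trans (hT 0)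
  set q : E → ℂ := fun z => (Real.exp (-τ * ‖z‖ ^ 2) : ℂ) with hq
  have hqc : Continuous q := by fun_prop
  have hexp : ∀ z : E, Real.exp (-τ * ‖z‖ ^ 2) ≤ 1 := fun z =>
    Real.exp_le_one_iff.2 (by nlinarith [sq_nonneg ‖z‖])
  have hq1 : ∀ z, ‖1 - q z‖ = 1 - Real.exp (-τ * ‖z‖ ^ 2) := fun z => by
    rw [hq, ← ofReal_one, ← ofReal_sub, Complex.norm_real, Real.norm_of_nonneg]
    linarith [hexp z]
  have hqi : ∀ (i : ℕ) z, q z ^ (i + 1) = (Real.exp (-((i + 1) * τ) * ‖z‖ ^ 2) : ℂ) :=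
    fun i z => by
      rw [hq, ← ofReal_pow, ← Real.exp_nat_mul]
      push_cast
      ring_nf
  have hHb : ∀ z, ‖L z * (1 - q z) ^ N‖ ≤ H := fun z => by
    rw [norm_mul, norm_pow, hq1]; exact hH z
  have hTb : ∀ (i : ℕ) z, ‖L z * (Real.exp (-((i + 1) * τ) * ‖z‖ ^ 2) : ℂ)‖ ≤ M := fun i z => by
    rw [← hqi, norm_mul, norm_pow]
    refine (mul_le_of_le_one_right (norm_nonneg _) (pow_le_one₀ (norm_nonneg _) ?_)).trans (hM z)
    rw [hq, Complex.norm_real, Real.norm_of_nonneg (by positivity)]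
    exact hexp z
  have hsplit : ∀ z : E × E, f z.1 * conj (g z.2) * L (z.1 - z.2) =
      f z.1 * conj (g z.2) * (L (z.1 - z.2) * (1 - q (z.1 - z.2)) ^ N) -
      ∑ i ∈ Finset.range N, (N.choose (i + 1) : ℂ) * (-1) ^ (i + 1) *
        (f z.1 * conj (g z.2) * (L (z.1 - z.2) *
          (Real.exp (-((i + 1) * τ) * ‖z.1 - z.2‖ ^ 2) : ℂ))) := fun z => by
    have h := eq_one_sub_pow_sub_sum (q (z.1 - z.2)) N
    simp only [hqi] at h
    calc _ = f z.1 * conj (g z.2) * L (z.1 - z.2) * 1 := (mul_one _).symm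
      _ = _ := congrArg (fun w => f z.1 * conj (g z.2) * L (z.1 - z.2) * w) h
      _ = _ := by
        simp only [mul_sub, Finset.mul_sum]
        congr 1
        · ring
        · exact Finset.sum_congr rfl fun i _ => by ring
  have hi1 := integrable_mul_conj_mul_kernel hf hg
    (L := fun z => L z * (1 - q z) ^ N) (by fun_prop) hHb
  have hi2 : ∀ i ∈ Finset.range N, Integrable (fun z : E × E =>
      (N.choose (i + 1) : ℂ) * (-1) ^ (i + 1) * (f z.1 * conj (g z.2) * (L (z.1 - z.2) *
          (Real.exp (-((i + 1) * τ) * ‖z.1 - z.2‖ ^ 2) : ℂ)))) (volume.prod volume) := fun i _ =>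
    (integrable_mul_conj_mul_kernel hf hg
      (L := fun z => L z * (Real.exp (-((i + 1) * τ) * ‖z‖ ^ 2) : ℂ))
      (by fun_prop) (hTb i)).const_mul _
  rw [integral_congr_ae (.of_forall hsplit), integral_sub hi1 (integrable_finsetSum _ hi2),
    integral_finsetSum _ hi2]
  refine (norm_sub_le _ _).trans (add_le_add
    (norm_integral_mul_conj_mul_kernel_le hf hg (L := fun z => L z * (1 - q z) ^ N) hHb) ?_)
  calc _ ≤ ∑ i ∈ Finset.range N, (N.choose (i + 1) : ℝ) * T := by
        refine norm_sum_le_of_le _ fun i _ => ?_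
        rw [integral_const_mul, norm_mul, norm_mul, norm_pow, norm_neg, norm_one, one_pow, mul_one,
          Complex.norm_natCast]
        gcongr
        exact hT i
    _ ≤ _ := by
        rw [← Finset.sum_mul]
        gcongr
        exact sum_choose_succ_le N

end Truncation

section SteinTomas

variable {E : Type*} [NormedAddCommGroup E] [InnerProductSpace ℝ E] [FiniteDimensional ℝ E]
  [MeasurableSpace E] [BorelSpace E]

theorem lintegral_enorm_sq_le_of_norm_le_one {f : E → ℂ} (hf : Integrable f)
    (hf1 : ∀ x, ‖f x‖ ≤ 1) {A : ℝ} (hA : ∫ x, ‖f x‖ ≤ A) :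
    ∫⁻ x, ‖f x‖ₑ ^ 2 ≤ ENNReal.ofReal A := by
  calc ∫⁻ x, ‖f x‖ₑ ^ 2 ≤ ∫⁻ x, ENNReal.ofReal ‖f x‖ := by
        refine lintegral_mono fun x => ?_
        rw [← ofReal_norm, ← ENNReal.ofReal_pow (norm_nonneg _)]
        refine ENNReal.ofReal_le_ofReal ?_
        nlinarith [hf1 x, norm_nonneg (f x)]
    _ = ENNReal.ofReal (∫ x, ‖f x‖) :=
        (ofReal_integral_eq_lintegral_ofReal hf.norm (.of_forall fun _ => norm_nonneg _)).symm
    _ ≤ _ := ENNReal.ofReal_le_ofReal hA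

theorem exists_norm_kernel_gauss_le [Nontrivial E] :
    ∃ C : ℝ, 0 < C ∧ ∀ t : ℝ, 0 < t → ∀ r ∈ Set.Icc (1 : ℝ) 2, ∀ f : E → ℂ, Integrable f →
      (∀ x, ‖f x‖ ≤ 1) → ∀ A, ∫ x, ‖f x‖ ≤ A →
      ‖∫ z : E × E, f z.1 * conj (f z.2) * (sphereKernel (r • (z.1 - z.2)) *
        (Real.exp (-t * ‖z.1 - z.2‖ ^ 2) : ℂ)) ∂(volume.prod volume)‖ ≤
        C * t ^ (-(1 / 2) : ℝ) * A := by
  obtain ⟨C, hC, h⟩ := exists_lintegral_sphere_fourier_sq_gaussDensity_le (E := E)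
  refine ⟨C, hC, fun t ht r hr f hf hf1 A hA => ?_⟩
  have hA0 : 0 ≤ A := (integral_nonneg fun _ => norm_nonneg _).trans hA
  rw [← integral_sphere_fourier_mul_conj_gaussDensity r ht hf hf,
    ← ENNReal.ofReal_le_ofReal_iff (by positivity), ofReal_norm]
  refine (enorm_integral_le_lintegral_enorm _).trans ?_
  calc _ ≤ ∫⁻ ω : sphere (0 : E) 1, (∫⁻ ξ : E, ‖𝓕 f ξ‖ₑ ^ 2 *
        ENNReal.ofReal (gaussDensity t (ξ - r • (ω : E)))) ∂(volume : Measure E).toSphere := by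
        refine lintegral_mono fun ω => (enorm_integral_le_lintegral_enorm _).trans
          (lintegral_mono fun ξ => ?_)
        rw [enorm_mul, enorm_mul, ← ofReal_norm (gaussDensity _ _ : ℂ),
          Complex.norm_real, Real.norm_of_nonneg (gaussDensity_nonneg ht _),
          ← ofReal_norm (conj (𝓕 f ξ)), RCLike.norm_conj, ofReal_norm, sq]
    _ ≤ ENNReal.ofReal (C * t ^ (-(1 / 2) : ℝ)) * ENNReal.ofReal A :=
        (h t ht r hr f hf).trans
          (by gcongr; exact lintegral_enorm_sq_le_of_norm_le_one hf hf1 hA)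
    _ = _ := (ENNReal.ofReal_mul (by positivity)).symm

theorem integral_sphere_norm_fourier_sq (r : ℝ) (f : E → ℂ) :
    ((∫ ω : sphere (0 : E) 1, ‖𝓕 f (r • (ω : E))‖ ^ 2 ∂(volume : Measure E).toSphere : ℝ) : ℂ) =
      ∫ ω : sphere (0 : E) 1, 𝓕 f (r • (ω : E)) * conj (𝓕 f (r • (ω : E)))
        ∂(volume : Measure E).toSphere := by
  rw [← integral_complex_ofReal]
  congr 1; ext ω
  rw [Complex.mul_conj, Complex.normSq_eq_norm_sq]

/-- The Stein–Tomas restriction estimate for bounded functions. -/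
theorem exists_integral_sphere_norm_fourier_sq_le (h3 : 3 ≤ Module.finrank ℝ E) :
    ∃ C : ℝ, 0 < C ∧ ∀ r ∈ Set.Icc (1 : ℝ) 2, ∀ f : E → ℂ, Integrable f →
      (∀ x, ‖f x‖ ≤ 1) → ∀ A, 0 < A → ∫ x, ‖f x‖ ≤ A →
      ∫ ω : sphere (0 : E) 1, ‖𝓕 f (r • (ω : E))‖ ^ 2 ∂(volume : Measure E).toSphere ≤
        C * A ^ (((Module.finrank ℝ E : ℝ) + 3) / (Module.finrank ℝ E + 1)) := by
  have hd : (3 : ℝ) ≤ Module.finrank ℝ E := by exact_mod_cast h3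
  have : Nontrivial E := Module.nontrivial_of_finrank_pos (R := ℝ) (by omega)
  obtain ⟨K, hK, hk⟩ := exists_sphereKernel_decay h3
  obtain ⟨C, hC, hc⟩ := exists_norm_kernel_gauss_le (E := E)
  set n := Module.finrank ℝ E with hn
  set κ := ((n : ℝ) - 1) / 2 with hκ
  refine ⟨K + 2 ^ n * C, by positivity, fun r hr f hf hf1 A hA0 hA => ?_⟩
  set τ := A ^ (-(4 / ((n : ℝ) + 1))) with hτ
  have hτ0 : 0 < τ := by positivity
  have hr0 : 0 < r := by linarith [hr.1]
  have hL := norm_integral_kernel_le_add hf hf (L := fun z => sphereKernel (r • z))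
    (continuous_sphereKernel.comp (by fun_prop)) (fun z => norm_sphereKernel_le _)
    (τ := τ) (H := K * τ ^ (κ / 2)) (T := C * τ ^ (-(1 / 2) : ℝ) * A) hτ0 n (fun z => ?_)
    (fun i => ?_)
  · rw [← integral_sphere_fourier_mul_conj r hf hf, ← integral_sphere_norm_fourier_sq r f,
      Complex.norm_real, Real.norm_of_nonneg (integral_nonneg fun _ => by positivity)] at hL
    have e1 : τ ^ (κ / 2) * (A * A) = A ^ (((n : ℝ) + 3) / (n + 1)) := by
      rw [hτ, ← Real.rpow_mul hA0.le, ← sq, ← Real.rpow_natCast A 2, ← Real.rpow_add hA0]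
      congr 1
      rw [hκ]; push_cast; field_simp; ring
    have e2 : τ ^ (-(1 / 2) : ℝ) * A = A ^ (((n : ℝ) + 3) / (n + 1)) := by
      conv_lhs => rw [hτ, ← Real.rpow_mul hA0.le, ← Real.rpow_add_one hA0.ne']
      congr 1
      field_simp; ring
    have hI0 : 0 ≤ ∫ x, ‖f x‖ := integral_nonneg fun _ => norm_nonneg _
    calc _ ≤ _ := hL
      _ ≤ K * τ ^ (κ / 2) * (A * A) + 2 ^ n * (C * τ ^ (-(1 / 2) : ℝ) * A) := by gcongr
      _ = K * (τ ^ (κ / 2) * (A * A)) + 2 ^ n * C * (τ ^ (-(1 / 2) : ℝ) * A) := by ring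
      _ = _ := by rw [e1, e2]; ring
  · rcases eq_or_ne z 0 with rfl | hz
    · have : n ≠ 0 := by omega
      simp [this]
      positivity
    · have h1 : ‖sphereKernel (r • z)‖ ≤ K * ‖z‖ ^ (-κ) := by
        refine (hk (r • z) (smul_ne_zero hr0.ne' hz)).trans ?_
        have hz0 := norm_pos_iff.2 hz
        refine mul_le_mul_of_nonneg_left ?_ hK.le
        refine Real.rpow_le_rpow_of_nonpos hz0 ?_ (by linarith)
        rw [norm_smul, Real.norm_of_nonneg hr0.le]
        nlinarith [hr.1]
      have h2 := one_sub_exp_neg_pow_mul_rpow_le hτ0 (β := κ) (by linarith) (N := n)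
        (by linarith) hz
      have h3 : 0 ≤ (1 - Real.exp (-τ * ‖z‖ ^ 2)) ^ n :=
        pow_nonneg (sub_nonneg.2 (Real.exp_le_one_iff.2 (by nlinarith [sq_nonneg ‖z‖]))) _
      calc _ ≤ K * ‖z‖ ^ (-κ) * (1 - Real.exp (-τ * ‖z‖ ^ 2)) ^ n := by gcongr
        _ ≤ _ := by rw [mul_assoc]; gcongr
  · refine (hc ((i + 1) * τ) (by positivity) r hr f hf hf1 A hA).trans ?_
    gcongr ?_ * ?_ * ?_
    exact Real.rpow_le_rpow_of_nonpos hτ0 (by nlinarith [i.cast_nonneg (α := ℝ)]) (by norm_num)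

theorem exists_lintegral_sphere_fourier_sq_gaussDensity_le_rpow (h3 : 3 ≤ Module.finrank ℝ E) :
    ∃ C : ℝ, 0 < C ∧ ∀ t : ℝ, 0 < t → ∀ r ∈ Set.Icc (1 : ℝ) 2, ∀ f : E → ℂ, Integrable f →
      (∀ x, ‖f x‖ ≤ 1) → ∀ A, 0 < A → ∫ x, ‖f x‖ ≤ A →
      ∫⁻ ω : sphere (0 : E) 1, (∫⁻ ξ : E, ‖𝓕 f ξ‖ₑ ^ 2 *
        ENNReal.ofReal (gaussDensity t (ξ - r • (ω : E)))) ∂(volume : Measure E).toSphere ≤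
        ENNReal.ofReal (C * A ^ (((Module.finrank ℝ E : ℝ) + 3) / (Module.finrank ℝ E + 1))) := by
  obtain ⟨C, hC, h⟩ := exists_integral_sphere_norm_fourier_sq_le h3
  refine ⟨C, hC, fun t ht r hr f hf hf1 A hA0 hA => ?_⟩
  have hfc := continuous_fourier_of_integrable hf
  have hg := (continuous_gaussDensity (E := E) t).measurable
  have hshift : ∀ ζ : E, ∫⁻ ω : sphere (0 : E) 1, ‖𝓕 f (r • (ω : E) + ζ)‖ₑ ^ 2
      ∂(volume : Measure E).toSphere ≤
        ENNReal.ofReal (C * A ^ (((Module.finrank ℝ E : ℝ) + 3) / (Module.finrank ℝ E + 1))) := by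
    intro ζ
    set F : E → ℂ := fun x => cexp (↑(-2 * π * ⟪x, ζ⟫) * I) * f x with hF
    have hFn : ∀ x, ‖F x‖ = ‖f x‖ := fun x => by
      rw [hF, norm_mul, norm_cexp_inner_eq_one, one_mul]
    have hFi : Integrable F := hf.bdd_mul (c := 1) (by fun_prop)
      (.of_forall fun x => (norm_cexp_inner_eq_one _).le)
    have := h r hr F hFi (fun x => (hFn x).trans_le (hf1 x)) A hA0 (by simpa only [hFn] using hA)
    refine le_trans (le_of_eq ?_) (ENNReal.ofReal_le_ofReal this)
    simp only [hF, fourier_modulation]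
    rw [ofReal_integral_eq_lintegral_ofReal
      (integrable_sphere_of_continuous (by fun_prop)) (.of_forall fun _ => by positivity)]
    refine lintegral_congr fun ω => ?_
    rw [ENNReal.ofReal_pow (norm_nonneg _), ofReal_norm]
  calc _ = ∫⁻ ω : sphere (0 : E) 1, (∫⁻ ζ : E, ‖𝓕 f (r • (ω : E) + ζ)‖ₑ ^ 2 *
        ENNReal.ofReal (gaussDensity t ζ)) ∂(volume : Measure E).toSphere := by
        refine lintegral_congr fun ω => ?_
        rw [← lintegral_add_left_eq_self _ (r • (ω : E))]
        simp only [add_sub_cancel_left]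
    _ = ∫⁻ ζ : E, (∫⁻ ω : sphere (0 : E) 1, ‖𝓕 f (r • (ω : E) + ζ)‖ₑ ^ 2
        ∂(volume : Measure E).toSphere) * ENNReal.ofReal (gaussDensity t ζ) := by
        rw [lintegral_lintegral_swap (by fun_prop)]
        have hm := hfc.measurable
        exact lintegral_congr fun ζ => lintegral_mul_const _
          (((hm.comp (by fun_prop)).enorm).pow_const 2)
    _ ≤ ∫⁻ ζ : E, ENNReal.ofReal
          (C * A ^ (((Module.finrank ℝ E : ℝ) + 3) / (Module.finrank ℝ E + 1))) *
          ENNReal.ofReal (gaussDensity t ζ) := by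
        gcongr with ζ; exact hshift ζ
    _ = _ := by
        rw [lintegral_const_mul _ (by fun_prop), lintegral_gaussDensity ht, mul_one]

end SteinTomas

section PairBound

variable {E : Type*} [NormedAddCommGroup E] [InnerProductSpace ℝ E] [FiniteDimensional ℝ E]
  [MeasurableSpace E] [BorelSpace E]

theorem ennreal_mul_le_weighted_sq {w : ℝ} (hw : 0 < w) (a b : ℝ≥0∞) :
    a * b ≤ ENNReal.ofReal w * a ^ 2 + ENNReal.ofReal w⁻¹ * b ^ 2 := by
  have h1 : ENNReal.ofReal w⁻¹ * ENNReal.ofReal w = 1 := by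
    rw [← ENNReal.ofReal_mul (by positivity), inv_mul_cancel₀ hw.ne', ENNReal.ofReal_one]
  rcases le_total (ENNReal.ofReal w * a) b with h | h
  · refine le_add_left ?_
    calc a * b = ENNReal.ofReal w⁻¹ * (ENNReal.ofReal w * a) * b := by rw [← mul_assoc, h1, one_mul]
      _ ≤ ENNReal.ofReal w⁻¹ * b * b := by gcongr
      _ = _ := by ring
  · refine le_add_right ?_
    calc a * b ≤ a * (ENNReal.ofReal w * a) := by gcongr
      _ = _ := by ring

theorem exists_lintegral_sphere_fourier_mul_gaussDensity_le (h3 : 3 ≤ Module.finrank ℝ E) :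
    ∃ C : ℝ, 0 < C ∧ ∀ t : ℝ, 0 < t → ∀ r ∈ Set.Icc (1 : ℝ) 2, ∀ f g : E → ℂ, Integrable f →
      Integrable g → (∀ x, ‖f x‖ ≤ 1) → (∀ x, ‖g x‖ ≤ 1) → ∀ A B, 0 < A → 0 < B →
      ∫ x, ‖f x‖ ≤ A → ∫ x, ‖g x‖ ≤ B →
      ∫⁻ ω : sphere (0 : E) 1, (∫⁻ ξ : E, ‖𝓕 f ξ‖ₑ * ‖𝓕 g ξ‖ₑ *
        ENNReal.ofReal (gaussDensity t (ξ - r • (ω : E)))) ∂(volume : Measure E).toSphere ≤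
        ENNReal.ofReal (C * (t ^ (-(1 / 4) : ℝ) * A ^ (1 / 2 : ℝ) *
          B ^ (((Module.finrank ℝ E : ℝ) + 3) / (Module.finrank ℝ E + 1) / 2))) := by
  have : Nontrivial E := Module.nontrivial_of_finrank_pos (R := ℝ) (by omega)
  obtain ⟨C₁, hC₁, h₁⟩ := exists_lintegral_sphere_fourier_sq_gaussDensity_le (E := E)
  obtain ⟨C₂, hC₂, h₂⟩ := exists_lintegral_sphere_fourier_sq_gaussDensity_le_rpow h3
  set ν := ((Module.finrank ℝ E : ℝ) + 3) / (Module.finrank ℝ E + 1)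
  refine ⟨C₁ + C₂, by positivity, fun t ht r hr f g hf hg hf1 hg1 A B hA0 hB0 hA hB => ?_⟩
  have hfc := continuous_fourier_of_integrable hf
  have hgc := continuous_fourier_of_integrable hg
  have hfm := hfc.measurable
  have hgm := hgc.measurable
  have hG := (continuous_gaussDensity (E := E) t).measurable
  set w := t ^ (1 / 4 : ℝ) * A ^ (-(1 / 2) : ℝ) * B ^ (ν / 2) with hw
  have hw0 : 0 < w := by positivity
  set X := t ^ (-(1 / 4) : ℝ) * A ^ (1 / 2 : ℝ) * B ^ (ν / 2) with hX
  have e1 : w * (C₁ * t ^ (-(1 / 2) : ℝ) * A) = C₁ * X := by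
    rw [hw, hX, show (-(1 / 4) : ℝ) = 1 / 4 + -(1 / 2) by norm_num, Real.rpow_add ht]
    have hA' : A ^ (1 / 2 : ℝ) = A ^ (-(1 / 2) : ℝ) * A := by
      rw [← Real.rpow_add_one hA0.ne']; norm_num
    rw [hA']
    ring
  have e2 : w⁻¹ * (C₂ * B ^ ν) = C₂ * X := by
    have hB' : B ^ ν = B ^ (ν / 2) * B ^ (ν / 2) := by
      rw [← Real.rpow_add hB0]; ring_nf
    rw [hw, hX, hB', Real.rpow_neg ht.le, Real.rpow_neg hA0.le]
    field_simp
  calc _ ≤ ∫⁻ ω : sphere (0 : E) 1, (∫⁻ ξ : E,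
        (ENNReal.ofReal w * (‖𝓕 f ξ‖ₑ ^ 2 * ENNReal.ofReal (gaussDensity t (ξ - r • (ω : E)))) +
         ENNReal.ofReal w⁻¹ * (‖𝓕 g ξ‖ₑ ^ 2 * ENNReal.ofReal (gaussDensity t (ξ - r • (ω : E))))))
        ∂(volume : Measure E).toSphere := by
        refine lintegral_mono fun ω => lintegral_mono fun ξ => ?_
        rw [← mul_assoc, ← mul_assoc, ← add_mul]
        gcongr
        exact ennreal_mul_le_weighted_sq hw0 _ _
    _ = ENNReal.ofReal w * (∫⁻ ω : sphere (0 : E) 1, (∫⁻ ξ : E, ‖𝓕 f ξ‖ₑ ^ 2 *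
          ENNReal.ofReal (gaussDensity t (ξ - r • (ω : E)))) ∂(volume : Measure E).toSphere) +
        ENNReal.ofReal w⁻¹ * (∫⁻ ω : sphere (0 : E) 1, (∫⁻ ξ : E, ‖𝓕 g ξ‖ₑ ^ 2 *
          ENNReal.ofReal (gaussDensity t (ξ - r • (ω : E)))) ∂(volume : Measure E).toSphere) := by
        have hm : ∀ F : E → ℂ, Measurable F → Measurable (fun p : sphere (0 : E) 1 × E =>
            ‖F p.2‖ₑ ^ 2 * ENNReal.ofReal (gaussDensity t (p.2 - r • (p.1 : E)))) :=
          fun F hF => by fun_prop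
        rw [← lintegral_const_mul _ (hm _ hfm).lintegral_prod_right',
          ← lintegral_const_mul _ (hm _ hgm).lintegral_prod_right', ← lintegral_add_left
          ((hm _ hfm).lintegral_prod_right'.const_mul _)]
        refine lintegral_congr fun ω => ?_
        rw [lintegral_add_left (by fun_prop), lintegral_const_mul _ (by fun_prop),
          lintegral_const_mul _ (by fun_prop)]
    _ ≤ ENNReal.ofReal w * ENNReal.ofReal (C₁ * t ^ (-(1 / 2) : ℝ) * A) +
        ENNReal.ofReal w⁻¹ * ENNReal.ofReal (C₂ * B ^ ν) := by
        gcongr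
        · refine (h₁ t ht r hr f hf).trans ?_
          rw [ENNReal.ofReal_mul (p := C₁ * t ^ (-(1 / 2) : ℝ)) (by positivity)]
          gcongr
          exact lintegral_enorm_sq_le_of_norm_le_one hf hf1 hA
        · exact h₂ t ht r hr g hg hg1 B hB0 hB
    _ = _ := by
        rw [← ENNReal.ofReal_mul hw0.le, ← ENNReal.ofReal_mul (by positivity), e1, e2,
          ← ENNReal.ofReal_add (by positivity) (by positivity), add_mul]

theorem integrable_fourier_mul_conj_mul_gaussDensity {f g : E → ℂ} (hf : Integrable f)
    (hg : Integrable g) {t : ℝ} (ht : 0 < t) (c : E) :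
    Integrable fun ξ => 𝓕 f ξ * conj (𝓕 g ξ) * (gaussDensity t (ξ - c) : ℂ) := by
  have hfc := continuous_fourier_of_integrable hf
  have hgc := continuous_fourier_of_integrable hg
  refine (((integrable_gaussDensity ht).comp_sub_right c).ofReal (𝕜 := ℂ)).bdd_mul
    (c := (∫ x, ‖f x‖) * ∫ x, ‖g x‖) (by fun_prop) (.of_forall fun ξ => ?_)
  rw [norm_mul, RCLike.norm_conj]
  exact mul_le_mul (norm_fourier_le_integral_norm _ _) (norm_fourier_le_integral_norm _ _)
    (norm_nonneg _) (integral_nonneg fun _ => norm_nonneg _)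

theorem integrable_sphere_integral_gaussDensity {f g : E → ℂ} (hf : Integrable f)
    (hg : Integrable g) {t : ℝ} (ht : 0 < t) (r : ℝ) :
    Integrable (fun ω : sphere (0 : E) 1 => ∫ ξ : E, 𝓕 f ξ * conj (𝓕 g ξ) *
        (gaussDensity t (ξ - r • (ω : E)) : ℂ)) (volume : Measure E).toSphere := by
  have hfc := continuous_fourier_of_integrable hf
  have hgc := continuous_fourier_of_integrable hg
  have hG := continuous_gaussDensity (E := E) t
  set M := (∫ x, ‖f x‖) * ∫ x, ‖g x‖ with hM
  refine Integrable.of_bound (C := ∫ ξ : E, M * gaussDensity t ξ)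
    ?_ (.of_forall fun ω => ?_)
  · exact (Continuous.stronglyMeasurable (f := fun p : sphere (0 : E) 1 × E =>
      𝓕 f p.2 * conj (𝓕 g p.2) * (gaussDensity t (p.2 - r • (p.1 : E)) : ℂ))
      (by fun_prop)).integral_prod_right'.aestronglyMeasurable
  · rw [← integral_sub_right_eq_self (fun ξ : E => M * gaussDensity t ξ) (r • (ω : E))]
    refine norm_integral_le_of_norm_le
      (((integrable_gaussDensity ht).comp_sub_right _).const_mul _) (.of_forall fun ξ => ?_)
    rw [norm_mul, norm_mul, RCLike.norm_conj, Complex.norm_real,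
      Real.norm_of_nonneg (gaussDensity_nonneg ht _), hM]
    gcongr
    · exact gaussDensity_nonneg ht _
    · exact norm_fourier_le_integral_norm _ _
    · exact norm_fourier_le_integral_norm _ _

theorem exists_norm_kernel_sub_gauss_le (h3 : 3 ≤ Module.finrank ℝ E) :
    ∃ C : ℝ, 0 < C ∧ ∀ α ∈ Set.Icc (0 : ℝ) 1, ∀ t : ℝ, 0 < t → ∀ r₁ ∈ Set.Icc (1 : ℝ) 2,
      ∀ r₂ ∈ Set.Icc (1 : ℝ) 2, ∀ f g : E → ℂ, Integrable f →
      Integrable g → (∀ x, ‖f x‖ ≤ 1) → (∀ x, ‖g x‖ ≤ 1) → ∀ A B, 0 < A → 0 < B →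
      ∫ x, ‖f x‖ ≤ A → ∫ x, ‖g x‖ ≤ B →
      ‖∫ z : E × E, f z.1 * conj (g z.2) *
        ((sphereKernel (r₁ • (z.1 - z.2)) - sphereKernel (r₂ • (z.1 - z.2))) *
        (Real.exp (-t * ‖z.1 - z.2‖ ^ 2) : ℂ)) ∂(volume.prod volume)‖ ≤
        C * |r₁ - r₂| ^ α * (t ^ (-(α / 2 + 1 / 4)) * A ^ (1 / 2 : ℝ) *
          B ^ (((Module.finrank ℝ E : ℝ) + 3) / (Module.finrank ℝ E + 1) / 2)) := by
  obtain ⟨C, hC, h⟩ := exists_lintegral_sphere_fourier_mul_gaussDensity_le h3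
  set ν := ((Module.finrank ℝ E : ℝ) + 3) / (Module.finrank ℝ E + 1)
  set c := 2 ^ ((Module.finrank ℝ E : ℝ) / 2) * π with hc
  have hc0 : 0 < c := by positivity
  refine ⟨2 * c * C, by positivity,
    fun α hα t ht r₁ hr₁ r₂ hr₂ f g hf hg hf1 hg1 A B hA0 hB0 hA hB => ?_⟩
  have hfc := continuous_fourier_of_integrable hf
  have hgc := continuous_fourier_of_integrable hg
  have hfm := hfc.measurable
  have hgm := hgc.measurable
  have hG := (continuous_gaussDensity (E := E) (2 * t)).measurable
  have hkg : ∀ r : ℝ, Integrable (fun z : E × E => f z.1 * conj (g z.2) *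
      (sphereKernel (r • (z.1 - z.2)) * (Real.exp (-t * ‖z.1 - z.2‖ ^ 2) : ℂ)))
      (volume.prod volume) := fun r => by
    refine integrable_mul_conj_mul_kernel hf hg
      (L := fun z => sphereKernel (r • z) * (Real.exp (-t * ‖z‖ ^ 2) : ℂ))
      (M := (volume : Measure E).toSphere.real Set.univ) ?_ fun z => ?_
    · exact (continuous_sphereKernel.comp (by fun_prop)).mul (by fun_prop)
    · rw [norm_mul, Complex.norm_real, Real.norm_of_nonneg (by positivity)]
      exact (mul_le_of_le_one_right (norm_nonneg _) (Real.exp_le_one_iff.2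
        (by nlinarith [sq_nonneg ‖z‖]))).trans (norm_sphereKernel_le _)
  simp only [sub_mul, mul_sub]
  rw [integral_sub (hkg r₁) (hkg r₂),
    ← integral_sphere_fourier_mul_conj_gaussDensity r₁ ht hf hg,
    ← integral_sphere_fourier_mul_conj_gaussDensity r₂ ht hf hg,
    ← integral_sub (integrable_sphere_integral_gaussDensity hf hg ht r₁)
      (integrable_sphere_integral_gaussDensity hf hg ht r₂),
    ← ENNReal.ofReal_le_ofReal_iff (by positivity), ofReal_norm]
  set Δ := |r₁ - r₂|
  set X := C * ((2 * t) ^ (-(1 / 4) : ℝ) * A ^ (1 / 2 : ℝ) * B ^ (ν / 2)) with hX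
  have hX0 : 0 ≤ X := by positivity
  set S := c * t ^ (-(α / 2)) * Δ ^ α with hS
  have hS0 : 0 ≤ S := by positivity
  refine (enorm_integral_le_lintegral_enorm _).trans ?_
  calc _ ≤ ∫⁻ ω : sphere (0 : E) 1, (∫⁻ ξ : E, ENNReal.ofReal S *
        (‖𝓕 f ξ‖ₑ * ‖𝓕 g ξ‖ₑ * ENNReal.ofReal (gaussDensity (2 * t) (ξ - r₁ • (ω : E))) +
         ‖𝓕 f ξ‖ₑ * ‖𝓕 g ξ‖ₑ * ENNReal.ofReal (gaussDensity (2 * t) (ξ - r₂ • (ω : E)))))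
        ∂(volume : Measure E).toSphere := by
        refine lintegral_mono fun ω => ?_
        rw [← integral_sub (integrable_fourier_mul_conj_mul_gaussDensity hf hg ht _)
          (integrable_fourier_mul_conj_mul_gaussDensity hf hg ht _)]
        refine (enorm_integral_le_lintegral_enorm _).trans (lintegral_mono fun ξ => ?_)
        rw [← mul_sub, enorm_mul, enorm_mul, ← ofReal_norm (conj (𝓕 g ξ)), RCLike.norm_conj,
          ofReal_norm, ← mul_add, mul_left_comm]
        gcongr
        rw [← ENNReal.ofReal_add (gaussDensity_nonneg (by positivity) _)
          (gaussDensity_nonneg (by positivity) _), ← ENNReal.ofReal_mul hS0, ← ofReal_norm,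
          ← ofReal_sub, Complex.norm_real, Real.norm_eq_abs]
        refine ENNReal.ofReal_le_ofReal ((abs_gaussDensity_sub_le hα ht _ _).trans_eq ?_)
        rw [sub_sub_sub_cancel_left, ← sub_smul, norm_smul, norm_eq_of_mem_sphere, mul_one,
          Real.norm_eq_abs, abs_sub_comm]
    _ = ENNReal.ofReal S * ((∫⁻ ω : sphere (0 : E) 1, (∫⁻ ξ : E, ‖𝓕 f ξ‖ₑ * ‖𝓕 g ξ‖ₑ *
          ENNReal.ofReal (gaussDensity (2 * t) (ξ - r₁ • (ω : E))))
            ∂(volume : Measure E).toSphere) +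
        (∫⁻ ω : sphere (0 : E) 1, (∫⁻ ξ : E, ‖𝓕 f ξ‖ₑ * ‖𝓕 g ξ‖ₑ *
          ENNReal.ofReal (gaussDensity (2 * t) (ξ - r₂ • (ω : E))))
            ∂(volume : Measure E).toSphere)) := by
        have hm : ∀ r : ℝ, Measurable (fun p : sphere (0 : E) 1 × E =>
            ‖𝓕 f p.2‖ₑ * ‖𝓕 g p.2‖ₑ *
              ENNReal.ofReal (gaussDensity (2 * t) (p.2 - r • (p.1 : E)))) :=
          fun r => by fun_prop
        rw [mul_add, ← lintegral_const_mul _ (hm r₁).lintegral_prod_right',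
          ← lintegral_const_mul _ (hm r₂).lintegral_prod_right', ← lintegral_add_left
          ((hm r₁).lintegral_prod_right'.const_mul _)]
        refine lintegral_congr fun ω => ?_
        rw [← mul_add]
        rw [lintegral_const_mul _ (by fun_prop), lintegral_add_left (by fun_prop)]
    _ ≤ ENNReal.ofReal S * (ENNReal.ofReal X + ENNReal.ofReal X) := by
        gcongr
        · exact h _ (by positivity) r₁ hr₁ f g hf hg hf1 hg1 A B hA0 hB0 hA hB
        · exact h _ (by positivity) r₂ hr₂ f g hf hg hf1 hg1 A B hA0 hB0 hA hB
    _ = ENNReal.ofReal (S * (X + X)) := by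
        rw [← ENNReal.ofReal_add hX0 hX0, ← ENNReal.ofReal_mul hS0]
    _ ≤ _ := by
        refine ENNReal.ofReal_le_ofReal ?_
        have h2 : (2 * t) ^ (-(1 / 4) : ℝ) ≤ t ^ (-(1 / 4) : ℝ) :=
          Real.rpow_le_rpow_of_nonpos ht (by linarith) (by norm_num)
        calc S * (X + X) ≤ S * (2 * (C * (t ^ (-(1 / 4) : ℝ) * A ^ (1 / 2 : ℝ) * B ^ (ν / 2)))) := by
              rw [← two_mul, hX]; gcongr
          _ = _ := by
              rw [hS, neg_add, Real.rpow_add ht]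
              ring

/-- The bilinear continuity estimate for bounded functions. -/
theorem exists_norm_kernel_sub_le (h3 : 3 ≤ Module.finrank ℝ E) :
    ∃ C : ℝ, 0 < C ∧ ∀ α ∈ Set.Icc (0 : ℝ) 1, ∀ r₁ ∈ Set.Icc (1 : ℝ) 2,
      ∀ r₂ ∈ Set.Icc (1 : ℝ) 2, ∀ f g : E → ℂ, Integrable f →
      Integrable g → (∀ x, ‖f x‖ ≤ 1) → (∀ x, ‖g x‖ ≤ 1) → ∀ A B, 0 < A → 0 < B →
      ∫ x, ‖f x‖ ≤ A → ∫ x, ‖g x‖ ≤ B →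
      ‖∫ z : E × E, f z.1 * conj (g z.2) *
        (sphereKernel (r₁ • (z.1 - z.2)) - sphereKernel (r₂ • (z.1 - z.2)))
        ∂(volume.prod volume)‖ ≤
        C * |r₁ - r₂| ^ α *
        (A ^ (((Module.finrank ℝ E : ℝ) + 1 + 2 * α) / (2 * Module.finrank ℝ E)) *
          B ^ (((Module.finrank ℝ E : ℝ) + 3 + 2 * α) / (Module.finrank ℝ E + 1) -
            ((Module.finrank ℝ E : ℝ) + 1 + 2 * α) / (2 * Module.finrank ℝ E))) := by
  have hd : (3 : ℝ) ≤ Module.finrank ℝ E := by exact_mod_cast h3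
  obtain ⟨K, hK, hk⟩ := exists_sphereKernel_sub_le h3
  obtain ⟨C, hC, hc⟩ := exists_norm_kernel_sub_gauss_le h3
  set n := Module.finrank ℝ E with hn
  set κ := ((n : ℝ) - 1) / 2 with hκ
  set ν := ((n : ℝ) + 3) / (n + 1) with hν
  refine ⟨K + 2 ^ n * C, by positivity,
    fun α hα r₁ hr₁ r₂ hr₂ f g hf hg hf1 hg1 A B hA0 hB0 hA hB => ?_⟩
  set R := A ^ (1 / (n : ℝ)) * B ^ ((2 - ν) / n) with hR
  have hR0 : 0 < R := by positivity
  set τ := R ^ (-2 : ℝ) with hτ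
  have hτ0 : 0 < τ := by positivity
  set Δ := |r₁ - r₂|
  set x := ((n : ℝ) + 1 + 2 * α) / (2 * n) with hx
  set y := ((n : ℝ) + 3 + 2 * α) / (n + 1) - x with hy
  have hRpow : ∀ s : ℝ, R ^ s = A ^ (s / n) * B ^ ((2 - ν) * s / n) := fun s => by
    rw [hR, Real.mul_rpow (by positivity) (by positivity), ← Real.rpow_mul hA0.le,
      ← Real.rpow_mul hB0.le]
    ring_nf
  have hτpow : ∀ s : ℝ, τ ^ s = R ^ (-2 * s) := fun s => by rw [hτ, ← Real.rpow_mul hR0.le]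
  have e1 : τ ^ ((κ - α) / 2) * (A * B) = A ^ x * B ^ y := by
    rw [hτpow, hRpow, mul_mul_mul_comm, ← Real.rpow_add_one hA0.ne', ← Real.rpow_add_one hB0.ne']
    congr 2
    · rw [hκ, hx]; field_simp; ring
    · rw [hκ, hy, hx, hν]; field_simp; ring
  have e2 : τ ^ (-(α / 2 + 1 / 4)) * A ^ (1 / 2 : ℝ) * B ^ (ν / 2) = A ^ x * B ^ y := by
    rw [mul_assoc, hτpow, hRpow, mul_mul_mul_comm, ← Real.rpow_add hA0, ← Real.rpow_add hB0]
    congr 2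
    · rw [hx]; field_simp; ring
    · rw [hy, hx, hν]; field_simp; ring
  have hL := norm_integral_kernel_le_add hf hg
    (L := fun z => sphereKernel (r₁ • z) - sphereKernel (r₂ • z))
    ((continuous_sphereKernel.comp (by fun_prop)).sub (continuous_sphereKernel.comp (by fun_prop)))
    (fun z => (norm_sub_le _ _).trans
      (add_le_add (norm_sphereKernel_le _) (norm_sphereKernel_le _)))
    (τ := τ) (H := K * Δ ^ α * τ ^ ((κ - α) / 2))
    (T := C * Δ ^ α * (τ ^ (-(α / 2 + 1 / 4)) * A ^ (1 / 2 : ℝ) * B ^ (ν / 2))) hτ0 n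
    (fun z => ?_) (fun i => ?_)
  · have hI0 : 0 ≤ ∫ x, ‖f x‖ := integral_nonneg fun _ => norm_nonneg _
    have hI1 : 0 ≤ ∫ x, ‖g x‖ := integral_nonneg fun _ => norm_nonneg _
    calc _ ≤ _ := hL
      _ ≤ K * Δ ^ α * τ ^ ((κ - α) / 2) * (A * B) + 2 ^ n * (C * Δ ^ α *
          (τ ^ (-(α / 2 + 1 / 4)) * A ^ (1 / 2 : ℝ) * B ^ (ν / 2))) := by gcongr
      _ = K * Δ ^ α * (τ ^ ((κ - α) / 2) * (A * B)) + 2 ^ n * (C * Δ ^ α *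
          (τ ^ (-(α / 2 + 1 / 4)) * A ^ (1 / 2 : ℝ) * B ^ (ν / 2))) := by ring
      _ = _ := by rw [e1, e2]; ring
  · rcases eq_or_ne z 0 with rfl | hz
    · simp only [smul_zero, sub_self, norm_zero, zero_mul]
      positivity
    · have h1 := hk α hα z hz r₁ hr₁ r₂ hr₂
      have h2 := one_sub_exp_neg_pow_mul_rpow_le hτ0 (β := κ - α) (by linarith [hα.2]) (N := n)
        (by linarith [hα.1]) hz
      have h3 : 0 ≤ (1 - Real.exp (-τ * ‖z‖ ^ 2)) ^ n :=
        pow_nonneg (sub_nonneg.2 (Real.exp_le_one_iff.2 (by nlinarith [sq_nonneg ‖z‖]))) _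
      rw [neg_sub] at h2
      calc _ ≤ K * Δ ^ α * ‖z‖ ^ (α - κ) * (1 - Real.exp (-τ * ‖z‖ ^ 2)) ^ n := by gcongr
        _ ≤ _ := by rw [mul_assoc]; gcongr
  · refine (hc α hα ((i + 1) * τ) (by positivity) r₁ hr₁ r₂ hr₂ f g hf hg hf1 hg1 A B hA0 hB0
      hA hB).trans ?_
    gcongr ?_ * (?_ * ?_ * ?_)
    exact Real.rpow_le_rpow_of_nonpos hτ0 (by nlinarith [i.cast_nonneg (α := ℝ)])
      (by linarith [hα.1])

theorem conj_sphereKernel_neg (y : E) : conj (sphereKernel (-y)) = sphereKernel y := by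
  rw [sphereKernel, sphereKernel, ← integral_conj]
  congr 1; ext ω
  rw [← Complex.exp_conj, map_mul, Complex.conj_ofReal, Complex.conj_I, inner_neg_left]
  push_cast
  ring_nf

theorem norm_integral_kernel_sub_swap (r₁ r₂ : ℝ) (f g : E → ℂ) :
    ‖∫ z : E × E, f z.1 * conj (g z.2) *
        (sphereKernel (r₁ • (z.1 - z.2)) - sphereKernel (r₂ • (z.1 - z.2)))
        ∂(volume.prod volume)‖ =
    ‖∫ z : E × E, g z.1 * conj (f z.2) *
        (sphereKernel (r₁ • (z.1 - z.2)) - sphereKernel (r₂ • (z.1 - z.2)))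
        ∂(volume.prod volume)‖ := by
  rw [← integral_prod_swap, ← RCLike.norm_conj, ← integral_conj]
  congr 2; ext z
  have h : ∀ r : ℝ, conj (sphereKernel (r • (z.2 - z.1))) = sphereKernel (r • (z.1 - z.2)) :=
    fun r => by rw [← conj_sphereKernel_neg (r • (z.1 - z.2)), ← smul_neg, neg_sub]
  simp only [Prod.fst_swap, Prod.snd_swap, map_mul, map_sub, Complex.conj_conj, h]
  ring

end PairBound

section MinMax

theorem lintegral_min_rpow_mul_max_rpow_le {a b : ℝ} (ha : a < 1) (hab : a + b = 2) {l : ℝ}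
    (hl : 0 < l) :
    ∫⁻ u in Set.Ioi (0 : ℝ), ENNReal.ofReal ((min l u) ^ (-a) * (max l u) ^ (-b)) ≤
      ENNReal.ofReal (2 / (1 - a)) * ENNReal.ofReal (l⁻¹) := by
  have hb : b = 2 - a := by linarith
  have h1a : 0 < 1 - a := by linarith
  have h1 : ∫⁻ u in Set.Ioc (0 : ℝ) l, ENNReal.ofReal ((min l u) ^ (-a) * (max l u) ^ (-b)) =
      ENNReal.ofReal (l⁻¹ / (1 - a)) := by
    have hi : IntegrableOn (fun u : ℝ => u ^ (-a) * l ^ (-b)) (Set.Ioc 0 l) :=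
      ((intervalIntegrable_iff_integrableOn_Ioc_of_le hl.le).1
        (intervalIntegral.intervalIntegrable_rpow' (by linarith))).mul_const _
    calc _ = ∫⁻ u in Set.Ioc (0 : ℝ) l, ENNReal.ofReal (u ^ (-a) * l ^ (-b)) := by
          refine setLIntegral_congr_fun measurableSet_Ioc fun u hu => ?_
          simp only [min_eq_right hu.2, max_eq_left hu.2]
      _ = ENNReal.ofReal (∫ u in Set.Ioc (0 : ℝ) l, u ^ (-a) * l ^ (-b)) := by
          refine (ofReal_integral_eq_lintegral_ofReal hi
            ((ae_restrict_mem measurableSet_Ioc).mono fun u hu => ?_)).symm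
          have := hu.1
          positivity
      _ = _ := by
          rw [integral_mul_const, ← intervalIntegral.integral_of_le hl.le,
            integral_rpow (.inl (by linarith)), Real.zero_rpow (by linarith), sub_zero,
            div_mul_eq_mul_div, ← Real.rpow_add hl, ← Real.rpow_neg_one]
          rw [show -a + 1 + -b = -1 by linarith, neg_add_eq_sub]
  have h2 : ∫⁻ u in Set.Ioi l, ENNReal.ofReal ((min l u) ^ (-a) * (max l u) ^ (-b)) =
      ENNReal.ofReal (l⁻¹ / (1 - a)) := by
    have hi : IntegrableOn (fun u : ℝ => l ^ (-a) * u ^ (-b)) (Set.Ioi l) :=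
      (integrableOn_Ioi_rpow_of_lt (by linarith) hl).const_mul _
    calc _ = ∫⁻ u in Set.Ioi l, ENNReal.ofReal (l ^ (-a) * u ^ (-b)) := by
          refine setLIntegral_congr_fun measurableSet_Ioi fun u hu => ?_
          have hu' : l ≤ u := le_of_lt (Set.mem_Ioi.1 hu)
          simp only [min_eq_left hu', max_eq_right hu']
      _ = ENNReal.ofReal (∫ u in Set.Ioi l, l ^ (-a) * u ^ (-b)) := by
          refine (ofReal_integral_eq_lintegral_ofReal hi
            ((ae_restrict_mem measurableSet_Ioi).mono fun u hu => ?_)).symm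
          have : 0 < u := hl.trans hu
          positivity
      _ = _ := by
          rw [integral_const_mul, integral_Ioi_rpow_of_lt (by linarith) hl,
            show -b + 1 = -(1 - a) by rw [hb]; ring, neg_div_neg_eq, mul_div_assoc',
            ← Real.rpow_add hl, ← Real.rpow_neg_one]
          congr 3; ring
  rw [← Set.Ioc_union_Ioi_eq_Ioi hl.le,
    lintegral_union measurableSet_Ioi (Set.Ioc_disjoint_Ioi le_rfl), h1, h2,
    ← ENNReal.ofReal_add (by positivity) (by positivity), ← ENNReal.ofReal_mul (by positivity)]
  refine ENNReal.ofReal_le_ofReal (le_of_eq ?_)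
  ring

theorem lintegral_lintegral_mul_add_le {ρ : Measure ℝ} [SFinite ρ] {w : ℝ → ℝ → ℝ≥0∞}
    (hwm : Measurable fun q : ℝ × ℝ => w q.1 q.2) (hsymm : ∀ l u, w l u = w u l)
    {m : ℝ → ℝ≥0∞} (hm : Measurable m) {h : ℝ → ℝ≥0∞}
    (hw : ∀ᵐ l ∂ρ, ∫⁻ u, w l u ∂ρ ≤ h l) :
    ∫⁻ l, ∫⁻ u, w l u * (m l + m u) ∂ρ ∂ρ ≤ 2 * ∫⁻ l, m l * h l ∂ρ := by
  have hm1 : Measurable fun q : ℝ × ℝ => w q.1 q.2 * m q.1 := by fun_prop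
  have hm2 : Measurable fun q : ℝ × ℝ => w q.1 q.2 * m q.2 := by fun_prop
  have key : ∫⁻ l, ∫⁻ u, w l u * m l ∂ρ ∂ρ ≤ ∫⁻ l, m l * h l ∂ρ := by
    refine lintegral_mono_ae (hw.mono fun l hl => ?_)
    rw [lintegral_mul_const (f := fun u => w l u) _ (hwm.comp measurable_prodMk_left), mul_comm]
    gcongr
  have key2 : ∫⁻ l, ∫⁻ u, w l u * m u ∂ρ ∂ρ = ∫⁻ l, ∫⁻ u, w l u * m l ∂ρ ∂ρ := by
    rw [lintegral_lintegral_swap hm2.aemeasurable]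
    exact lintegral_congr fun l => lintegral_congr fun u => by rw [hsymm]
  calc _ = (∫⁻ l, ∫⁻ u, w l u * m l ∂ρ ∂ρ) + ∫⁻ l, ∫⁻ u, w l u * m u ∂ρ ∂ρ := by
        rw [← lintegral_add_left hm1.lintegral_prod_right']
        refine lintegral_congr fun l => ?_
        rw [← lintegral_add_left (f := fun u => w l u * m l) (hm1.comp measurable_prodMk_left)]
        simp only [mul_add]
    _ ≤ _ := by
        rw [key2, two_mul]
        exact add_le_add key key

theorem lintegral_lintegral_min_rpow_mul_max_rpow_le {a b : ℝ} (ha : a < 1) (hab : a + b = 2)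
    {m : ℝ → ℝ≥0∞} (hm : Measurable m) :
    ∫⁻ l in Set.Ioi (0 : ℝ), ∫⁻ u in Set.Ioi (0 : ℝ),
        ENNReal.ofReal ((min l u) ^ (-a) * (max l u) ^ (-b)) * (m l + m u) ≤
      2 * ∫⁻ l in Set.Ioi (0 : ℝ),
        m l * (ENNReal.ofReal (2 / (1 - a)) * ENNReal.ofReal (l⁻¹)) :=
  lintegral_lintegral_mul_add_le
    (w := fun l u => ENNReal.ofReal ((min l u) ^ (-a) * (max l u) ^ (-b)))
    (by fun_prop) (fun l u => by simp only [min_comm l u, max_comm l u]) hm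
    ((ae_restrict_mem measurableSet_Ioi).mono fun _ hl =>
      lintegral_min_rpow_mul_max_rpow_le ha hab hl)

theorem rpow_mul_rpow_le_of_mul_rpow_le {A B P l u p x y : ℝ} (hA : 0 ≤ A) (hB : 0 ≤ B)
    (hl : 0 < l) (hu : 0 < u) (hx : 0 ≤ x) (hy : 0 ≤ y) (hxy : 1 ≤ x + y)
    (hAP : A * l ^ p ≤ P) (hBP : B * u ^ p ≤ P) :
    A ^ x * B ^ y ≤ P ^ (x + y - 1) * (l ^ (-(p * x)) * u ^ (-(p * y)) * (A * l ^ p + B * u ^ p)) := by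
  set U := A * l ^ p with hU
  set V := B * u ^ p with hV
  have hU0 : 0 ≤ U := by positivity
  have hV0 : 0 ≤ V := by positivity
  have e1 : A ^ x = U ^ x * l ^ (-(p * x)) := by
    rw [hU, Real.mul_rpow hA (by positivity), ← Real.rpow_mul hl.le, mul_assoc, ← Real.rpow_add hl,
      add_neg_cancel, Real.rpow_zero, mul_one]
  have e2 : B ^ y = V ^ y * u ^ (-(p * y)) := by
    rw [hV, Real.mul_rpow hB (by positivity), ← Real.rpow_mul hu.le, mul_assoc, ← Real.rpow_add hu,
      add_neg_cancel, Real.rpow_zero, mul_one]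
  have hW : U ^ x * V ^ y ≤ P ^ (x + y - 1) * (U + V) := by
    set W := max U V with hW
    have hW0 : 0 ≤ W := hU0.trans (le_max_left _ _)
    calc U ^ x * V ^ y ≤ W ^ x * W ^ y := by
          gcongr
          · exact le_max_left _ _
          · exact le_max_right _ _
      _ = W ^ (x + y - 1) * W := by
          rw [← Real.rpow_add_of_nonneg hW0 hx hy]
          nth_rewrite 3 [← Real.rpow_one W]
          rw [← Real.rpow_add_of_nonneg hW0 (by linarith) zero_le_one, sub_add_cancel]
      _ ≤ P ^ (x + y - 1) * (U + V) := by
          refine mul_le_mul (Real.rpow_le_rpow hW0 (max_le hAP hBP) (by linarith))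
            (max_le (by linarith) (by linarith)) hW0 (Real.rpow_nonneg (hU0.trans hAP) _)
  calc A ^ x * B ^ y = U ^ x * V ^ y * (l ^ (-(p * x)) * u ^ (-(p * y))) := by rw [e1, e2]; ring
    _ ≤ P ^ (x + y - 1) * (U + V) * (l ^ (-(p * x)) * u ^ (-(p * y))) := by gcongr
    _ = _ := by ring

end MinMax

section LayerCake

variable {X : Type*}

/-- The phase of `f` on the set where `‖f‖` exceeds the level `l`. -/
def levelPart (f : X → ℂ) (l : ℝ) (x : X) : ℂ := (Set.Iio ‖f x‖).indicator (fun _ => f x / ‖f x‖) l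

theorem norm_levelPart {f : X → ℂ} {l : ℝ} (hl : 0 ≤ l) (x : X) :
    ‖levelPart f l x‖ = {x | l < ‖f x‖}.indicator (fun _ => (1 : ℝ)) x := by
  by_cases h : l < ‖f x‖
  · have : ‖f x‖ ≠ 0 := (hl.trans_lt h).ne'
    simp [levelPart, Set.indicator, h, this]
  · simp [levelPart, Set.indicator, h]

theorem norm_levelPart_le_one {f : X → ℂ} {l : ℝ} (hl : 0 ≤ l) (x : X) :
    ‖levelPart f l x‖ ≤ 1 := by
  rw [norm_levelPart hl]
  exact Set.indicator_le_self' (fun _ _ => zero_le_one) x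

theorem integrable_levelPart_level (f : X → ℂ) (x : X) :
    Integrable (fun l => levelPart f l x) (volume.restrict (Set.Ioi 0)) := by
  unfold levelPart
  rw [integrable_indicator_iff measurableSet_Iio, IntegrableOn, Measure.restrict_restrict measurableSet_Iio,
    Set.inter_comm, Set.Ioi_inter_Iio]
  exact integrable_const _

theorem integral_levelPart_level (f : X → ℂ) (x : X) :
    ∫ l in Set.Ioi 0, levelPart f l x = f x := by
  unfold levelPart
  rw [setIntegral_indicator measurableSet_Iio, Set.Ioi_inter_Iio, setIntegral_const, Real.volume_real_Ioo,
    sub_zero, max_eq_left (norm_nonneg _), real_smul]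
  by_cases h : f x = 0
  · simp [h]
  · have : (‖f x‖ : ℂ) ≠ 0 := by simpa using h
    field_simp

theorem integral_norm_levelPart_level (f : X → ℂ) (x : X) :
    ∫ l in Set.Ioi 0, ‖levelPart f l x‖ = ‖f x‖ := by
  have : ∀ l ∈ Set.Ioi (0 : ℝ), ‖levelPart f l x‖ = (Set.Iio ‖f x‖).indicator (fun _ => 1) l :=
    fun l hl => by rw [norm_levelPart (le_of_lt hl)]; simp [Set.indicator]
  rw [setIntegral_congr_fun measurableSet_Ioi this, setIntegral_indicator measurableSet_Iio,
    Set.Ioi_inter_Iio, setIntegral_const, Real.volume_real_Ioo, sub_zero,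
    max_eq_left (norm_nonneg _), smul_eq_mul, mul_one]

theorem measurable_levelPart [MeasurableSpace X] {f : X → ℂ} (hf : Measurable f) :
    Measurable fun q : ℝ × X => levelPart f q.1 q.2 := by
  have : (fun q : ℝ × X => levelPart f q.1 q.2) =
      {q : ℝ × X | q.1 < ‖f q.2‖}.indicator fun q => f q.2 / ‖f q.2‖ := by
    ext q; simp [levelPart, Set.indicator]
  rw [this]
  exact Measurable.indicator (by fun_prop) (measurableSet_lt (by fun_prop) (by fun_prop))

variable {E : Type*} [NormedAddCommGroup E] [InnerProductSpace ℝ E] [FiniteDimensional ℝ E]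
  [MeasurableSpace E] [BorelSpace E]

theorem integrable_levelPart {f : E → ℂ} (hf : Measurable f) (hfi : Integrable f) {l : ℝ}
    (hl : 0 < l) : Integrable (levelPart f l) := by
  refine (hfi.norm.const_mul l⁻¹).mono'
    ((measurable_levelPart hf).comp (by fun_prop : Measurable fun x : E => (l, x))).aestronglyMeasurable
    (.of_forall fun x => ?_)
  rw [norm_levelPart hl.le]
  refine Set.indicator_apply_le' (fun h => ?_) fun _ => by positivity
  rw [← div_eq_inv_mul, one_le_div hl]
  exact le_of_lt h

theorem integral_norm_levelPart {f : E → ℂ} (hf : Measurable f) {l : ℝ} (hl : 0 < l) :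
    ∫ x, ‖levelPart f l x‖ = volume.real {x | l < ‖f x‖} := by
  simp only [norm_levelPart hl.le]
  rw [integral_indicator_const _ (measurableSet_lt (by fun_prop) (by fun_prop)), smul_eq_mul, mul_one]

theorem enorm_integral_kernel_le_lintegral_levels {f : E → ℂ} (hf : Measurable f)
    (hfi : Integrable f) {L : E → ℂ} (hL : Continuous L) {M : ℝ} (hM : ∀ z, ‖L z‖ ≤ M) :
    ‖∫ z : E × E, f z.1 * conj (f z.2) * L (z.1 - z.2) ∂(volume.prod volume)‖ₑ ≤
      ∫⁻ l in Set.Ioi (0 : ℝ), ∫⁻ u in Set.Ioi (0 : ℝ),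
        ‖∫ z : E × E, levelPart f l z.1 * conj (levelPart f u z.2) * L (z.1 - z.2)
          ∂(volume.prod volume)‖ₑ := by
  set ρ : Measure ℝ := volume.restrict (Set.Ioi 0)
  have hLm := hL.measurable
  have hmeas := measurable_levelPart hf
  set Φ : E × E → ℝ × ℝ → ℂ := fun z q =>
    levelPart f q.1 z.1 * conj (levelPart f q.2 z.2) * L (z.1 - z.2) with hΦ
  have hΦm : Measurable (Function.uncurry Φ) := by
    simp only [hΦ, Function.uncurry_def]
    refine Measurable.mul (Measurable.mul ?_ ?_) (by fun_prop)
    · exact hmeas.comp (by fun_prop : Measurable fun q : (E × E) × (ℝ × ℝ) => (q.2.1, q.1.1))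
    · exact Complex.continuous_conj.measurable.comp
        (hmeas.comp (by fun_prop : Measurable fun q : (E × E) × (ℝ × ℝ) => (q.2.2, q.1.2)))
  have hconj : ∀ x, Integrable (fun l => conj (levelPart f l x)) ρ := fun x =>
    (integrable_levelPart_level f x).congr'
      (Complex.continuous_conj.comp_aestronglyMeasurable (integrable_levelPart_level f x).1)
      (.of_forall fun l => (RCLike.norm_conj _).symm)
  have hz : ∀ z, Integrable (Φ z) (ρ.prod ρ) := fun z =>
    ((integrable_levelPart_level f z.1).mul_prod (hconj z.2)).mul_const _
  have hznorm : ∀ z, ∫ q, ‖Φ z q‖ ∂(ρ.prod ρ) = ‖f z.1 * conj (f z.2) * L (z.1 - z.2)‖ :=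
    fun z => by
      simp only [hΦ, norm_mul, RCLike.norm_conj]
      rw [integral_mul_const, integral_prod_mul (fun l => ‖levelPart f l z.1‖)
        (fun l => ‖levelPart f l z.2‖), integral_norm_levelPart_level,
        integral_norm_levelPart_level]
  have hzint : ∀ z, ∫ q, Φ z q ∂(ρ.prod ρ) = f z.1 * conj (f z.2) * L (z.1 - z.2) :=
    fun z => by
      simp only [hΦ]
      rw [integral_mul_const, integral_prod_mul (fun l => levelPart f l z.1)
        (fun l => conj (levelPart f l z.2)), integral_conj, integral_levelPart_level,
        integral_levelPart_level]
  have hint : Integrable (Function.uncurry Φ) ((volume.prod volume).prod (ρ.prod ρ)) := by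
    rw [integrable_prod_iff hΦm.aestronglyMeasurable]
    refine ⟨.of_forall hz, ?_⟩
    simp only [Function.uncurry_apply_pair, hznorm]
    exact (integrable_mul_conj_mul_kernel hfi hfi hL hM).norm
  simp only [← hzint]
  rw [integral_integral_swap hint]
  refine (enorm_integral_le_lintegral_enorm _).trans ?_
  exact lintegral_prod_le _

end LayerCake

section Core

variable {E : Type*} [NormedAddCommGroup E] [InnerProductSpace ℝ E] [FiniteDimensional ℝ E]
  [MeasurableSpace E] [BorelSpace E]

theorem abs_integral_sphere_norm_fourier_sq_sub (r₁ r₂ : ℝ) {f : E → ℂ} (hf : Integrable f) :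
    |(∫ ω : sphere (0 : E) 1, ‖𝓕 f (r₁ • (ω : E))‖ ^ 2 ∂(volume : Measure E).toSphere) -
      ∫ ω : sphere (0 : E) 1, ‖𝓕 f (r₂ • (ω : E))‖ ^ 2 ∂(volume : Measure E).toSphere| =
    ‖∫ z : E × E, f z.1 * conj (f z.2) *
        (sphereKernel (r₁ • (z.1 - z.2)) - sphereKernel (r₂ • (z.1 - z.2)))
        ∂(volume.prod volume)‖ := by
  have hk : ∀ r : ℝ, Integrable (fun z : E × E => f z.1 * conj (f z.2) *
      sphereKernel (r • (z.1 - z.2))) (volume.prod volume) := fun r =>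
    integrable_mul_conj_mul_kernel hf hf (L := fun z => sphereKernel (r • z))
      (continuous_sphereKernel.comp (by fun_prop)) fun z => norm_sphereKernel_le _
  simp only [mul_sub]
  rw [integral_sub (hk r₁) (hk r₂), ← integral_sphere_fourier_mul_conj r₁ hf hf,
    ← integral_sphere_fourier_mul_conj r₂ hf hf, ← integral_sphere_norm_fourier_sq r₁ f,
    ← integral_sphere_norm_fourier_sq r₂ f, ← ofReal_sub, Complex.norm_real, Real.norm_eq_abs]

theorem measureReal_mul_rpow_le_integral {f : E → ℂ} {p : ℝ} (hp : 0 < p)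
    (hfp : Integrable fun x => ‖f x‖ ^ p) {l : ℝ} (hl : 0 < l) :
    volume.real {x | l < ‖f x‖} * l ^ p ≤ ∫ x, ‖f x‖ ^ p := by
  have hlp : 0 < l ^ p := by positivity
  refine le_trans ?_ (mul_meas_ge_le_integral_of_nonneg
    (.of_forall fun x => by positivity) hfp (l ^ p))
  rw [mul_comm]
  gcongr
  · have h := hfp.measure_norm_ge_lt_top hlp
    simp only [Real.norm_of_nonneg (Real.rpow_nonneg (norm_nonneg _) _)] at h
    exact h.ne
  · exact fun h => Real.rpow_le_rpow hl.le (le_of_lt h) hp.le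

/-- The Hölder estimate in the radius for the restriction of the Fourier transform to spheres. -/
theorem exists_abs_integral_sphere_sub_le (h3 : 3 ≤ Module.finrank ℝ E) {α : ℝ}
    (hα : α ∈ Set.Icc (0 : ℝ) 1) (hα' : 2 * α < Module.finrank ℝ E - 1) {p : ℝ}
    (hp : p * ((Module.finrank ℝ E : ℝ) + 3 + 2 * α) = 2 * (Module.finrank ℝ E + 1)) :
    ∃ C : ℝ, 0 < C ∧ ∀ r₁ ∈ Set.Icc (1 : ℝ) 2, ∀ r₂ ∈ Set.Icc (1 : ℝ) 2, ∀ f : E → ℂ,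
      Measurable f → Integrable f → Integrable (fun x => ‖f x‖ ^ p) →
      |(∫ ω : sphere (0 : E) 1, ‖𝓕 f (r₁ • (ω : E))‖ ^ 2 ∂(volume : Measure E).toSphere) -
        ∫ ω : sphere (0 : E) 1, ‖𝓕 f (r₂ • (ω : E))‖ ^ 2 ∂(volume : Measure E).toSphere| ≤
        C * |r₁ - r₂| ^ α * (∫ x, ‖f x‖ ^ p) ^ (2 / p) := by
  have hd : (3 : ℝ) ≤ Module.finrank ℝ E := by exact_mod_cast h3
  obtain ⟨C, hC, hc⟩ := exists_norm_kernel_sub_le h3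
  set n : ℝ := (Module.finrank ℝ E : ℝ) with hn
  set x := (n + 1 + 2 * α) / (2 * n) with hx
  set y := (n + 3 + 2 * α) / (n + 1) - x with hy
  have hα0 := hα.1
  have hq : 0 < n + 3 + 2 * α := by linarith
  have hp' : p = 2 * (n + 1) / (n + 3 + 2 * α) := by rw [eq_div_iff hq.ne', hp]
  have hp1 : 1 ≤ p := by rw [hp', le_div_iff₀ hq]; linarith
  have hp0 : 0 < p := by linarith
  have hx0 : 0 ≤ x := by rw [hx]; positivity
  have hxy : x + y = 2 / p := by rw [hy, hp']; field_simp; ring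
  have hpx : p * x < 1 := by
    rw [hp', hx, div_mul_div_comm, div_lt_one (by positivity)]
    nlinarith
  have hpxy : p * x + p * y = 2 := by rw [← mul_add, hxy]; field_simp
  have hy0 : 0 ≤ y := by
    have : 0 < p * y := by linarith
    exact (pos_of_mul_pos_right this hp0.le).le
  have hxy1 : 1 ≤ x + y := by
    rw [hy, add_sub_cancel, le_div_iff₀ (by linarith)]; linarith
  set Q := 2 / (1 - p * x) with hQ
  have hQ0 : 0 < Q := div_pos two_pos (by linarith)
  refine ⟨2 * C * Q, by positivity, fun r₁ hr₁ r₂ hr₂ f hf hfi hfp => ?_⟩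
  set Δ := |r₁ - r₂|
  set P := ∫ x, ‖f x‖ ^ p with hP
  have hP0 : 0 ≤ P := integral_nonneg fun _ => by positivity
  set L : E → ℂ := fun z => sphereKernel (r₁ • z) - sphereKernel (r₂ • z) with hL
  have hLc : Continuous L := (continuous_sphereKernel.comp (by fun_prop)).sub
    (continuous_sphereKernel.comp (by fun_prop))
  have hLM : ∀ z, ‖L z‖ ≤ _ := fun z => (norm_sub_le _ _).trans
      (add_le_add (norm_sphereKernel_le _) (norm_sphereKernel_le _))
  set A : ℝ → ℝ := fun l => volume.real {x | l < ‖f x‖} with hA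
  have hA0 : ∀ l, 0 ≤ A l := fun l => measureReal_nonneg
  set D : ℝ → ℝ → ℂ := fun l u => ∫ z : E × E, levelPart f l z.1 * conj (levelPart f u z.2) *
    L (z.1 - z.2) ∂(volume.prod volume) with hD
  have hpair : ∀ l u, 0 < l → 0 < u → ‖D l u‖ ≤ C * Δ ^ α * (A l ^ x * A u ^ y) := by
    intro l u hl hu
    rcases (hA0 l).eq_or_lt with h | hAl
    · refine (norm_integral_mul_conj_mul_kernel_le (integrable_levelPart hf hfi hl)
        (integrable_levelPart hf hfi hu) hLM).trans ?_
      have e : ∫ x, ‖levelPart f l x‖ = 0 := (integral_norm_levelPart hf hl).trans h.symm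
      rw [e]
      simp only [zero_mul, mul_zero]
      have := hA0 l
      have := hA0 u
      positivity
    rcases (hA0 u).eq_or_lt with h | hAu
    · refine (norm_integral_mul_conj_mul_kernel_le (integrable_levelPart hf hfi hl)
        (integrable_levelPart hf hfi hu) hLM).trans ?_
      have e : ∫ x, ‖levelPart f u x‖ = 0 := (integral_norm_levelPart hf hu).trans h.symm
      rw [e]
      simp only [mul_zero]
      have := hA0 u
      positivity
    exact hc α hα r₁ hr₁ r₂ hr₂ _ _ (integrable_levelPart hf hfi hl)
      (integrable_levelPart hf hfi hu) (norm_levelPart_le_one hl.le)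
      (norm_levelPart_le_one hu.le) _ _ hAl hAu (integral_norm_levelPart hf hl).le
      (integral_norm_levelPart hf hu).le
  set S := C * Δ ^ α * P ^ (x + y - 1) with hS
  have hS0 : 0 ≤ S := by positivity
  have hle : ∀ l u, 0 < l → 0 < u → l ≤ u → ‖D l u‖ ≤
      S * ((min l u) ^ (-(p * x)) * (max l u) ^ (-(p * y)) * (A l * l ^ p + A u * u ^ p)) := by
    intro l u hl hu hlu
    rw [min_eq_left hlu, max_eq_right hlu, hS, mul_assoc (C * Δ ^ α)]
    refine (hpair l u hl hu).trans ?_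
    exact mul_le_mul_of_nonneg_left
      (rpow_mul_rpow_le_of_mul_rpow_le (hA0 l) (hA0 u) hl hu hx0 hy0 hxy1
        (measureReal_mul_rpow_le_integral hp0 hfp hl)
        (measureReal_mul_rpow_le_integral hp0 hfp hu)) (by positivity)
  have hall : ∀ l u, 0 < l → 0 < u → ‖D l u‖ ≤
      S * ((min l u) ^ (-(p * x)) * (max l u) ^ (-(p * y)) * (A l * l ^ p + A u * u ^ p)) := by
    intro l u hl hu
    rcases le_total l u with h | h
    · exact hle l u hl hu h
    · have hs : ‖D l u‖ = ‖D u l‖ := norm_integral_kernel_sub_swap r₁ r₂ _ _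
      rw [hs, min_comm, max_comm, add_comm (A l * l ^ p)]
      exact hle u l hu hl h
  set m : ℝ → ℝ≥0∞ := fun l => ENNReal.ofReal (A l * l ^ p) with hm
  have hAm : Measurable A := by
    have h : Antitone fun l : ℝ => (volume : Measure E) {x | l < ‖f x‖} := fun l u hlu =>
      measure_mono fun x hx => lt_of_le_of_lt hlu hx
    exact h.measurable.ennreal_toReal
  have hmm : Measurable m := by fun_prop
  have hmain : ‖∫ z : E × E, f z.1 * conj (f z.2) * L (z.1 - z.2) ∂(volume.prod volume)‖ₑ ≤
      ENNReal.ofReal (S * (2 * (Q * P))) := by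
    refine (enorm_integral_kernel_le_lintegral_levels hf hfi hLc hLM).trans ?_
    calc _ ≤ ∫⁻ l in Set.Ioi (0 : ℝ), ∫⁻ u in Set.Ioi (0 : ℝ), ENNReal.ofReal S *
          (ENNReal.ofReal ((min l u) ^ (-(p * x)) * (max l u) ^ (-(p * y))) * (m l + m u)) := by
          refine setLIntegral_mono' measurableSet_Ioi fun l hl =>
            setLIntegral_mono' measurableSet_Ioi fun u hu => ?_
          have hl' : 0 < l := hl
          have hu' : 0 < u := hu
          have := hA0 l
          have := hA0 u
          rw [← ofReal_norm, hm, ← ENNReal.ofReal_add (by positivity) (by positivity),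
            ← ENNReal.ofReal_mul (by positivity), ← ENNReal.ofReal_mul hS0]
          exact ENNReal.ofReal_le_ofReal (hall l u hl hu)
      _ = ENNReal.ofReal S * ∫⁻ l in Set.Ioi (0 : ℝ), ∫⁻ u in Set.Ioi (0 : ℝ),
          (ENNReal.ofReal ((min l u) ^ (-(p * x)) * (max l u) ^ (-(p * y))) * (m l + m u)) := by
          simp only [lintegral_const_mul' _ _ ENNReal.ofReal_ne_top]
      _ ≤ ENNReal.ofReal S * (2 * ∫⁻ l in Set.Ioi (0 : ℝ),
          m l * (ENNReal.ofReal Q * ENNReal.ofReal (l⁻¹))) := by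
          gcongr
          exact lintegral_lintegral_min_rpow_mul_max_rpow_le hpx hpxy hmm
      _ = ENNReal.ofReal S * (2 * (ENNReal.ofReal Q * ∫⁻ l in Set.Ioi (0 : ℝ),
          volume {x | l < ‖f x‖} * ENNReal.ofReal (l ^ (p - 1)))) := by
          rw [← lintegral_const_mul' _ _ ENNReal.ofReal_ne_top]
          congr 2
          refine setLIntegral_congr_fun measurableSet_Ioi fun l hl => ?_
          have hl' : 0 < l := hl
          simp only [hm]
          rw [ENNReal.ofReal_mul (hA0 l), hA, ofReal_measureReal (hfi.measure_norm_gt_lt_top hl').ne,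
            Real.rpow_sub_one hl'.ne', div_eq_mul_inv, ENNReal.ofReal_mul (by positivity)]
          ring
      _ ≤ ENNReal.ofReal S * (2 * (ENNReal.ofReal Q * ENNReal.ofReal P)) := by
          gcongr
          rw [hP, ofReal_integral_eq_lintegral_ofReal hfp (.of_forall fun _ => by positivity),
            lintegral_rpow_eq_lintegral_meas_lt_mul volume (.of_forall fun _ => norm_nonneg _)
              hf.norm.aemeasurable hp0]
          exact le_mul_of_one_le_left zero_le (by simpa using hp1)
      _ = _ := by
          rw [ENNReal.ofReal_mul hS0, ENNReal.ofReal_mul zero_le_two, ENNReal.ofReal_mul hQ0.le,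
            ENNReal.ofReal_ofNat]
  rw [abs_integral_sphere_norm_fourier_sq_sub r₁ r₂ hfi]
  rw [← ofReal_norm, ENNReal.ofReal_le_ofReal_iff (by positivity)] at hmain
  refine hmain.trans_eq ?_
  have hPP : P ^ (2 / p) = P ^ (x + y - 1) * P := by
    nth_rewrite 3 [← Real.rpow_one P]
    rw [← Real.rpow_add_of_nonneg hP0 (by linarith) zero_le_one, sub_add_cancel, hxy]
  rw [hPP, hS]
  ring

/-- The endpoint `p = 1`, which occurs in dimension three. -/
theorem exists_abs_integral_sphere_sub_le_of_eq (h3 : 3 ≤ Module.finrank ℝ E) {α : ℝ}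
    (hα : α ∈ Set.Icc (0 : ℝ) 1) (hα' : 2 * α = Module.finrank ℝ E - 1) :
    ∃ C : ℝ, 0 < C ∧ ∀ r₁ ∈ Set.Icc (1 : ℝ) 2, ∀ r₂ ∈ Set.Icc (1 : ℝ) 2, ∀ f : E → ℂ,
      Integrable f →
      |(∫ ω : sphere (0 : E) 1, ‖𝓕 f (r₁ • (ω : E))‖ ^ 2 ∂(volume : Measure E).toSphere) -
        ∫ ω : sphere (0 : E) 1, ‖𝓕 f (r₂ • (ω : E))‖ ^ 2 ∂(volume : Measure E).toSphere| ≤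
        C * |r₁ - r₂| ^ α * (∫ x, ‖f x‖) ^ 2 := by
  obtain ⟨K, hK, hk⟩ := exists_sphereKernel_sub_le h3
  refine ⟨K, hK, fun r₁ hr₁ r₂ hr₂ f hf => ?_⟩
  rw [abs_integral_sphere_norm_fourier_sq_sub r₁ r₂ hf, sq]
  refine norm_integral_mul_conj_mul_kernel_le hf hf
    (L := fun z => sphereKernel (r₁ • z) - sphereKernel (r₂ • z)) fun z => ?_
  rcases eq_or_ne z 0 with rfl | hz
  · simp only [smul_zero, sub_self, norm_zero]
    positivity
  · refine (hk α hα z hz r₁ hr₁ r₂ hr₂).trans_eq ?_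
    rw [show α - ((Module.finrank ℝ E : ℝ) - 1) / 2 = 0 by linarith, Real.rpow_zero, mul_one]

end Core

section Scaling

variable {E : Type*} [NormedAddCommGroup E] [InnerProductSpace ℝ E] [FiniteDimensional ℝ E]
  [MeasurableSpace E] [BorelSpace E]

/-- The Hölder estimate in the radius, on the full range of exponents. -/
theorem exists_abs_integral_sphere_sub_le_of_le (h3 : 3 ≤ Module.finrank ℝ E) {α : ℝ}
    (hα : α ∈ Set.Icc (0 : ℝ) 1) {p : ℝ}
    (hp : p * ((Module.finrank ℝ E : ℝ) + 3 + 2 * α) = 2 * (Module.finrank ℝ E + 1)) :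
    ∃ C : ℝ, 0 < C ∧ ∀ r₁ ∈ Set.Icc (1 : ℝ) 2, ∀ r₂ ∈ Set.Icc (1 : ℝ) 2, ∀ f : E → ℂ,
      Measurable f → Integrable f → Integrable (fun x => ‖f x‖ ^ p) →
      |(∫ ω : sphere (0 : E) 1, ‖𝓕 f (r₁ • (ω : E))‖ ^ 2 ∂(volume : Measure E).toSphere) -
        ∫ ω : sphere (0 : E) 1, ‖𝓕 f (r₂ • (ω : E))‖ ^ 2 ∂(volume : Measure E).toSphere| ≤
        C * |r₁ - r₂| ^ α * (∫ x, ‖f x‖ ^ p) ^ (2 / p) := by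
  have hd : (3 : ℝ) ≤ Module.finrank ℝ E := by exact_mod_cast h3
  rcases (show 2 * α ≤ (Module.finrank ℝ E : ℝ) - 1 by linarith [hα.2]).lt_or_eq with h | h
  · exact exists_abs_integral_sphere_sub_le h3 hα h hp
  · obtain ⟨C, hC, hc⟩ := exists_abs_integral_sphere_sub_le_of_eq h3 hα h
    have hp1 : p = 1 := by
      rw [h] at hp
      refine mul_right_cancel₀ (b := 2 * ((Module.finrank ℝ E : ℝ) + 1)) (by positivity) ?_
      linarith
    refine ⟨C, hC, fun r₁ hr₁ r₂ hr₂ f _ hf _ => ?_⟩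
    simpa only [hp1, Real.rpow_one, div_one, Real.rpow_two] using hc r₁ hr₁ r₂ hr₂ f hf

theorem fourier_comp_inv_smul (f : E → ℂ) {c : ℝ} (hc : 0 < c) (ξ : E) :
    𝓕 (fun x => f (c⁻¹ • x)) ξ = ((c ^ Module.finrank ℝ E : ℝ) : ℂ) * 𝓕 f (c • ξ) := by
  have h := Measure.integral_comp_inv_smul (volume : Measure E)
    (fun x => Real.fourierChar (-⟪x, c • ξ⟫) • f x) c
  rw [abs_of_nonneg (by positivity)] at h
  rw [Real.fourier_eq, Real.fourier_eq, ← real_smul, ← h]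
  congr 1 with x
  rw [real_inner_smul_left, real_inner_smul_right, inv_mul_cancel_left₀ hc.ne']

theorem integral_sphere_norm_fourier_comp_inv_smul (f : E → ℂ) {c : ℝ} (hc : 0 < c) (r : ℝ) :
    ∫ ω : sphere (0 : E) 1, ‖𝓕 (fun x => f (c⁻¹ • x)) (r • (ω : E))‖ ^ 2
      ∂(volume : Measure E).toSphere =
    (c ^ Module.finrank ℝ E) ^ 2 * ∫ ω : sphere (0 : E) 1, ‖𝓕 f ((c * r) • (ω : E))‖ ^ 2
      ∂(volume : Measure E).toSphere := by
  rw [← integral_const_mul]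
  congr 1 with ω
  rw [fourier_comp_inv_smul f hc, norm_mul, mul_pow, Complex.norm_real, Real.norm_eq_abs, sq_abs,
    smul_smul]

theorem abs_sqrt_sub_sqrt_le {s t : ℝ} (hs : 1 ≤ s) (ht : 1 ≤ t) :
    |√s - √t| ≤ |s - t| := by
  have h : s - t = (√s - √t) * (√s + √t) := by
    nlinarith [Real.sq_sqrt (zero_le_one.trans hs), Real.sq_sqrt (zero_le_one.trans ht)]
  have h₁ := Real.one_le_sqrt.2 hs
  have h₂ := Real.one_le_sqrt.2 ht
  rw [h, abs_mul]
  exact le_mul_of_one_le_right (abs_nonneg _) (by rw [abs_of_nonneg] <;> linarith)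

/-- The powers of `m` produced by rescaling to unit frequency. -/
theorem rpow_mul_rescaled_eq {n γ m d P : ℝ} (hγ : 0 < γ) (hm : 0 < m) (hd : 0 ≤ d) (hP : 0 ≤ P) :
    m ^ ((n - 2) / 2) * (m ^ (-n) * ((d / m) ^ ((n + 1) / γ - 1) *
      (m ^ (n / 2) * P) ^ ((γ + 2) / γ))) =
    (d ^ (n + 1 - γ) / m) ^ (1 / γ) * (P ^ ((γ + 2) / (2 * γ))) ^ 2 := by
  have h₁ : (P ^ ((γ + 2) / (2 * γ))) ^ 2 = P ^ ((γ + 2) / γ) := by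
    rw [← Real.rpow_natCast, ← Real.rpow_mul hP]
    congr 1
    push_cast
    field_simp
  have h₂ : (d ^ (n + 1 - γ)) ^ (1 / γ) = d ^ ((n + 1) / γ - 1) := by
    rw [← Real.rpow_mul hd]
    congr 1
    field_simp
  rw [h₁, Real.div_rpow (Real.rpow_nonneg hd _) hm.le, h₂, Real.div_rpow hd hm.le,
    Real.mul_rpow (by positivity) hP, ← Real.rpow_mul hm.le, div_eq_mul_inv (d ^ _), div_eq_mul_inv (d ^ _),
    ← Real.rpow_neg hm.le, ← Real.rpow_neg hm.le]
  have h₃ : m ^ (-(1 / γ)) = m ^ ((n - 2) / 2) * m ^ (-n) * m ^ (-((n + 1) / γ - 1)) *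
      m ^ (n / 2 * ((γ + 2) / γ)) := by
    rw [← Real.rpow_add hm, ← Real.rpow_add hm, ← Real.rpow_add hm]
    congr 1
    field_simp
    ring
  rw [h₃]
  ring

end Scaling

end SphereRestriction

/-- Continuity (in the parameter `s = |ξ|²`) of the squared `L²(S^{n-1})`
norms of the spherical restrictions of `ψ̂`, in terms of the `L^{2γ/(γ+2)}` norm of `ψ`. -/
theorem sphere_restriction_norm_continuity (n : ℕ) (hn : 3 ≤ n) (γ : ℝ)
    (hγ₁ : ((n : ℝ) + 1) / 2 ≤ γ) (hγ₂ : γ ≤ (n : ℝ) + 1) :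
    ∃ C : ℝ, 0 < C ∧ ∀ ψ : SchwartzMap (EuclideanSpace ℝ (Fin n)) ℂ,
      ∀ m : ℕ, 1 ≤ m → ∀ s₁ s₂ : ℝ,
        s₁ ∈ Set.Icc (m : ℝ) ((m : ℝ) + 1) → s₂ ∈ Set.Icc (m : ℝ) ((m : ℝ) + 1) →
      (m : ℝ) ^ (((n : ℝ) - 2) / 2) *
        |(∫ ω : sphere (0 : EuclideanSpace ℝ (Fin n)) 1,
            ‖𝓕 (⇑ψ) (Real.sqrt s₁ • (ω : EuclideanSpace ℝ (Fin n)))‖ ^ 2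
            ∂((volume : Measure (EuclideanSpace ℝ (Fin n))).toSphere))
          - (∫ ω : sphere (0 : EuclideanSpace ℝ (Fin n)) 1,
            ‖𝓕 (⇑ψ) (Real.sqrt s₂ • (ω : EuclideanSpace ℝ (Fin n)))‖ ^ 2
            ∂((volume : Measure (EuclideanSpace ℝ (Fin n))).toSphere))|
        ≤ C * (|s₁ - s₂| ^ ((n : ℝ) + 1 - γ) / (m : ℝ)) ^ (1 / γ) *
          ((∫ x : EuclideanSpace ℝ (Fin n), ‖ψ x‖ ^ (2 * γ / (γ + 2)))
            ^ ((γ + 2) / (2 * γ))) ^ 2 := by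
  have hn' : (3 : ℝ) ≤ n := by exact_mod_cast hn
  have hγ : 0 < γ := by linarith
  have hfr : Module.finrank ℝ (EuclideanSpace ℝ (Fin n)) = n := finrank_euclideanSpace_fin
  set α := ((n : ℝ) + 1) / γ - 1 with hαdef
  set p := 2 * γ / (γ + 2) with hp
  have hp0 : 0 < p := by positivity
  have hα : α ∈ Set.Icc (0 : ℝ) 1 := by
    constructor
    · rw [hαdef, sub_nonneg, one_le_div hγ]
      exact hγ₂
    · rw [hαdef, sub_le_iff_le_add, div_le_iff₀ hγ]
      linarith
  obtain ⟨C, hC, hc⟩ := exists_abs_integral_sphere_sub_le_of_le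
    (E := EuclideanSpace ℝ (Fin n)) (by rwa [hfr]) hα (p := p) (by
      rw [hfr, hp, hαdef]; field_simp; ring)
  refine ⟨C, hC, fun ψ m hm s₁ s₂ hs₁ hs₂ => ?_⟩
  have hm1 : (1 : ℝ) ≤ m := by exact_mod_cast hm
  have hm0 : (0 : ℝ) < m := by linarith
  set c := √(m : ℝ) with hcdef
  have hc0 : 0 < c := Real.sqrt_pos.2 hm0
  have hcn : c ^ n = (m : ℝ) ^ ((n : ℝ) / 2) := by
    rw [hcdef, Real.sqrt_eq_rpow, ← Real.rpow_natCast, ← Real.rpow_mul hm0.le]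
    congr 1
    ring
  have hcn2 : (c ^ n) ^ 2 * (m : ℝ) ^ (-(n : ℝ)) = 1 := by
    rw [hcn, ← Real.rpow_natCast, ← Real.rpow_mul hm0.le, ← Real.rpow_add hm0]
    convert Real.rpow_zero _ using 2
    push_cast
    ring
  have hr : ∀ s ∈ Set.Icc (m : ℝ) ((m : ℝ) + 1), 1 ≤ s / m ∧ √(s / m) ∈ Set.Icc (1 : ℝ) 2 ∧
      c * √(s / m) = √s := by
    intro s hs
    have h1 : 1 ≤ s / m := by rw [one_le_div hm0]; exact hs.1
    refine ⟨h1, ⟨Real.one_le_sqrt.2 h1, ?_⟩, ?_⟩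
    · rw [Real.sqrt_le_left zero_le_two, div_le_iff₀ hm0]
      linarith [hs.2]
    · rw [hcdef, ← Real.sqrt_mul hm0.le, mul_div_cancel₀ _ hm0.ne']
  obtain ⟨ht₁, hr₁, he₁⟩ := hr s₁ hs₁
  obtain ⟨ht₂, hr₂, he₂⟩ := hr s₂ hs₂
  have hψp : Integrable fun x => ‖ψ x‖ ^ p := by
    have h := (ψ.memLp (ENNReal.ofReal p) volume).integrable_norm_rpow
      (by simpa using hp0) ENNReal.ofReal_ne_top
    rwa [ENNReal.toReal_ofReal hp0.le] at h
  set P := ∫ x, ‖ψ x‖ ^ p with hP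
  have hP0 : 0 ≤ P := integral_nonneg fun _ => by positivity
  have hfP : ∫ x, ‖ψ (c⁻¹ • x)‖ ^ p = (m : ℝ) ^ ((n : ℝ) / 2) * P := by
    rw [Measure.integral_comp_inv_smul volume (fun x => ‖ψ x‖ ^ p) c, hfr,
      abs_of_nonneg (by positivity), hcn, smul_eq_mul]
  have hmain := hc _ hr₁ _ hr₂ (fun x => ψ (c⁻¹ • x))
    (ψ.continuous.comp (continuous_const_smul _)).measurable
    (ψ.integrable.comp_smul (inv_ne_zero hc0.ne'))
    (hψp.comp_smul (inv_ne_zero hc0.ne'))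
  rw [integral_sphere_norm_fourier_comp_inv_smul _ hc0,
    integral_sphere_norm_fourier_comp_inv_smul _ hc0, he₁, he₂, hfr, ← mul_sub, abs_mul,
    abs_of_nonneg (by positivity), hfP] at hmain
  have h2p : 2 / p = (γ + 2) / γ := by rw [hp]; field_simp
  have hdist : |√(s₁ / m) - √(s₂ / m)| ^ α ≤ (|s₁ - s₂| / m) ^ α := by
    refine Real.rpow_le_rpow (abs_nonneg _) ((abs_sqrt_sub_sqrt_le ht₁ ht₂).trans_eq ?_) hα.1
    rw [← sub_div, abs_div, abs_of_pos hm0]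
  rw [h2p] at hmain
  rw [mul_assoc C, ← rpow_mul_rescaled_eq hγ hm0 (abs_nonneg _) hP0, ← mul_assoc C, mul_comm C,
    mul_assoc]
  refine mul_le_mul_of_nonneg_left ?_ (by positivity)
  have hdiv : ∀ X Y : ℝ, (c ^ n) ^ 2 * X ≤ Y → X ≤ (m : ℝ) ^ (-(n : ℝ)) * Y := by
    intro X Y h
    have := mul_le_mul_of_nonneg_left h (show 0 ≤ (m : ℝ) ^ (-(n : ℝ)) by positivity)
    rwa [mul_left_comm, ← mul_assoc, hcn2, one_mul] at this
  rw [mul_left_comm C]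
  refine hdiv _ _ (hmain.trans ?_)
  rw [mul_assoc]
  gcongr
end
end

section
/- Let n ≥ 3. There is a constant C depending only on n such that for every Schwartz function ψ on ℝⁿ and every r > 0, (∫_{S^{n−1}} |ψ̂(rω)|² dσ(ω))^{1/2} ≤ C r^{1−n/2} ‖⟨x⟩ψ‖_{L²(ℝⁿ)}. -/
open MeasureTheory Complex FourierTransform Metric
open scoped ENNReal Real

noncomputable section

open Set Filter Module SchwartzMap LineDeriv
open scoped Topology

/-- A weighted one-dimensional Hardy-type trace inequality: the boundary value at `r` of a function
vanishing suitably at infinity is controlled by the weighted `L²` norm of its derivative. -/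
theorem pow_mul_norm_sq_le_integral_Ioi {F : Type*} [NormedAddCommGroup F]
    [InnerProductSpace ℝ F] {g g' : ℝ → F} {φ : ℝ → ℝ} {k : ℕ} {r : ℝ} (hr : 0 < r)
    (hg : ∀ s, 0 < s → HasDerivAt g (g' s) s) (hφ : IntegrableOn φ (Ioi 0))
    (hle : ∀ s, 0 < s → s ^ (k + 2) * ‖g' s‖ ^ 2 ≤ φ s)
    (hlim : Tendsto (fun s ↦ s ^ (k + 1) * ‖g s‖ ^ 2) atTop (𝓝 0)) :
    r ^ (k + 1) * ‖g r‖ ^ 2 ≤ ∫ s in Ioi 0, φ s := by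
  have hφ0 : ∀ s, 0 < s → 0 ≤ φ s := fun s hs ↦ le_trans (by positivity) (hle s hs)
  have hderiv : ∀ s, 0 < s → HasDerivAt (fun s ↦ -(s ^ (k + 1) * ‖g s‖ ^ 2))
      (-(((k + 1 : ℕ) : ℝ) * s ^ k * ‖g s‖ ^ 2 + s ^ (k + 1) * (2 * inner ℝ (g s) (g' s)))) s :=
    fun s hs ↦ ((hasDerivAt_pow (k + 1) s).mul (hg s hs).norm_sq).neg
  have hbound : ∀ s, 0 < s →
      -(((k + 1 : ℕ) : ℝ) * s ^ k * ‖g s‖ ^ 2 + s ^ (k + 1) * (2 * inner ℝ (g s) (g' s))) ≤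
        φ s := by
    intro s hs
    refine le_trans ?_ (hle s hs)
    have hsq := norm_add_sq_real (g s) (s • g' s)
    rw [inner_smul_right, norm_smul, Real.norm_of_nonneg hs.le] at hsq
    have h1 : 0 ≤ s ^ k * ‖g s + s • g' s‖ ^ 2 := by positivity
    have h2 : 0 ≤ (k : ℝ) * s ^ k * ‖g s‖ ^ 2 := by positivity
    rw [hsq] at h1
    push_cast
    linear_combination h1 + h2
  have hfin : ∀ᶠ R in atTop,
      r ^ (k + 1) * ‖g r‖ ^ 2 - R ^ (k + 1) * ‖g R‖ ^ 2 ≤ ∫ s in Ioi 0, φ s := by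
    filter_upwards [eventually_ge_atTop r] with R hR
    have hpos : ∀ s ∈ Icc r R, 0 < s := fun s hs ↦ hr.trans_le hs.1
    have hFTC := intervalIntegral.sub_le_integral_of_hasDeriv_right_of_le hR
      (fun s hs ↦ (hderiv s (hpos s hs)).continuousAt.continuousWithinAt)
      (fun s hs ↦ (hderiv s (hpos s (Ioo_subset_Icc_self hs))).hasDerivWithinAt)
      (hφ.mono_set hpos) fun s hs ↦ hbound s (hpos s (Ioo_subset_Icc_self hs))
    have hmono : ∫ s in r..R, φ s ≤ ∫ s in Ioi 0, φ s := by
      rw [intervalIntegral.integral_of_le hR]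
      exact setIntegral_mono_set hφ ((ae_restrict_iff' measurableSet_Ioi).2 (.of_forall hφ0))
        (Eventually.of_forall fun s hs ↦ hpos s (Ioc_subset_Icc_self hs))
    linarith
  have hlim' := hlim.const_sub (r ^ (k + 1) * ‖g r‖ ^ 2)
  rw [sub_zero] at hlim'
  exact le_of_tendsto hlim' hfin

section Polar

variable {E F : Type*} [NormedAddCommGroup E] [NormedSpace ℝ E]
  [MeasurableSpace E] [BorelSpace E] [FiniteDimensional ℝ E] [Nontrivial E]
  [NormedAddCommGroup F] (μ : Measure E) [μ.IsAddHaarMeasure]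

theorem integrable_comp_smul_sphere_prod {f : E → F} (hf : Integrable f μ) :
    Integrable (fun p : sphere (0 : E) 1 × Ioi (0 : ℝ) ↦ f (p.2.1 • p.1.1))
      (μ.toSphere.prod (.volumeIoiPow (finrank ℝ E - 1))) := by
  rw [← μ.measurePreserving_homeomorphUnitSphereProd.integrable_comp_emb
    (Homeomorph.measurableEmbedding _)]
  rw [← restrict_compl_singleton (μ := μ) 0, ← IntegrableOn,
    integrableOn_iff_comap_subtypeVal (by measurability)] at hf
  refine hf.congr (.of_forall fun x ↦ ?_)
  have hx : ‖(x : E)‖ ≠ 0 := norm_ne_zero_iff.2 x.2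
  simp [smul_smul, hx]

variable [NormedSpace ℝ F]

theorem integral_eq_integral_sphere_prod (f : E → F) :
    ∫ x, f x ∂μ = ∫ p : sphere (0 : E) 1 × Ioi (0 : ℝ), f (p.2.1 • p.1.1)
      ∂(μ.toSphere.prod (.volumeIoiPow (finrank ℝ E - 1))) := by
  rw [← μ.measurePreserving_homeomorphUnitSphereProd.integral_comp
    (Homeomorph.measurableEmbedding _)]
  conv_lhs => rw [← restrict_compl_singleton (μ := μ) 0,
    ← integral_subtype_comap (measurableSet_singleton _).compl f]
  refine integral_congr_ae (Eventually.of_forall fun x ↦ ?_)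
  have hx : ‖(x : E)‖ ≠ 0 := norm_ne_zero_iff.2 x.2
  simp [smul_smul, hx]

theorem integral_volumeIoiPow (k : ℕ) (f : ℝ → F) :
    ∫ s : Ioi (0 : ℝ), f s ∂.volumeIoiPow k = ∫ s in Ioi (0 : ℝ), s ^ k • f s := by
  simp only [Measure.volumeIoiPow, ENNReal.ofReal]
  rw [integral_withDensity_eq_integral_smul,
    integral_subtype_comap measurableSet_Ioi fun a ↦ Real.toNNReal (a ^ k) • f a,
    setIntegral_congr_fun measurableSet_Ioi fun x hx ↦ ?_]
  · rw [NNReal.smul_def, Real.coe_toNNReal _ (pow_nonneg hx.out.le _)]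
  · exact (measurable_subtype_coe.pow_const _).real_toNNReal

theorem integrable_volumeIoiPow_iff (k : ℕ) (f : ℝ → F) :
    Integrable (fun s : Ioi (0 : ℝ) ↦ f s) (.volumeIoiPow k) ↔
      IntegrableOn (fun s ↦ s ^ k • f s) (Ioi 0) := by
  rw [integrableOn_iff_comap_subtypeVal measurableSet_Ioi, Measure.volumeIoiPow,
    integrable_withDensity_iff_integrable_smul' (by fun_prop) (by simp)]
  refine integrable_congr (.of_forall ?_)
  rintro ⟨x, hx : 0 < x⟩
  simp (disch := positivity) [ENNReal.toReal_ofReal]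

end Polar

section Schwartz

variable {V : Type*} [NormedAddCommGroup V] [InnerProductSpace ℝ V] {ι : Type*} [Fintype ι]

theorem OrthonormalBasis.norm_map_sq_le (b : OrthonormalBasis ι ℝ V) {F : Type*}
    [NormedAddCommGroup F] [NormedSpace ℝ F] (L : V →L[ℝ] F) (v : V) :
    ‖L v‖ ^ 2 ≤ ‖v‖ ^ 2 * ∑ i, ‖L (b i)‖ ^ 2 := by
  have h : ‖L v‖ ≤ ∑ i, ‖inner ℝ (b i) v‖ * ‖L (b i)‖ := by
    conv_lhs => rw [← b.sum_repr' v, map_sum]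
    refine (norm_sum_le _ _).trans_eq ?_
    simp [norm_smul]
  rw [← b.sum_sq_norm_inner_right v]
  exact (pow_le_pow_left₀ (norm_nonneg _) h 2).trans (Finset.sum_mul_sq_le_sq_mul_sq _ _ _)

theorem SchwartzMap.tendsto_pow_mul_norm_sq_smul {F : Type*} [NormedAddCommGroup F]
    [NormedSpace ℝ F] (f : SchwartzMap V F) (k : ℕ) {v : V} (hv : ‖v‖ = 1) :
    Tendsto (fun s : ℝ ↦ s ^ k * ‖f (s • v)‖ ^ 2) atTop (𝓝 0) := by
  obtain ⟨C, -, hC⟩ := f.decay k 0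
  obtain ⟨D, -, hD⟩ := f.decay 1 0
  have hlim : Tendsto (fun s : ℝ ↦ C * D * s⁻¹) atTop (𝓝 0) := by
    simpa using tendsto_inv_atTop_zero.const_mul (C * D)
  refine squeeze_zero' ?_ ?_ hlim
  · filter_upwards [eventually_ge_atTop 0] with s hs
    positivity
  · filter_upwards [eventually_gt_atTop 0] with s hs
    have h1 : s ^ k * ‖f (s • v)‖ ≤ C := by
      simpa [norm_smul, hv, abs_of_pos hs] using hC (s • v)
    have h2 : s * ‖f (s • v)‖ ≤ D := by
      simpa [norm_smul, hv, abs_of_pos hs] using hD (s • v)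
    rw [← div_eq_mul_inv, le_div_iff₀ hs]
    calc s ^ k * ‖f (s • v)‖ ^ 2 * s = (s ^ k * ‖f (s • v)‖) * (s * ‖f (s • v)‖) := by ring
      _ ≤ C * D := by gcongr; exact le_trans (by positivity) h1

variable [FiniteDimensional ℝ V] [MeasurableSpace V] [BorelSpace V]

theorem SchwartzMap.integrable_norm_sq {H : Type*} [NormedAddCommGroup H] [NormedSpace ℝ H]
    (f : SchwartzMap V H) : Integrable fun x ↦ ‖f x‖ ^ 2 :=
  (f.memLp 2 volume).integrable_norm_pow (by simp)

/-- The `L²` norm of a Schwartz function on a sphere is controlled by that of its gradient. -/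
theorem SchwartzMap.pow_mul_integral_sphere_norm_sq_le (b : OrthonormalBasis ι ℝ V) {H : Type*}
    [NormedAddCommGroup H] [InnerProductSpace ℝ H] (f : SchwartzMap V H) {k : ℕ}
    (hk : finrank ℝ V = k + 3) {r : ℝ} (hr : 0 < r) :
    r ^ (k + 1) * ∫ ω : sphere (0 : V) 1, ‖f (r • (ω : V))‖ ^ 2 ∂(volume : Measure V).toSphere ≤
      ∫ x, ∑ i, ‖∂_{b i} f x‖ ^ 2 := by
  have : Nontrivial V := Module.nontrivial_of_finrank_pos (R := ℝ) (by omega)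
  have hG : Integrable fun x ↦ ∑ i, ‖∂_{b i} f x‖ ^ 2 :=
    integrable_finsetSum _ fun i _ ↦ (∂_{b i} f).integrable_norm_sq
  have hpolar := integrable_comp_smul_sphere_prod volume hG
  rw [integral_eq_integral_sphere_prod (volume : Measure V), integral_prod _ hpolar, ← integral_const_mul]
  refine integral_mono_of_nonneg (.of_forall fun ω ↦ by positivity) hpolar.integral_prod_left ?_
  filter_upwards [hpolar.prod_right_ae] with ω hω
  have hω1 : ‖(ω : V)‖ = 1 := norm_eq_of_mem_sphere ω
  have hdim : finrank ℝ V - 1 = k + 2 := by omega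
  rw [integrable_volumeIoiPow_iff _ fun s ↦ ∑ i, ‖∂_{b i} f (s • (ω : V))‖ ^ 2, hdim] at hω
  rw [integral_volumeIoiPow _ fun s ↦ ∑ i, ‖∂_{b i} f (s • (ω : V))‖ ^ 2, hdim]
  refine pow_mul_norm_sq_le_integral_Ioi (g := fun s ↦ f (s • (ω : V)))
    (g' := fun s ↦ fderiv ℝ f (s • (ω : V)) ω) hr (fun s _ ↦ ?_) hω (fun s hs ↦ ?_)
    (f.tendsto_pow_mul_norm_sq_smul _ hω1)
  · have hline : HasDerivAt (fun t : ℝ ↦ t • (ω : V)) (ω : V) s := by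
      simpa using (hasDerivAt_id s).smul_const (ω : V)
    exact f.differentiableAt.hasFDerivAt.comp_hasDerivAt s hline
  · have h := b.norm_map_sq_le (fderiv ℝ f (s • (ω : V))) ω
    rw [hω1, one_pow, one_mul] at h
    exact mul_le_mul_of_nonneg_left h (by positivity)

theorem SchwartzMap.integral_sum_norm_sq_lineDeriv_fourier (b : OrthonormalBasis ι ℝ V)
    {H : Type*} [NormedAddCommGroup H] [InnerProductSpace ℂ H] [CompleteSpace H]
    (ψ : SchwartzMap V H) :
    ∫ ξ, ∑ i, ‖∂_{b i} (𝓕 ψ) ξ‖ ^ 2 = ∫ x, (2 * π) ^ 2 * (‖x‖ ^ 2 * ‖ψ x‖ ^ 2) := by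
  have hnorm (i : ι) (x : V) :
      ‖(-(2 * π * Complex.I) • smulLeftCLM H (inner ℝ · (b i)) ψ) x‖ ^ 2 =
        (2 * π) ^ 2 * (‖inner ℝ x (b i)‖ ^ 2 * ‖ψ x‖ ^ 2) := by
    have : (inner ℝ · (b i)).HasTemperateGrowth := ((innerSL ℝ).flip (b i)).hasTemperateGrowth
    simp [this, norm_smul, abs_of_pos Real.pi_pos, mul_pow]
  rw [integral_finsetSum _ fun i _ ↦ (∂_{b i} (𝓕 ψ)).integrable_norm_sq]
  simp_rw [lineDerivOp_fourier_eq, integral_norm_sq_fourier]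
  rw [← integral_finsetSum _ fun i _ ↦ SchwartzMap.integrable_norm_sq _]
  simp_rw [hnorm, ← Finset.mul_sum, ← Finset.sum_mul, b.sum_sq_norm_inner_left]

theorem SchwartzMap.integrable_one_add_norm_sq_mul_norm_sq {H : Type*} [NormedAddCommGroup H]
    [NormedSpace ℝ H] (ψ : SchwartzMap V H) : Integrable fun x ↦ (1 + ‖x‖ ^ 2) * ‖ψ x‖ ^ 2 := by
  obtain ⟨C, -, hC⟩ := ψ.decay 0 0
  have h := ((ψ.integrable_pow_mul volume 0).add (ψ.integrable_pow_mul volume 2)).const_mul C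
  refine h.mono' (by fun_prop) (.of_forall fun x ↦ ?_)
  have hx : ‖ψ x‖ ≤ C := by simpa using hC x
  rw [Real.norm_of_nonneg (by positivity)]
  calc (1 + ‖x‖ ^ 2) * ‖ψ x‖ ^ 2 = ‖ψ x‖ * ((1 + ‖x‖ ^ 2) * ‖ψ x‖) := by ring
    _ ≤ C * ((1 + ‖x‖ ^ 2) * ‖ψ x‖) := by gcongr
    _ = _ := by simp only [Pi.add_apply]; ring

end Schwartz

/-- Weighted Fourier restriction bound: the restriction of `ψ̂` to the
sphere of radius `r` has `L²(S^{n-1})` norm at most `C r^{1-n/2} ‖⟨x⟩ψ‖_{L²}`. -/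
theorem sphere_restriction_weighted_bound (n : ℕ) (hn : 3 ≤ n) :
    ∃ C : ℝ, 0 < C ∧ ∀ ψ : SchwartzMap (EuclideanSpace ℝ (Fin n)) ℂ, ∀ r : ℝ, 0 < r →
      Real.sqrt (∫ ω : sphere (0 : EuclideanSpace ℝ (Fin n)) 1,
          ‖𝓕 (⇑ψ) (r • (ω : EuclideanSpace ℝ (Fin n)))‖ ^ 2
          ∂((volume : Measure (EuclideanSpace ℝ (Fin n))).toSphere))
        ≤ C * r ^ ((1 : ℝ) - (n : ℝ) / 2) *
          Real.sqrt (∫ x : EuclideanSpace ℝ (Fin n), (1 + ‖x‖ ^ 2) * ‖ψ x‖ ^ 2) := by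
  obtain ⟨k, rfl⟩ := Nat.exists_eq_add_of_le' hn
  refine ⟨2 * π, by positivity, fun ψ r hr ↦ ?_⟩
  have htrace := (𝓕 ψ).pow_mul_integral_sphere_norm_sq_le
    (EuclideanSpace.basisFun (Fin (k + 3)) ℝ) (k := k) (by simp) hr
  rw [SchwartzMap.integral_sum_norm_sq_lineDeriv_fourier, integral_const_mul] at htrace
  have hweight : ∫ x, ‖x‖ ^ 2 * ‖ψ x‖ ^ 2 ≤ ∫ x, (1 + ‖x‖ ^ 2) * ‖ψ x‖ ^ 2 :=
    integral_mono_of_nonneg (.of_forall fun x ↦ by positivity)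
      ψ.integrable_one_add_norm_sq_mul_norm_sq (.of_forall fun x ↦ by dsimp only; gcongr; simp)
  have hpow : (r ^ ((1 : ℝ) - ((k + 3 : ℕ) : ℝ) / 2)) ^ 2 * r ^ (k + 1) = 1 := by
    rw [← Real.rpow_natCast r (k + 1), ← Real.rpow_natCast _ 2, ← Real.rpow_mul hr.le,
      ← Real.rpow_add hr]
    convert Real.rpow_zero r using 2
    push_cast
    ring
  refine Real.sqrt_le_iff.2 ⟨by positivity, ?_⟩
  rw [mul_pow, Real.sq_sqrt (integral_nonneg fun x ↦ by positivity), mul_pow]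
  set ρ := r ^ ((1 : ℝ) - ((k + 3 : ℕ) : ℝ) / 2)
  calc _ = ρ ^ 2 * (r ^ (k + 1) * ∫ ω : sphere (0 : EuclideanSpace ℝ (Fin (k + 3))) 1,
          ‖𝓕 ψ (r • (ω : EuclideanSpace ℝ (Fin (k + 3))))‖ ^ 2
          ∂((volume : Measure (EuclideanSpace ℝ (Fin (k + 3)))).toSphere)) := by
        rw [← mul_assoc, hpow, one_mul, SchwartzMap.fourier_coe]
    _ ≤ ρ ^ 2 * ((2 * π) ^ 2 * ∫ x, (1 + ‖x‖ ^ 2) * ‖ψ x‖ ^ 2) := by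
        exact mul_le_mul_of_nonneg_left (htrace.trans (by gcongr)) (by positivity)
    _ = _ := by ring
end
end
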